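/- arXiv:2111.05165 — 2 statements merged into one kernel-verified Lean document; each statement's English description precedes it below -/
import Mathlib

section
/- Let G ⊆ ℂ be a bounded domain. Then there exist a domain Ω ⊆ ℂ, a complex number a, and a strictly increasing sequence (kₙ) of positive integers such that the maps φₙ(z) := (z + a)/kₙ form a sequence of injective holomorphic maps from G to Ω for which there exists a ((φₙ),G,Ω)-universal function. -/
open Set Metric Bornology Filter

/-- A *hole* of `E` is a nonempty bounded connected component of `ℂ \ E`. -/
def IsHole (E C : Set ℂ) : Prop :=
  (∃ z ∈ Eᶜ, C = connectedComponentIn Eᶜ z) ∧ Bornology.IsBounded C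

/-- A compact set `K` contained in an open set `Ω` is `Ω`-*convex* if every hole of `K`
contains a point of `ℂ \ Ω`. -/
def OmegaConvex (Ω K : Set ℂ) : Prop :=
  ∀ C : Set ℂ, IsHole K C → (C ∩ Ωᶜ).Nonempty

/-- The *polynomial hull* of `K`: the union of `K` and all of its holes. -/
def polyHull (K : Set ℂ) : Set ℂ :=
  K ∪ {z | z ∈ Kᶜ ∧ Bornology.IsBounded (connectedComponentIn Kᶜ z)}

/-- A sequence of maps is *eventually injective* on `G`: for every compact `K ⊆ G`, the maps
are eventually injective on a neighbourhood of `K` in `G`. -/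
def EventuallyInjective (G : Set ℂ) (φ : ℕ → ℂ → ℂ) : Prop :=
  ∀ K : Set ℂ, K ⊆ G → IsCompact K →
    ∃ N : ℕ, ∀ n ≥ N, ∃ U : Set ℂ, IsOpen U ∧ K ⊆ U ∧ U ⊆ G ∧ Set.InjOn (φ n) U

/-- `f` is `(Φ, G, Ω)`-*universal*: the family `{f ∘ φ n : n ∈ ℕ}` is dense in `H(G)` for the
topology of locally uniform convergence, i.e. every `g` holomorphic on `G` can be approximated
uniformly on every compact subset of `G` by functions `f ∘ φ n`. -/
def UniversalFor (G : Set ℂ) (φ : ℕ → ℂ → ℂ) (f : ℂ → ℂ) : Prop :=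
  ∀ g : ℂ → ℂ, DifferentiableOn ℂ g G →
    ∀ K : Set ℂ, K ⊆ G → IsCompact K → ∀ ε : ℝ, 0 < ε →
      ∃ n : ℕ, ∀ z ∈ K, ‖f (φ n z) - g z‖ < ε

/-- `E` has no hole (for a domain: simple connectivity). -/
def HasNoHole (E : Set ℂ) : Prop := ¬ ∃ C : Set ℂ, IsHole E C

/-- A *Jordan curve*: the image of the unit circle under an injective continuous map. -/
def IsJordanCurve (C : Set ℂ) : Prop :=
  ∃ γ : ℂ → ℂ, ContinuousOn γ (Metric.sphere 0 1) ∧ Set.InjOn γ (Metric.sphere 0 1) ∧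
    C = γ '' Metric.sphere 0 1

/-- A *Jordan arc*: the image of `[0,1]` under an injective continuous map. -/
def IsJordanArc (C : Set ℂ) : Prop :=
  ∃ γ : ℝ → ℂ, ContinuousOn γ (Set.Icc 0 1) ∧ Set.InjOn γ (Set.Icc 0 1) ∧
    C = γ '' Set.Icc 0 1

/-- A compact set is *regular* if its boundary is a union of Jordan curves. -/
def RegularCompact (K : Set ℂ) : Prop :=
  ∃ 𝒞 : Set (Set ℂ), (∀ C ∈ 𝒞, IsJordanCurve C) ∧ frontier K = ⋃₀ 𝒞

/-- `K` is `Ω`-*connected*: it has no hole if `Ω` is simply connected, and has at least one hole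
if `Ω` is not simply connected. -/
def OmegaConnectedSet (Ω K : Set ℂ) : Prop :=
  (HasNoHole Ω → HasNoHole K) ∧ (¬ HasNoHole Ω → ∃ C : Set ℂ, IsHole K C)

/-- Membership in the family `M(Ω)` of nonempty compact subsets of `Ω` that are regular,
connected, `Ω`-connected and `Ω`-convex. -/
def MemM (Ω K : Set ℂ) : Prop :=
  K.Nonempty ∧ IsCompact K ∧ K ⊆ Ω ∧ RegularCompact K ∧ IsConnected K ∧
    OmegaConnectedSet Ω K ∧ OmegaConvex Ω K

/-- `f` is `(Φ, M)`-*universal*: for every `K ∈ M`, the restrictions of the `f ∘ φ n` to `K`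
are dense in `C(K)`. -/
def MUniversal (M : Set (Set ℂ)) (φ : ℕ → ℂ → ℂ) (f : ℂ → ℂ) : Prop :=
  ∀ K ∈ M, ∀ h : ℂ → ℂ, ContinuousOn h K → ∀ ε : ℝ, 0 < ε →
    ∃ n : ℕ, ∀ z ∈ K, ‖f (φ n z) - h z‖ < ε


open scoped Topology

/-- twice the Wirtinger derivative -/
noncomputable def dbarU (u : ℂ → ℂ) (w : ℂ) : ℂ :=
  fderiv ℝ u w 1 + Complex.I * fderiv ℝ u w Complex.I

lemma dbarU_congr {u v : ℂ → ℂ} {w : ℂ} (h : u =ᶠ[𝓝 w] v) : dbarU u w = dbarU v w := by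
  simp [dbarU, h.fderiv_eq]

lemma dbarU_holo {u : ℂ → ℂ} {w : ℂ} (h : DifferentiableAt ℂ u w) : dbarU u w = 0 := by
  have h1 : HasFDerivAt u ((fderiv ℂ u w).restrictScalars ℝ) w :=
    h.hasFDerivAt.restrictScalars ℝ
  have h2 : fderiv ℂ u w Complex.I = Complex.I * fderiv ℂ u w 1 := by
    simp
  rw [dbarU, h1.fderiv]
  simp only [ContinuousLinearMap.coe_restrictScalars', h2]
  rw [← mul_assoc, Complex.I_mul_I]; ring

lemma dbarU_mul {u v : ℂ → ℂ} {w : ℂ} (hu : DifferentiableAt ℝ u w)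
    (hv : DifferentiableAt ℝ v w) :
    dbarU (fun x => u x * v x) w = u w * dbarU v w + dbarU u w * v w := by
  have := (hu.hasFDerivAt.mul hv.hasFDerivAt).fderiv
  have e : fderiv ℝ (fun x => u x * v x) w = u w • fderiv ℝ v w + v w • fderiv ℝ u w := this
  rw [dbarU, e]
  simp [dbarU]; ring

lemma dbarU_cont {u : ℂ → ℂ} (hu : ContDiff ℝ 1 u) : Continuous (dbarU u) := by
  have h := hu.continuous_fderiv (by norm_num)
  unfold dbarU
  exact (h.clm_apply continuous_const).add (continuous_const.mul (h.clm_apply continuous_const))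

lemma dbarU_zero_of {u : ℂ → ℂ} {w : ℂ} (hw : w ∉ tsupport u) : dbarU u w = 0 := by
  have h : u =ᶠ[𝓝 w] 0 := notMem_tsupport_iff_eventuallyEq.1 hw
  rw [dbarU_congr h]; exact dbarU_holo (differentiableAt_const 0)

lemma dbarU_supp {u : ℂ → ℂ} (hu : HasCompactSupport u) : HasCompactSupport (dbarU u) := by
  apply HasCompactSupport.intro hu
  intro x hx
  exact dbarU_zero_of hx

lemma integral_dbarU {v : ℂ → ℂ} (hv : ContDiff ℝ 1 v) (hc : HasCompactSupport v) :
    ∫ w, dbarU v w = 0 := by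
  have h := hv.continuous_fderiv (by norm_num)
  have hi : ∀ e : ℂ, MeasureTheory.Integrable (fun w => fderiv ℝ v w e) := fun e =>
    (h.clm_apply continuous_const).integrable_of_hasCompactSupport (by
      apply HasCompactSupport.intro hc
      intro x hx
      have h : v =ᶠ[𝓝 x] 0 := notMem_tsupport_iff_eventuallyEq.1 hx
      rw [h.fderiv_eq]; simp)
  have hz : ∀ e : ℂ, ∫ w, fderiv ℝ v w e = 0 := fun e => by
    have := integral_mul_fderiv_eq_neg_fderiv_mul_of_integrable (𝕜 := ℂ) (μ := MeasureTheory.volume)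
      (f := fun _ : ℂ => (1 : ℂ)) (g := v) (v := e) (by simp) (by simpa using hi e)
      (by simpa using hv.continuous.integrable_of_hasCompactSupport hc)
      (fun x _ => differentiableAt_const _) (fun x _ => hv.differentiable (by norm_num) x)
    simpa using this
  unfold dbarU
  rw [MeasureTheory.integral_add (hi _) ((hi _).const_mul _), MeasureTheory.integral_const_mul,
    hz, hz]
  simp

lemma dbar_div_cont {u : ℂ → ℂ} (hu : ContDiff ℝ 1 u) {z : ℂ}
    (hz : ∀ᶠ w in 𝓝 z, DifferentiableAt ℂ u w) :
    Continuous (fun w => dbarU u w / (w - z)) := by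
  rw [continuous_iff_continuousAt]
  intro w
  by_cases h : w = z
  · subst h
    have : (fun x => dbarU u x / (x - w)) =ᶠ[𝓝 w] fun _ => 0 := by
      filter_upwards [hz] with x hx
      simp [dbarU_holo hx]
    exact this.continuousAt
  · exact (dbarU_cont hu).continuousAt.div (by fun_prop) (sub_ne_zero.2 h)

lemma dbar_div_int {u : ℂ → ℂ} (hu : ContDiff ℝ 1 u) (hc : HasCompactSupport u) {z : ℂ}
    (hz : ∀ᶠ w in 𝓝 z, DifferentiableAt ℂ u w) :
    MeasureTheory.Integrable (fun w => dbarU u w / (w - z)) :=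
  (dbar_div_cont hu hz).integrable_of_hasCompactSupport (by
    apply HasCompactSupport.intro hc
    intro x hx
    simp [dbarU_zero_of hx])

lemma exists_psi : ∃ ψ : ℂ → ℂ, ContDiff ℝ 1 ψ ∧ HasCompactSupport ψ ∧ (∀ᶠ w in 𝓝 (0:ℂ), ψ w = 1)
    ∧ ∫ w, dbarU ψ w / (w - 0) ≠ 0 := by
  let ρ : ℝ → ℝ := fun t => Real.smoothTransition (2 - t)
  have hρ : ContDiff ℝ 1 ρ :=
    (Real.smoothTransition.contDiff (n := 1)).comp (contDiff_const.sub contDiff_id)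
  have hanti : Antitone ρ := fun a b h => Real.smoothTransition.monotone (by linarith)
  have h1 : ∀ t ≤ 1, ρ t = 1 := fun t h => Real.smoothTransition.one_of_one_le (by linarith)
  have h2 : ∀ t, 2 ≤ t → ρ t = 0 := fun t h => Real.smoothTransition.zero_of_nonpos (by linarith)
  have hd : Continuous (deriv ρ) := hρ.continuous_deriv (by norm_num)
  have hn : ContDiff ℝ 1 (fun w : ℂ => ‖w‖ ^ 2) := contDiff_norm_sq ℝ
  let ψ : ℂ → ℂ := fun w => ((ρ (‖w‖ ^ 2) : ℝ) : ℂ)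
  have hψ : ContDiff ℝ 1 ψ := Complex.ofRealCLM.contDiff.comp (hρ.comp hn)
  have hz : ∀ w : ℂ, w ∉ closedBall (0:ℂ) 2 → ρ (‖w‖ ^ 2) = 0 := by
    intro w hw
    simp at hw
    exact h2 _ (by nlinarith)
  have hsupp : HasCompactSupport ψ :=
    HasCompactSupport.intro (isCompact_closedBall (0:ℂ) 2) (fun w hw => by simp [ψ, hz w hw])
  have hone : ∀ᶠ w in 𝓝 (0:ℂ), ψ w = 1 := by
    filter_upwards [ball_mem_nhds (0:ℂ) one_pos] with w hw
    simp at hw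
    have : ρ (‖w‖^2) = 1 := h1 _ (by nlinarith [norm_nonneg w])
    simp [ψ, this]
  have hdb : ∀ w, dbarU ψ w = 2 * (deriv ρ (‖w‖ ^ 2) : ℝ) * w := by
    intro w
    have e1 : HasFDerivAt (fun w : ℂ => ‖w‖ ^ 2) (2 • (innerSL ℝ w)) w :=
      (hasStrictFDerivAt_norm_sq w).hasFDerivAt
    have e2 := ((hρ.differentiable (by norm_num) (‖w‖^2)).hasDerivAt.comp_hasFDerivAt w e1)
    have e3 := (Complex.ofRealCLM.hasFDerivAt (x := ρ (‖w‖^2))).comp w e2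
    have e4 : fderiv ℝ ψ w = _ := e3.fderiv
    rw [dbarU, e4]
    apply Complex.ext <;> simp [Complex.inner] <;> ring
  have hd1 : ∀ t < 1, deriv ρ t = 0 := fun t ht => by
    have : ρ =ᶠ[𝓝 t] fun _ => 1 := by
      filter_upwards [Iio_mem_nhds ht] with x hx using h1 x (le_of_lt hx)
    rw [this.deriv_eq]; simp
  have hd2 : ∀ t, 2 < t → deriv ρ t = 0 := fun t ht => by
    have : ρ =ᶠ[𝓝 t] fun _ => 0 := by
      filter_upwards [Ioi_mem_nhds ht] with x hx using h2 x (le_of_lt hx)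
    rw [this.deriv_eq]; simp
  refine ⟨ψ, hψ, hsupp, hone, ?_⟩
  have hint : (fun w => dbarU ψ w / (w - 0)) = fun w : ℂ => (((-2) * (-deriv ρ (‖w‖ ^ 2)) : ℝ) : ℂ) := by
    funext w
    rw [hdb, sub_zero]
    by_cases h : w = 0
    · subst h; simp [hd1 0 one_pos]
    · rw [mul_div_assoc, div_self h]; push_cast; ring
  rw [hint, integral_complex_ofReal, MeasureTheory.integral_const_mul]
  obtain ⟨t, ht, ht'⟩ := exists_deriv_eq_slope ρ (show (1:ℝ) < 2 by norm_num)
    hρ.continuous.continuousOn (hρ.differentiable (by norm_num)).differentiableOn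
  have hp : 0 < ∫ w : ℂ, -deriv ρ (‖w‖ ^ 2) := by
    apply Continuous.integral_pos_of_hasCompactSupport_nonneg_nonzero (x := (Real.sqrt t : ℂ))
    · fun_prop
    · apply HasCompactSupport.intro (isCompact_closedBall (0:ℂ) 2)
      intro w hw
      simp at hw
      simp [hd2 (‖w‖^2) (by nlinarith)]
    · intro w
      have := hanti.deriv_nonpos (x := ‖w‖^2)
      simpa using this
    · have : ‖(Real.sqrt t : ℂ)‖ ^ 2 = t := by
        simp [Real.sq_sqrt (by linarith [ht.1] : (0:ℝ) ≤ t)]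
      rw [this, ht', h1 1 le_rfl, h2 2 le_rfl]; norm_num
  norm_cast
  have := hp.ne'
  simp only [mul_eq_zero, not_or]
  exact ⟨by norm_num, this⟩

lemma pompeiu : ∃ c : ℂ, c ≠ 0 ∧ ∀ u : ℂ → ℂ, ContDiff ℝ 1 u → HasCompactSupport u → ∀ z,
    (∀ᶠ w in 𝓝 z, DifferentiableAt ℂ u w) → ∫ w, dbarU u w / (w - z) = u z * c := by
  obtain ⟨ψ, hψ, hψc, hψ1, hc⟩ := exists_psi
  refine ⟨_, hc, ?_⟩
  intro u hu huc z hz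
  have hψd : ∀ᶠ w in 𝓝 (0:ℂ), DifferentiableAt ℂ ψ w := by
    filter_upwards [hψ1.eventually_nhds] with w hw
    have : ψ =ᶠ[𝓝 w] fun _ => 1 := hw
    exact this.differentiableAt_iff.2 (differentiableAt_const 1)
  have htz : Tendsto (fun w => w - z) (𝓝 z) (𝓝 0) := by
    have : Tendsto (fun w => w - z) (𝓝 z) (𝓝 (z - z)) := (continuous_id.sub continuous_const).tendsto z
    simpa using this
  set U : ℂ → ℂ := fun w => u w - u z * ψ (w - z) with hU
  have hUc : ContDiff ℝ 1 U :=
    hu.sub (contDiff_const.mul (hψ.comp (contDiff_id.sub contDiff_const)))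
  have hψz : HasCompactSupport (fun w => ψ (w - z)) := by
    have := hψc.comp_homeomorph (Homeomorph.subRight z)
    exact this
  have hUs : HasCompactSupport U := huc.sub (hψz.mul_left (f := fun _ => u z))
  have hUd : ∀ᶠ w in 𝓝 z, DifferentiableAt ℂ U w := by
    filter_upwards [hz, htz.eventually hψd] with w h1 h2
    exact h1.sub ((differentiableAt_const _).mul (h2.comp w (differentiableAt_id.sub_const z)))
  have hUz : U z = 0 := by
    simp [hU, hψ1.self_of_nhds]
  have hdU : ∀ w, dbarU U w = dbarU u w - u z * dbarU ψ (w - z) := by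
    intro w
    have e1 := (hu.differentiable (by norm_num) w).hasFDerivAt
    have e2 := (hψ.differentiable (by norm_num) (w - z)).hasFDerivAt
    have e3 : HasFDerivAt (fun w => ψ (w - z)) (fderiv ℝ ψ (w - z)) w := by
      have := e2.comp w ((hasFDerivAt_id (𝕜 := ℝ) w).sub_const z)
      rw [ContinuousLinearMap.comp_id] at this
      exact this
    have e4 := (e1.sub (e3.const_mul (u z))).fderiv
    have e5 : fderiv ℝ U w = _ := e4
    rw [dbarU, e5]; simp [dbarU]; ring
  set v := dslope U z with hv
  have hve : ∀ w, w ≠ z → v w = U w * (w - z)⁻¹ := by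
    intro w hw
    rw [hv, dslope_of_ne _ hw, slope_def_field, hUz]; simp [div_eq_mul_inv]
  have hvev : ∀ w, w ≠ z → v =ᶠ[𝓝 w] fun x => U x * (x - z)⁻¹ := by
    intro w hw
    filter_upwards [isOpen_ne.mem_nhds hw] with x hx using hve x hx
  obtain ⟨s, hs, hso, hzs⟩ := _root_.eventually_nhds_iff.1 hUd
  have hvd : DifferentiableOn ℂ v s :=
    (Complex.differentiableOn_dslope (hso.mem_nhds hzs)).2
      (fun x hx => (hs x hx).differentiableWithinAt)
  have hinv : ∀ w, w ≠ z → DifferentiableAt ℂ (fun x => (x - z)⁻¹) w := fun w hw =>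
    (differentiableAt_id.sub_const z).inv (sub_ne_zero.2 hw)
  have hvc : ContDiff ℝ 1 v := by
    rw [contDiff_iff_contDiffAt]
    intro w
    by_cases hw : w = z
    · subst hw
      exact ((hvd.contDiffOn hso).contDiffAt (hso.mem_nhds hzs)).restrict_scalars ℝ
    · refine ContDiffAt.congr_of_eventuallyEq ?_ (hvev w hw)
      exact hUc.contDiffAt.mul ((contDiffAt_id.sub contDiffAt_const).inv (sub_ne_zero.2 hw))
  have hvs : HasCompactSupport v := by
    apply HasCompactSupport.intro (K := tsupport U ∪ {z}) (hUs.isCompact.union isCompact_singleton)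
    intro w hw
    simp only [mem_union, mem_singleton_iff, not_or] at hw
    rw [hve w hw.2, image_eq_zero_of_notMem_tsupport hw.1, zero_mul]
  have hdv : ∀ w, dbarU v w = dbarU u w / (w - z) - u z * (dbarU ψ (w - z) / (w - z - 0)) := by
    intro w
    by_cases hw : w = z
    · subst hw
      rw [dbarU_holo (hvd.differentiableAt (hso.mem_nhds hzs))]; simp
    · rw [dbarU_congr (hvev w hw), dbarU_mul (hUc.differentiable (by norm_num) w)
        ((hinv w hw).restrictScalars ℝ), dbarU_holo (hinv w hw), hdU]
      rw [sub_zero]; ring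
  have hI := integral_dbarU hvc hvs
  simp_rw [hdv] at hI
  rw [MeasureTheory.integral_sub (dbar_div_int hu huc hz)
    (((dbar_div_int hψ hψc hψd).comp_sub_right z).const_mul _),
    MeasureTheory.integral_const_mul,
    MeasureTheory.integral_sub_right_eq_self (fun w => dbarU ψ w / (w - 0)) z] at hI
  exact sub_eq_zero.1 hI


/-- Rational-like functions with finitely many singularities in `ball 0 M \ G`. -/
def ratFam (G : Set ℂ) (M : ℝ) : Submodule ℂ (ℂ → ℂ) where
  carrier := {R | ∃ P : Set ℂ, P.Finite ∧ P ⊆ ball 0 M \ G ∧ DifferentiableOn ℂ R Pᶜ ∧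
    Tendsto R (cocompact ℂ) (𝓝 0)}
  zero_mem' := ⟨∅, finite_empty, empty_subset _, differentiableOn_const 0, tendsto_const_nhds⟩
  add_mem' := by
    rintro a b ⟨P, h1, h2, h3, h4⟩ ⟨Q, k1, k2, k3, k4⟩
    refine ⟨P ∪ Q, h1.union k1, union_subset h2 k2, ?_, by
      have := h4.add k4
      rw [add_zero] at this; exact this⟩
    exact (h3.mono (by simp)).add (k3.mono (by simp))
  smul_mem' := by
    rintro c b ⟨P, h1, h2, h3, h4⟩
    exact ⟨P, h1, h2, h3.const_smul c, by
      have := h4.const_smul c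
      rw [smul_zero] at this; exact this⟩

lemma ratFam_pole {G : Set ℂ} {M : ℝ} {p : ℂ} (hp : p ∈ ball 0 M \ G) (j : ℕ) :
    (fun z => ((z - p)⁻¹) ^ (j + 1)) ∈ ratFam G M := by
  refine ⟨{p}, finite_singleton p, by simpa using hp, ?_, ?_⟩
  · intro z hz
    have hz' : z - p ≠ 0 := sub_ne_zero.2 (by simpa using hz)
    exact (((differentiableAt_id.sub_const p).inv hz').pow (j+1)).differentiableWithinAt
  · have h1 : Tendsto (fun z : ℂ => z - p) (cocompact ℂ) (cocompact ℂ) :=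
      (Homeomorph.subRight p).isClosedEmbedding.tendsto_cocompact
    have h2 := (tendsto_inv₀_cobounded (α := ℂ))
    rw [← Metric.cobounded_eq_cocompact] at *
    simpa using (h2.comp h1).pow (j+1)

lemma ratFam_cont {G : Set ℂ} {M : ℝ} {R : ℂ → ℂ} (hR : R ∈ ratFam G M) : ContinuousOn R G := by
  obtain ⟨P, h1, h2, h3, h4⟩ := hR
  exact h3.continuousOn.mono (fun z hz hP => (h2 hP).2 hz)

/-- restrictions to `K` -/
def resFam (G : Set ℂ) (M : ℝ) (K : Set ℂ) : Submodule ℂ C(K, ℂ) where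
  carrier := {φ | ∃ R ∈ ratFam G M, ∀ z : K, φ z = R z}
  zero_mem' := ⟨0, zero_mem _, fun z => rfl⟩
  add_mem' := by
    rintro a b ⟨P, h1, h2⟩ ⟨Q, k1, k2⟩
    exact ⟨P + Q, add_mem h1 k1, fun z => by simp [h2, k2]⟩
  smul_mem' := by
    rintro c b ⟨P, h1, h2⟩
    exact ⟨c • P, Submodule.smul_mem _ _ h1, fun z => by simp [h2]⟩

lemma pole_push {G K : Set ℂ} {M δ : ℝ} (hM : G ⊆ ball 0 (M - 1)) (hδ : 0 < δ) (hδ1 : δ ≤ 1)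
    (hKd : K = {z | ∀ p ∉ G, δ ≤ dist z p}) [CompactSpace K] {w : ℂ} (hw : w ∈ G) (hwK : w ∉ K)
    (φ : C(K, ℂ)) (hφ : ∀ z : K, φ z = (w - z)⁻¹) : φ ∈ (resFam G M K).topologicalClosure := by
  have : ∃ p ∉ G, dist w p < δ := by
    by_contra! h
    exact hwK (by rw [hKd]; exact h)
  obtain ⟨p, hp, hwp⟩ := this
  have hpM : p ∈ ball 0 M \ G := by
    refine ⟨?_, hp⟩
    have := hM hw
    rw [mem_ball] at *
    have := dist_triangle_left p 0 w
    linarith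
  have hzp : ∀ z : K, δ ≤ ‖(z : ℂ) - p‖ := fun z => by
    have h1 : (z : ℂ) ∈ {z | ∀ p ∉ G, δ ≤ dist z p} := hKd.subset z.2
    simpa [dist_eq_norm] using h1 p hp
  have hzp0 : ∀ z : K, (z : ℂ) - p ≠ 0 := fun z h => by
    have := hzp z
    rw [h, norm_zero] at this; linarith
  let y : C(K, ℂ) := ⟨fun z => ((z : ℂ) - p)⁻¹, (continuous_subtype_val.sub continuous_const).inv₀ hzp0⟩
  let x : C(K, ℂ) := (w - p) • y
  have hx : ‖x‖ < 1 := by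
    rw [ContinuousMap.norm_lt_iff _ one_pos]
    intro z
    have h1 := hzp z
    simp only [x, y, ContinuousMap.smul_apply, ContinuousMap.coe_mk, smul_eq_mul, norm_mul, norm_inv]
    rw [← div_eq_mul_inv, div_lt_one (by linarith)]
    rw [dist_eq_norm] at hwp; linarith
  have hs := (summable_geometric_of_norm_lt_one (x := x) hx)
  have hg := mul_neg_geom_series x hx
  set t := ∑' i, x ^ i
  have hφt : φ = -(y * t) := by
    ext z
    have h1 : (1 - x z) * t z = 1 := by
      have := congrArg (fun f : C(K, ℂ) => f z) hg
      simpa using this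
    have hwz : w - z ≠ 0 := by
      intro h
      rw [sub_eq_zero] at h
      exact hwK (h ▸ z.2)
    have h2 : x z = (w - p) * ((z:ℂ) - p)⁻¹ := rfl
    have h3 : y z = ((z:ℂ) - p)⁻¹ := rfl
    have h4 := hzp0 z
    rw [hφ, ContinuousMap.neg_apply, ContinuousMap.mul_apply, h3]
    rw [h2] at h1
    field_simp at h1 ⊢
    linear_combination (-1 : ℂ) * h1
  have hten : Tendsto (fun n => -(y * ∑ i ∈ Finset.range n, x ^ i)) atTop (𝓝 φ) := by
    rw [hφt]
    exact (hs.hasSum.tendsto_sum_nat.const_mul y).neg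
  refine (Submodule.isClosed_topologicalClosure _).mem_of_tendsto hten (Eventually.of_forall ?_)
  intro n
  apply Submodule.le_topologicalClosure
  rw [Finset.mul_sum]
  refine Submodule.neg_mem _ (Submodule.sum_mem _ fun i _ => ?_)
  refine ⟨(w - p) ^ i • (fun z => ((z - p)⁻¹) ^ (i + 1)), Submodule.smul_mem _ _ (ratFam_pole hpM i), ?_⟩
  intro z
  simp only [x, y, ContinuousMap.mul_apply, ContinuousMap.pow_apply, ContinuousMap.smul_apply,
    ContinuousMap.coe_mk, Pi.smul_apply, smul_eq_mul, mul_pow, pow_succ]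
  ring

lemma runge {G K : Set ℂ} {M δ : ℝ} (hG : IsOpen G) (hM : G ⊆ ball 0 (M - 1)) (hδ : 0 < δ)
    (hδ1 : δ ≤ 1) (hKd : K = {z | ∀ p ∉ G, δ ≤ dist z p}) (hK : IsCompact K) (hKG : K ⊆ G)
    {g : ℂ → ℂ} (hg : DifferentiableOn ℂ g G) {ε : ℝ} (hε : 0 < ε) :
    ∃ R ∈ ratFam G M, ∀ z ∈ K, ‖R z - g z‖ < ε := by
  have : CompactSpace K := isCompact_iff_compactSpace.1 hK
  obtain ⟨L, hL, hKL, hLG⟩ := exists_compact_between hK hG hKG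
  obtain ⟨χ, hχ1, hχ0, -⟩ := exists_contMDiffMap_one_nhds_of_subset_interior
    (modelWithCornersSelf ℝ ℂ) (n := 1) hK.isClosed hKL
  have hχ : ContDiff ℝ 1 χ := χ.contMDiff.contDiff
  let u : ℂ → ℂ := fun w => (χ w : ℂ) * g w
  have huL : tsupport u ⊆ L := by
    apply closure_minimal _ hL.isClosed
    intro x hx
    by_contra h
    exact hx (by simp [u, hχ0 x h])
  have hus : HasCompactSupport u := hL.of_isClosed_subset isClosed_closure huL
  have huc : ContDiff ℝ 1 u := by
    rw [contDiff_iff_contDiffAt]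
    intro w
    by_cases hw : w ∈ G
    · exact (Complex.ofRealCLM.contDiff.comp hχ).contDiffAt.mul
        (((hg.contDiffOn hG).contDiffAt (hG.mem_nhds hw)).restrict_scalars ℝ)
    · have : u =ᶠ[𝓝 w] fun _ => 0 := notMem_tsupport_iff_eventuallyEq.1 (fun h => hw (hLG (huL h)))
      exact contDiffAt_const.congr_of_eventuallyEq this
  have hug : ∀ z ∈ K, u =ᶠ[𝓝 z] g := fun z hz => by
    have : ∀ᶠ x in 𝓝 z, χ x = 1 := nhds_le_nhdsSet hz hχ1
    filter_upwards [this] with x hx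
    simp [u, hx]
  have hud : ∀ z ∈ K, ∀ᶠ w in 𝓝 z, DifferentiableAt ℂ u w := fun z hz => by
    filter_upwards [(hug z hz).eventually_nhds, hG.mem_nhds (hKG hz)] with x hx hxG
    exact (Filter.EventuallyEq.differentiableAt_iff hx).2 (hg.differentiableAt (hG.mem_nhds hxG))
  have hD0 : ∀ z ∈ K, ∀ᶠ w in 𝓝 z, dbarU u w = 0 := fun z hz =>
    (hud z hz).mono fun w hw => dbarU_holo hw
  obtain ⟨c, hc, hpom⟩ := pompeiu
  let F : C(ℂ × K, ℂ) := ⟨fun x => dbarU u x.1 / (x.1 - x.2), by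
    rw [continuous_iff_continuousAt]
    rintro ⟨w, z⟩
    by_cases h : w = z
    · have h0 : ∀ᶠ x in 𝓝 w, dbarU u x = 0 := hD0 w (h ▸ z.2)
      have : (fun x : ℂ × K => dbarU u x.1 / (x.1 - x.2)) =ᶠ[𝓝 (w, z)] fun _ => 0 := by
        filter_upwards [(continuous_fst.tendsto (w, z)).eventually h0] with x hx
        simp [hx]
      exact this.continuousAt
    · exact ((dbarU_cont huc).comp continuous_fst).continuousAt.div (by fun_prop) (sub_ne_zero.2 h)⟩
  let Φ : C(ℂ, C(K, ℂ)) := F.curry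
  have hΦe : ∀ w (z : K), Φ w z = dbarU u w / (w - z) := fun w z => rfl
  have hΦs : ∀ w, dbarU u w = 0 → Φ w = 0 := fun w h => by
    ext z; simp [hΦe, h]
  have hΦm : ∀ w, Φ w ∈ (resFam G M K).topologicalClosure := by
    intro w
    by_cases h : dbarU u w = 0
    · rw [hΦs w h]; exact zero_mem _
    have hwK : w ∉ K := fun hw => h (hD0 w hw).self_of_nhds
    have hwG : w ∈ G := by
      by_contra hw
      exact h (dbarU_zero_of fun h' => hw (hLG (huL h')))
    let φ : C(K, ℂ) := (dbarU u w)⁻¹ • Φ w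
    have e : Φ w = dbarU u w • φ := by simp [φ, smul_smul, h]
    rw [e]
    apply Submodule.smul_mem
    apply pole_push hM hδ hδ1 hKd hwG hwK
    intro z
    simp only [φ, ContinuousMap.smul_apply, hΦe, smul_eq_mul]
    field_simp
  let V := (resFam G M K).topologicalClosure
  have : CompleteSpace V := (Submodule.isClosed_topologicalClosure _).completeSpace_coe
  let Ψ : ℂ → V := fun w => ⟨Φ w, hΦm w⟩
  have hΨc : Continuous Ψ := Φ.continuous.subtype_mk _
  have hz : ∀ w ∉ L, dbarU u w = 0 := fun w hw => dbarU_zero_of fun h => hw (huL h)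
  have hΨi : MeasureTheory.Integrable Ψ := hΨc.integrable_of_hasCompactSupport
    (HasCompactSupport.intro hL fun w hw => Subtype.ext (hΦs w (hz w hw)))
  have hΦi : MeasureTheory.Integrable Φ := Φ.continuous.integrable_of_hasCompactSupport
    (HasCompactSupport.intro hL fun w hw => hΦs w (hz w hw))
  have hm : ∫ w, Φ w ∈ V := by
    have := V.subtypeL.integral_comp_comm hΨi
    have h2 : ∫ w, Φ w = ((∫ w, Ψ w : V) : C(K, ℂ)) := this
    rw [h2]; exact (∫ w, Ψ w : V).2
  have hev : ∀ z : K, (∫ w, Φ w) z = g z * c := by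
    intro z
    have h1 := (ContinuousMap.evalCLM ℂ z).integral_comp_comm hΦi
    have h2 : ∫ w, dbarU u w / (w - z) = (∫ w, Φ w) z := h1
    rw [← h2, hpom u huc hus z (hud z z.2), (hug z z.2).eq_of_nhds]
  have hm2 : c⁻¹ • ∫ w, Φ w ∈ V := V.smul_mem _ hm
  have hm3 : c⁻¹ • ∫ w, Φ w ∈ closure (resFam G M K : Set C(K, ℂ)) := by
    rw [← Submodule.topologicalClosure_coe]; exact hm2
  obtain ⟨r, ⟨R, hR, hrR⟩, hr⟩ := Metric.mem_closure_iff.1 hm3 ε hε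
  refine ⟨R, hR, fun z hz => ?_⟩
  have h1 := (ContinuousMap.dist_lt_iff hε).1 hr ⟨z, hz⟩
  rw [dist_comm, dist_eq_norm, ContinuousMap.smul_apply, hev, hrR] at h1
  have : c⁻¹ • (g z * c) = g z := by simp; field_simp
  rwa [this] at h1


lemma exists_tau {r R : ℝ} (hr : 0 < r) (F : ℕ → ℂ → ℂ) (h0 : ∀ n, Tendsto (F n) (𝓝 0) (𝓝 0))
    (hi : ∀ n, Tendsto (F n) (cocompact ℂ) (𝓝 0)) (j : ℕ) :
    ∃ τ : ℕ, 2 ≤ τ ∧ R < r * τ ∧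
      ∀ i ≤ j, ∀ ζ : ℂ, (‖ζ‖ * τ ≤ R ∨ r * τ ≤ ‖ζ‖) → ‖F i ζ‖ ≤ (1 / 4 : ℝ) ^ j := by
  have hT : Tendsto (fun n : ℕ => (n : ℝ)) atTop atTop := tendsto_natCast_atTop_atTop
  have hrT : Tendsto (fun n : ℕ => r * (n : ℝ)) atTop atTop := hT.const_mul_atTop hr
  have hpos : (0:ℝ) < (1 / 4 : ℝ) ^ j := by positivity
  have key : ∀ i, ∀ᶠ τ : ℕ in atTop, ∀ ζ : ℂ, (‖ζ‖ * τ ≤ R ∨ r * τ ≤ ‖ζ‖) →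
      ‖F i ζ‖ ≤ (1 / 4 : ℝ) ^ j := by
    intro i
    have e1 : ∀ᶠ ζ in 𝓝 (0:ℂ), ‖F i ζ‖ ≤ (1 / 4 : ℝ) ^ j := by
      filter_upwards [(h0 i).eventually (ball_mem_nhds 0 hpos)] with ζ h
      simp at h ⊢; linarith
    have e2 : ∀ᶠ ζ in cocompact ℂ, ‖F i ζ‖ ≤ (1 / 4 : ℝ) ^ j := by
      filter_upwards [(hi i).eventually (ball_mem_nhds 0 hpos)] with ζ h
      simp at h ⊢; linarith
    obtain ⟨η, hη, h1⟩ := Metric.eventually_nhds_iff.1 e1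
    rw [← Metric.cobounded_eq_cocompact, ← comap_norm_atTop, eventually_comap,
      eventually_atTop] at e2
    obtain ⟨B, hB⟩ := e2
    filter_upwards [hT.eventually_gt_atTop (R / η), hrT.eventually_ge_atTop B,
      hT.eventually_gt_atTop 0] with τ t1 t2 t3 ζ hζ
    rcases hζ with hζ | hζ
    · apply h1
      rw [dist_zero_right]
      rw [div_lt_iff₀ hη] at t1
      by_contra! hh
      have := mul_le_mul_of_nonneg_right hh t3.le
      linarith
    · exact hB _ (t2.trans hζ) ζ rfl
  have := (Finset.range (j+1)).eventually_all.2 (fun i _ => key i)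
  obtain ⟨τ, a, b, c⟩ := ((eventually_ge_atTop 2).and
    ((hrT.eventually_gt_atTop R).and this)).exists
  exact ⟨τ, a, b, fun i hi => c i (by simp; omega)⟩

lemma glue {G' : Set ℂ} {r R : ℝ} (hr : 0 < r) (hG' : ∀ ζ ∈ G', r ≤ ‖ζ‖ ∧ ‖ζ‖ ≤ R)
    (Q : ℕ → Set ℂ) (hQf : ∀ n, (Q n).Finite) (hQ : ∀ n, ∀ ζ ∈ Q n, r ≤ ‖ζ‖ ∧ ‖ζ‖ ≤ R)
    (hQG : ∀ n, ∀ ζ ∈ G', ζ ∉ Q n) (F : ℕ → ℂ → ℂ) (hF : ∀ n, DifferentiableOn ℂ (F n) (Q n)ᶜ)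
    (h0 : ∀ n, Tendsto (F n) (𝓝 0) (𝓝 0))
    (hi : ∀ n, Tendsto (F n) (cocompact ℂ) (𝓝 0)) :
    ∃ (Ω : Set ℂ) (k : ℕ → ℕ), IsOpen Ω ∧ IsConnected Ω ∧ StrictMono k ∧ (∀ n, 0 < k n) ∧
      (∀ n, ∀ ζ ∈ G', ζ / (k n : ℂ) ∈ Ω) ∧ ∃ f : ℂ → ℂ, DifferentiableOn ℂ f Ω ∧
        ∀ n, ∀ ζ ∈ G', ‖f (ζ / (k n : ℂ)) - F n ζ‖ ≤ 2 * (1 / 2 : ℝ) ^ n := by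
  choose τ hτ2 hτR hτF using exists_tau (R := R) hr F h0 hi
  let k : ℕ → ℕ := fun n => ∏ j ∈ Finset.range (n + 1), τ j
  have hks : ∀ n, k (n + 1) = k n * τ (n + 1) := fun n => Finset.prod_range_succ _ _
  have hkp : ∀ n, 0 < k n := fun n => Finset.prod_pos fun j _ => by have := hτ2 j; omega
  have hkm : StrictMono k := strictMono_nat_of_lt_succ fun n => by
    rw [hks]; have := hτ2 (n + 1); have := hkp n; nlinarith
  have hkij : ∀ i j, i < j → k i * τ j ≤ k j := by
    intro i j hij
    obtain ⟨l, rfl⟩ : ∃ l, j = l + 1 := ⟨j - 1, by omega⟩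
    rw [hks]
    exact Nat.mul_le_mul_right _ (hkm.monotone (by omega))
  have hkp' : ∀ n, (0:ℝ) < k n := fun n => by exact_mod_cast hkp n
  have hkc : ∀ n, (k n : ℂ) ≠ 0 := fun n => by exact_mod_cast (hkp n).ne'
  -- small scale
  have hlt : ∀ m n, m < n → ∀ ζ : ℂ, ‖ζ‖ ≤ R → ‖(k m : ℂ) * (ζ / k n)‖ * τ n ≤ R := by
    intro m n hmn ζ hζ
    have h1 : (k m : ℝ) * τ n ≤ k n := by exact_mod_cast hkij m n hmn
    rw [norm_mul, norm_div, Complex.norm_natCast, Complex.norm_natCast]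
    have h2 : (k m : ℝ) * (‖ζ‖ / k n) * τ n = ‖ζ‖ * ((k m * τ n) / k n) := by ring
    rw [h2]
    have h3 : ((k m : ℝ) * τ n) / k n ≤ 1 := (div_le_one (hkp' n)).2 h1
    nlinarith [norm_nonneg ζ]
  have hgt : ∀ m n, n < m → ∀ ζ : ℂ, r ≤ ‖ζ‖ → r * τ m ≤ ‖(k m : ℂ) * (ζ / k n)‖ := by
    intro m n hmn ζ hζ
    have h1 : (k n : ℝ) * τ m ≤ k m := by exact_mod_cast hkij n m hmn
    rw [norm_mul, norm_div, Complex.norm_natCast, Complex.norm_natCast]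
    rw [mul_div_assoc', le_div_iff₀ (hkp' n)]
    have : (k n : ℝ) * τ m * r ≤ k m * ‖ζ‖ := mul_le_mul h1 hζ hr.le (hkp' m).le
    linarith
  -- away from zero
  have haway : ∀ ρ : ℝ, 0 < ρ → ∃ N : ℕ, ∀ m ≥ N, ∀ z : ℂ, ρ ≤ ‖z‖ → r * τ m ≤ ‖(k m : ℂ) * z‖ := by
    intro ρ hρ
    obtain ⟨N, hN⟩ := exists_nat_gt (r / ρ)
    refine ⟨N + 1, fun m hm z hz => ?_⟩
    have h1 : (k N : ℝ) * τ m ≤ k m := by exact_mod_cast hkij N m (by omega)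
    have h2 : (N : ℝ) ≤ k N := by exact_mod_cast hkm.le_apply
    rw [div_lt_iff₀ hρ] at hN
    rw [norm_mul, Complex.norm_natCast]
    have h3 : r ≤ k N * ρ := by nlinarith
    have h4 : (0:ℝ) ≤ τ m := by positivity
    calc r * τ m ≤ k N * ρ * τ m := mul_le_mul_of_nonneg_right h3 h4
      _ = k N * τ m * ρ := by ring
      _ ≤ k m * ‖z‖ := mul_le_mul h1 hz hρ.le (hkp' m).le
  have hbig : ∀ m (ζ : ℂ), r * τ m ≤ ‖ζ‖ → ∀ i, ζ ∉ Q i := by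
    intro m ζ h i hζ
    have := (hQ i ζ hζ).2
    have := hτR m
    linarith
  have hclos : ∀ m, IsOpen {z : ℂ | (k m : ℂ) * z ∉ Q m} := fun m =>
    (hQf m).isClosed.isOpen_compl.preimage (continuous_const.mul continuous_id)
  let Ω : Set ℂ := {z | z ≠ 0 ∧ ∀ m, (k m : ℂ) * z ∉ Q m}
  let h : ℕ → ℂ → ℂ := fun m z => F m (k m * z)
  have hhd : ∀ m z, (k m : ℂ) * z ∉ Q m → DifferentiableAt ℂ (h m) z := by
    intro m z hz
    have : DifferentiableAt ℂ (F m) (k m * z) :=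
      (hF m).differentiableAt ((hQf m).isClosed.isOpen_compl.mem_nhds hz)
    exact this.comp z ((differentiableAt_const _).mul differentiableAt_id)
  have hgeo : Summable (fun i : ℕ => (1 / 4 : ℝ) ^ i) :=
    summable_geometric_of_lt_one (by norm_num) (by norm_num)
  refine ⟨Ω, k, ?_, ?_, hkm, hkp, ?_, fun z => ∑' m, h m z, ?_, ?_⟩
  · rw [isOpen_iff_mem_nhds]
    rintro z ⟨hz, hzm⟩
    obtain ⟨N, hN⟩ := haway (‖z‖ / 2) (by positivity)
    have e1 : ∀ᶠ x : ℂ in 𝓝 z, ‖z‖ / 2 < ‖x‖ :=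
      continuous_norm.continuousAt.eventually_const_lt (by have := norm_pos_iff.2 hz; linarith)
    have e2 := (Finset.range N).eventually_all.2 (fun m _ => (hclos m).mem_nhds (hzm m))
    filter_upwards [e1, e2] with x h1 h2
    refine ⟨fun h => ?_, fun m => ?_⟩
    · rw [h, norm_zero] at h1; have := norm_nonneg z; linarith
    · by_cases hm : m < N
      · exact h2 m (by simpa using hm)
      · exact hbig m _ (hN m (by omega) x h1.le) m
  · have hc : ({0} ∪ ⋃ m, (fun z : ℂ => z / k m) '' Q m : Set ℂ).Countable :=
      (countable_singleton 0).union (countable_iUnion fun m => ((hQf m).countable.image _))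
    have := hc.isConnected_compl_of_one_lt_rank (by simp)
    convert this using 1
    ext z
    simp only [Ω, mem_ofPred_eq, mem_compl_iff, mem_union, mem_singleton_iff, mem_iUnion, mem_image,
      not_or, not_exists, not_and, ne_eq]
    refine and_congr_right fun _ => forall_congr' fun m => ⟨?_, ?_⟩
    · rintro h1 x hx rfl
      exact h1 (by rwa [mul_div_cancel₀ _ (hkc m)])
    · intro h1 h2
      exact h1 _ h2 (by field_simp [hkc m])
  · intro n ζ hζ
    obtain ⟨ha, hb⟩ := hG' ζ hζ
    refine ⟨div_ne_zero (by rw [← norm_pos_iff]; linarith) (hkc n), fun m => ?_⟩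
    rcases lt_trichotomy m n with hmn | rfl | hmn
    · intro hh
      have h1 := (hQ m _ hh).1
      have h2 := hlt m n hmn ζ hb
      have h3 := hτR n
      have h4 : r * τ n ≤ ‖(k m : ℂ) * (ζ / k n)‖ * τ n := mul_le_mul_of_nonneg_right h1 (by positivity)
      linarith
    · rw [mul_div_cancel₀ _ (hkc m)]; exact hQG m ζ hζ
    · exact hbig m _ (hgt m n hmn ζ ha) m
  · rintro z ⟨hz, hzm⟩
    apply DifferentiableAt.differentiableWithinAt
    have hρ : 0 < ‖z‖ / 2 := by positivity
    obtain ⟨N, hN⟩ := haway (‖z‖ / 2) hρ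
    let U : Set ℂ := {x | ‖z‖ / 2 < ‖x‖}
    have hU : IsOpen U := isOpen_lt continuous_const continuous_norm
    have hzU : z ∈ U := by show ‖z‖ / 2 < ‖z‖; linarith
    have hb : ∀ i, ∀ x ∈ U, ‖h (i + N) x‖ ≤ (1 / 4 : ℝ) ^ (i + N) := fun i x hx =>
      hτF (i + N) (i + N) le_rfl _ (Or.inr (hN (i + N) (by omega) x (le_of_lt hx)))
    have hsum : Summable (fun i : ℕ => (1 / 4 : ℝ) ^ (i + N)) := (summable_nat_add_iff N).2 hgeo
    have hd : DifferentiableOn ℂ (fun x => ∑' i, h (i + N) x) U := by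
      refine Complex.differentiableOn_tsum_of_summable_norm hsum ?_ hU hb
      intro i x hx
      exact (hhd _ _ (hbig (i + N) _ (hN (i + N) (by omega) x (le_of_lt hx)) _)).differentiableWithinAt
    have heq : (fun x => ∑' m, h m x) =ᶠ[𝓝 z]
        fun x => ∑ i ∈ Finset.range N, h i x + ∑' i, h (i + N) x := by
      filter_upwards [hU.mem_nhds hzU] with x hx
      have : Summable (fun i => h (i + N) x) := Summable.of_norm_bounded hsum (fun i => hb i x hx)
      exact (((summable_nat_add_iff N).1 this).sum_add_tsum_nat_add N).symm
    rw [heq.differentiableAt_iff]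
    exact (DifferentiableAt.fun_sum fun i _ => hhd i z (hzm i)).add (hd.differentiableAt (hU.mem_nhds hzU))
  · intro n ζ hζ
    obtain ⟨ha, hb⟩ := hG' ζ hζ
    have hn : h n (ζ / k n) = F n ζ := by simp only [h]; rw [mul_div_cancel₀ _ (hkc n)]
    let e : ℕ → ℂ := fun m => if m = n then 0 else h m (ζ / k n)
    have hbd : ∀ m, ‖e m‖ ≤ (1 / 2 : ℝ) ^ n * (1 / 2 : ℝ) ^ m := by
      intro m
      have h4 : ∀ j, (1 / 4 : ℝ) ^ j = (1 / 2 : ℝ) ^ j * (1 / 2 : ℝ) ^ j := fun j => by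
        rw [← mul_pow]; norm_num
      have hp : ∀ j, (0:ℝ) < (1 / 2 : ℝ) ^ j := fun j => by positivity
      have hmono : ∀ i j, i ≤ j → (1 / 2 : ℝ) ^ j ≤ (1 / 2 : ℝ) ^ i := fun i j hij =>
        pow_le_pow_of_le_one (by norm_num) (by norm_num) hij
      rcases lt_trichotomy m n with hmn | rfl | hmn
      · simp only [e, if_neg hmn.ne]
        refine (hτF n m hmn.le _ (Or.inl (hlt m n hmn ζ hb))).trans ?_
        rw [h4]; exact mul_le_mul_of_nonneg_left (hmono _ _ hmn.le) (hp _).le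
      · simp only [e, if_true, norm_zero]; have := hp m; positivity
      · simp only [e, if_neg hmn.ne']
        refine (hτF m m le_rfl _ (Or.inr (hgt m n hmn ζ ha))).trans ?_
        rw [h4]; exact mul_le_mul_of_nonneg_right (hmono _ _ hmn.le) (hp _).le
    have hS : HasSum (fun m : ℕ => (1 / 2 : ℝ) ^ n * (1 / 2 : ℝ) ^ m) ((1 / 2 : ℝ) ^ n * 2) :=
      hasSum_geometric_two.mul_left _
    have hes : Summable e := Summable.of_norm_bounded hS.summable hbd
    have hle := tsum_of_norm_bounded hS hbd
    have h1 : HasSum (fun m => h m (ζ / k n)) (F n ζ + ∑' m, e m) := by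
      have h2 : HasSum (fun m => if m = n then F n ζ else 0) (F n ζ) := by
        simpa using hasSum_ite_eq n (F n ζ)
      have h3 := h2.add hes.hasSum
      refine h3.congr_fun ?_
      intro m
      by_cases hm : m = n
      · subst hm; simp [e, hn]
      · simp [e, hm]
    beta_reduce
    rw [h1.tsum_eq, add_sub_cancel_left]
    linarith


lemma exists_denseFam (G K : Set ℂ) (M : ℝ) (hK : IsCompact K) :
    ∃ S : ℕ → ℂ → ℂ, (∀ i, S i ∈ ratFam G M) ∧ (K ⊆ G → ∀ R ∈ ratFam G M, ∀ ε : ℝ, 0 < ε →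
      ∃ i, ∀ z ∈ K, ‖S i z - R z‖ < ε) := by
  have : CompactSpace K := isCompact_iff_compactSpace.1 hK
  let D := TopologicalSpace.denseSeq (resFam G M K)
  choose S hS1 hS2 using fun i => (D i).2
  refine ⟨S, hS1, fun hKG R hR ε hε => ?_⟩
  let φ : resFam G M K := ⟨⟨fun z => R z, ((ratFam_cont hR).mono hKG).restrict⟩, R, hR, fun z => rfl⟩
  obtain ⟨i, hi⟩ := (TopologicalSpace.denseRange_denseSeq (resFam G M K)).exists_dist_lt φ hε
  refine ⟨i, fun z hz => ?_⟩
  have h1 : dist (φ : C(K, ℂ)) (D i : C(K, ℂ)) < ε := hi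
  have h2 := (ContinuousMap.dist_lt_iff hε).1 h1 ⟨z, hz⟩
  rw [dist_comm, dist_eq_norm, hS2] at h2
  exact h2

/-- compact exhaustion -/
def exh (G : Set ℂ) (N : ℕ) : Set ℂ := {z | ∀ p ∉ G, (1 / ((N : ℝ) + 1)) ≤ dist z p}

lemma exh_subset (G : Set ℂ) (N : ℕ) : exh G N ⊆ G := by
  intro z hz
  by_contra h
  have := hz z h
  rw [dist_self] at this
  have : 0 < 1 / ((N : ℝ) + 1) := by positivity
  linarith

lemma exh_compact {G : Set ℂ} (hGb : IsBounded G) (N : ℕ) : IsCompact (exh G N) := by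
  refine Metric.isCompact_of_isClosed_isBounded ?_ (hGb.subset (exh_subset G N))
  have : exh G N = ⋂ p : ℂ, ⋂ _ : p ∉ G, {z | (1 / ((N : ℝ) + 1)) ≤ dist z p} := by
    ext z; simp [exh]
  rw [this]
  exact isClosed_iInter fun p => isClosed_iInter fun _ =>
    isClosed_le continuous_const (continuous_id.dist continuous_const)

lemma exh_exhaust {G K : Set ℂ} (hG : IsOpen G) (hK : IsCompact K) (hKG : K ⊆ G) :
    ∃ N₀, ∀ N ≥ N₀, K ⊆ exh G N := by
  obtain ⟨δ, hδ, h⟩ := hK.exists_cthickening_subset_open hG hKG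
  obtain ⟨N₀, hN₀⟩ := exists_nat_one_div_lt hδ
  refine ⟨N₀, fun N hN z hz p hp => ?_⟩
  by_contra! hlt
  have h1 : 1 / ((N : ℝ) + 1) ≤ 1 / ((N₀ : ℝ) + 1) := Nat.one_div_le_one_div hN
  apply hp
  apply h
  apply Metric.mem_cthickening_of_dist_le p z δ K hz
  rw [dist_comm]; linarith

lemma exists_F {G : Set ℂ} {M a : ℝ} (hM : 0 < M) (hGM : G ⊆ ball 0 M) (ha : a = 10 * M)
    {S : ℂ → ℂ} (hS : S ∈ ratFam G M) {K : Set ℂ} (hK : IsCompact K) (hKG : K ⊆ G)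
    {η : ℝ} (hη : 0 < η) :
    ∃ (Q : Set ℂ) (F : ℂ → ℂ), Q.Finite ∧ (∀ ζ ∈ Q, 9 * M ≤ ‖ζ‖ ∧ ‖ζ‖ ≤ 11 * M) ∧
      (∀ z ∈ G, z + a ∉ Q) ∧ DifferentiableOn ℂ F Qᶜ ∧ Tendsto F (𝓝 0) (𝓝 0) ∧
      Tendsto F (cocompact ℂ) (𝓝 0) ∧ ∀ z ∈ K, ‖F (z + a) - S z‖ ≤ η := by
  obtain ⟨C, hC⟩ := hK.exists_bound_of_continuousOn ((ratFam_cont hS).mono hKG)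
  obtain ⟨P, hPf, hPG, hPd, hPi⟩ := hS
  have hna : ‖(a : ℂ)‖ = 10 * M := by
    rw [Complex.norm_real, ha, Real.norm_of_nonneg (by positivity)]
  have ha0 : (a : ℂ) ≠ 0 := by rw [← norm_pos_iff, hna]; positivity
  obtain ⟨q, hq⟩ : ∃ q : ℕ, |C| * (1 / 2 : ℝ) ^ (2 * q) ≤ η := by
    have h1 : Tendsto (fun q : ℕ => |C| * (1 / 4 : ℝ) ^ q) atTop (𝓝 (|C| * 0)) :=
      (tendsto_pow_atTop_nhds_zero_of_lt_one (by norm_num) (by norm_num)).const_mul _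
    rw [mul_zero] at h1
    obtain ⟨q, hq⟩ := (h1.eventually (Iio_mem_nhds hη)).exists
    refine ⟨q, ?_⟩
    rw [pow_mul]; norm_num at hq ⊢; linarith
  have hnorm2 : ∀ z : ℂ, ‖z‖ < M → 19 * M ≤ ‖z + a + a‖ := by
    intro z hz
    have h1 := norm_sub_le (z + a + a) z
    have h2 : ‖z + a + a - z‖ = 20 * M := by
      have : z + a + a - z = (2:ℂ) * a := by ring
      rw [this, norm_mul, hna]; norm_num; ring
    linarith
  let b : ℂ → ℂ := fun ζ => 1 - 2 * a * (ζ + a)⁻¹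
  let F : ℂ → ℂ := fun ζ => S (ζ - a) * (1 - b ζ ^ (2 * q))
  refine ⟨(fun p => p + (a : ℂ)) '' P ∪ {-(a : ℂ)}, F, (hPf.image _).union (finite_singleton _),
    ?_, ?_, ?_, ?_, ?_, ?_⟩
  · rintro ζ (⟨p, hp, rfl⟩ | rfl)
    · have h1 := (hPG hp).1
      rw [mem_ball_zero_iff] at h1
      have h2 := norm_add_le p (a : ℂ)
      have h3 := norm_sub_le (p + (a : ℂ)) p
      rw [add_sub_cancel_left] at h3
      constructor <;> simp only <;> linarith
    · rw [norm_neg, hna]; constructor <;> linarith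
  · rintro z hz (⟨p, hp, h⟩ | h)
    · have : p = z := add_right_cancel h
      exact (hPG hp).2 (this ▸ hz)
    · rw [mem_singleton_iff] at h
      have h1 := hnorm2 z (by simpa using hGM hz)
      rw [h] at h1; simp at h1; linarith
  · intro ζ hζ
    simp only [mem_compl_iff, mem_union, mem_image, mem_singleton_iff, not_or, not_exists,
      not_and] at hζ
    have h1 : ζ - a ∉ P := fun h => hζ.1 _ h (by ring)
    have h2 : ζ + a ≠ 0 := fun h => hζ.2 (eq_neg_of_add_eq_zero_left h)
    have h3 : DifferentiableAt ℂ S (ζ - a) := hPd.differentiableAt (hPf.isClosed.isOpen_compl.mem_nhds h1)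
    have h4 : DifferentiableAt ℂ (fun ζ : ℂ => S (ζ - a)) ζ :=
      h3.comp ζ (differentiableAt_id.sub_const _)
    have h5 : DifferentiableAt ℂ b ζ := (differentiableAt_const _).sub
      ((differentiableAt_const _).mul ((differentiableAt_id.add_const _).inv h2))
    exact (h4.mul ((differentiableAt_const _).sub (h5.pow _))).differentiableWithinAt
  · have h1 : (0 : ℂ) - a ∉ P := fun h => by
      have h1 := (hPG h).1
      rw [mem_ball_zero_iff, zero_sub, norm_neg, hna] at h1; linarith
    have h3 : ContinuousAt S (0 - a) :=
      (hPd.differentiableAt (hPf.isClosed.isOpen_compl.mem_nhds h1)).continuousAt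
    have h4 : ContinuousAt (fun ζ : ℂ => S (ζ - a)) 0 :=
      ContinuousAt.comp (f := fun ζ : ℂ => ζ - a) h3 (by fun_prop)
    have h5 : ContinuousAt b 0 := continuousAt_const.sub
      (continuousAt_const.mul ((continuousAt_id.add continuousAt_const).inv₀ (by simpa using ha0)))
    have h6 : ContinuousAt F 0 := h4.mul (continuousAt_const.sub (h5.pow _))
    have hb0 : b 0 = -1 := by
      simp only [b, zero_add]; rw [mul_assoc, mul_inv_cancel₀ ha0]; norm_num
    have hF0 : F 0 = 0 := by
      simp only [F]; rw [hb0, pow_mul]; norm_num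
    have := h6.tendsto
    rwa [hF0] at this
  · have h1 : Tendsto (fun z : ℂ => z - a) (cocompact ℂ) (cocompact ℂ) :=
      (Homeomorph.subRight (a : ℂ)).isClosedEmbedding.tendsto_cocompact
    have h2 : Tendsto (fun z : ℂ => z + a) (cocompact ℂ) (cocompact ℂ) :=
      (Homeomorph.addRight (a : ℂ)).isClosedEmbedding.tendsto_cocompact
    have h3 : Tendsto (fun z : ℂ => (z + a)⁻¹) (cocompact ℂ) (𝓝 0) := by
      have h3 := (tendsto_inv₀_cobounded (α := ℂ))
      rw [Metric.cobounded_eq_cocompact] at h3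
      exact h3.comp h2
    have h4 : Tendsto b (cocompact ℂ) (𝓝 (1 - 2 * a * 0)) :=
      tendsto_const_nhds.sub (h3.const_mul _)
    have h5 := (hPi.comp h1).mul ((tendsto_const_nhds (x := (1:ℂ))).sub (h4.pow (2 * q)))
    rw [zero_mul] at h5
    exact h5
  · intro z hz
    have hzM : ‖z‖ < M := by simpa using hGM (hKG hz)
    have h1 := hnorm2 z hzM
    have hne : z + a + a ≠ 0 := by rw [← norm_pos_iff]; linarith
    have hb : b (z + a) = z / (z + a + a) := by
      simp only [b]; field_simp; ring
    have hbn : ‖b (z + a)‖ ≤ 1 / 2 := by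
      rw [hb, norm_div, div_le_iff₀ (by linarith)]; linarith
    have h2 : F (z + a) - S z = - (S z * b (z + a) ^ (2 * q)) := by
      simp only [F, add_sub_cancel_right]; ring
    rw [h2, norm_neg, norm_mul, norm_pow]
    refine le_trans ?_ hq
    exact mul_le_mul ((hC z hz).trans (le_abs_self C)) (pow_le_pow_left₀ (norm_nonneg _) hbn _)
      (by positivity) (abs_nonneg C)

/-- for any bounded domain `G` there are a domain `Ω`, a point `a` and a
strictly increasing sequence of positive integers `k` such that `φₙ(z) = (z+a)/kₙ` is a
universal sequence of injective holomorphic maps from `G` to `Ω`. -/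
theorem exists_universal_affine_sequence
    (G : Set ℂ) (hG : IsOpen G) (hGconn : IsConnected G) (hGb : Bornology.IsBounded G) :
    ∃ (Ω : Set ℂ) (a : ℂ) (k : ℕ → ℕ),
      IsOpen Ω ∧ IsConnected Ω ∧ StrictMono k ∧ (∀ n, 0 < k n) ∧
      (∀ n, Set.MapsTo (fun z => (z + a) / (k n : ℂ)) G Ω) ∧
      (∀ n, Set.InjOn (fun z => (z + a) / (k n : ℂ)) G) ∧
      (∀ n, DifferentiableOn ℂ (fun z => (z + a) / (k n : ℂ)) G) ∧
      ∃ f : ℂ → ℂ, DifferentiableOn ℂ f Ω ∧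
        UniversalFor G (fun n z => (z + a) / (k n : ℂ)) f := by
  obtain ⟨M₀, hM₀⟩ := hGb.subset_ball (0 : ℂ)
  obtain ⟨M, hM, hMM⟩ : ∃ M : ℝ, 0 < M ∧ M₀ ≤ M - 1 := ⟨|M₀| + 1, by positivity, by
    have := le_abs_self M₀; linarith⟩
  have hGM1 : G ⊆ ball 0 (M - 1) := hM₀.trans (ball_subset_ball hMM)
  have hGM : G ⊆ ball 0 M := hGM1.trans (ball_subset_ball (by linarith))
  have hKc := fun N => exh_compact hGb N
  choose S hS hSd using fun N => exists_denseFam G (exh G N) M (hKc N)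
  obtain ⟨a, ha⟩ : ∃ a : ℝ, a = 10 * M := ⟨_, rfl⟩
  have hna : ‖(a : ℂ)‖ = 10 * M := by
    rw [Complex.norm_real, ha, Real.norm_of_nonneg (by positivity)]
  choose Q F hQf hQ hQG hFd hF0 hFi hFS using fun n : ℕ =>
    exists_F hM hGM ha (hS n.unpair.1 n.unpair.2) (hKc n.unpair.1) (exh_subset G _)
      (show (0:ℝ) < (1 / 2 : ℝ) ^ n by positivity)
  obtain ⟨Ω, k, hΩo, hΩc, hk, hkp, hmaps, f, hf, happ⟩ := glue (G' := (fun z => z + (a : ℂ)) '' G)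
    (r := 9 * M) (R := 11 * M) (by positivity) (by
      rintro ζ ⟨p, hp, rfl⟩
      have h1 := hGM hp
      rw [mem_ball_zero_iff] at h1
      have h2 := norm_add_le p (a : ℂ)
      have h3 := norm_sub_le (p + (a : ℂ)) p
      rw [add_sub_cancel_left] at h3
      constructor <;> simp only <;> linarith) Q hQf hQ (by
      rintro n ζ ⟨z, hz, rfl⟩
      exact hQG n z hz) F hFd hF0 hFi
  have hkc : ∀ n, (k n : ℂ) ≠ 0 := fun n => by exact_mod_cast (hkp n).ne'
  refine ⟨Ω, a, k, hΩo, hΩc, hk, hkp, fun n z hz => hmaps n _ ⟨z, hz, rfl⟩, ?_, ?_, f, hf, ?_⟩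
  · intro n x _ y _ hxy
    exact add_right_cancel ((div_left_inj' (hkc n)).1 hxy)
  · intro n
    exact ((differentiable_id.add_const _).div_const _).differentiableOn
  · intro g hg K hKG hK ε hε
    obtain ⟨N₀, hN₀⟩ := exh_exhaust hG hK hKG
    have ht : Tendsto (fun n : ℕ => 3 * (1 / 2 : ℝ) ^ n) atTop (𝓝 (3 * 0)) :=
      (tendsto_pow_atTop_nhds_zero_of_lt_one (by norm_num) (by norm_num)).const_mul _
    rw [mul_zero] at ht
    obtain ⟨N₁, hN₁⟩ := eventually_atTop.1 (ht.eventually (Iio_mem_nhds (show 0 < ε / 3 by positivity)))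
    let N := max N₀ N₁
    obtain ⟨R, hR, hRg⟩ := runge hG hGM1 (δ := 1 / ((N : ℝ) + 1)) (by positivity)
      (by rw [div_le_one (by positivity)]; have : (0:ℝ) ≤ N := by positivity
          linarith) rfl (hKc N) (exh_subset G N) hg (show 0 < ε / 3 by positivity)
    obtain ⟨i, hi⟩ := hSd N (exh_subset G N) R hR (ε / 3) (by positivity)
    let n := Nat.pair N i
    have hn : n.unpair = (N, i) := Nat.unpair_pair N i
    have hnN : N₁ ≤ n := (le_max_right _ _).trans (Nat.left_le_pair N i)
    refine ⟨n, fun z hz => ?_⟩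
    have hzN : z ∈ exh G N := hN₀ N (le_max_left _ _) hz
    have e1 := happ n (z + a) ⟨z, hKG hz, rfl⟩
    have e2 := hFS n z (by rw [hn]; exact hzN)
    rw [hn] at e2
    have e3 := hi z hzN
    have e4 := hRg z hzN
    have e5 : 3 * (1 / 2 : ℝ) ^ n < ε / 3 := hN₁ n hnN
    have e6 : f ((z + a) / k n) - g z = (f ((z + a) / k n) - F n (z + a)) +
      (F n (z + a) - S N i z) + (S N i z - R z) + (R z - g z) := by ring
    show ‖f ((z + a) / k n) - g z‖ < ε
    rw [e6]
    have e7 := norm_add₄_le (a := f ((z + a) / k n) - F n (z + a)) (b := F n (z + a) - S N i z)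
      (c := S N i z - R z) (d := R z - g z)
    simp only at e2
    linarith
end

section
/- Let G and Ω be domains in ℂ with G simply connected, and let Φ = (φₙ) be any sequence of holomorphic maps from G to Ω. Then there exists a (Φ,G,Ω)-universal function if and only if for every compact set K ⊆ G and every compact set L ⊆ Ω there exists n ∈ ℕ such that φₙ(K) ∩ L = ∅ and φₙ is injective on a neighbourhood of K. -/
open Set Metric Bornology Filter

theorem lip_of_bounded {f : ℂ → ℂ} {z : ℂ} {r B : ℝ} (hr : 0 < r)
    (hf : DifferentiableOn ℂ f (ball z (2*r))) (hB : ∀ w ∈ ball z (2*r), ‖f w‖ ≤ B) :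
    ∀ x ∈ ball z r, ∀ y ∈ ball z r, ‖f y - f x‖ ≤ B / r * ‖y - x‖ := by
  have hsub : ∀ x ∈ ball z r, closedBall x r ⊆ ball z (2*r) := by
    intro x hx w hw
    rw [mem_ball] at *
    rw [mem_closedBall] at hw
    linarith [dist_triangle w x z]
  intro x hx y hy
  refine Convex.norm_image_sub_le_of_norm_deriv_le (𝕜 := ℂ) (s := ball z r) ?_ ?_ (convex_ball z r) hx hy
  · intro w hw
    exact hf.differentiableAt (isOpen_ball.mem_nhds (hsub w hw (mem_closedBall_self hr.le)))
  · intro w hw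
    refine Complex.norm_deriv_le_of_forall_mem_sphere_norm_le hr ?_ ?_
    · refine (hf.mono ?_).diffContOnCl
      rw [closure_ball w hr.ne']
      exact hsub w hw
    · intro u hu
      exact hB u (hsub w hw (sphere_subset_closedBall hu))

theorem forward_dir (G Ω : Set ℂ) (hG : IsOpen G)
    (φ : ℕ → ℂ → ℂ) (hφd : ∀ n, DifferentiableOn ℂ (φ n) G)
    (hφm : ∀ n, Set.MapsTo (φ n) G Ω) (f : ℂ → ℂ) (hf : DifferentiableOn ℂ f Ω)
    (hu : UniversalFor G φ f) :
      ∀ K : Set ℂ, K ⊆ G → IsCompact K →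
        ∀ L : Set ℂ, L ⊆ Ω → IsCompact L →
          ∃ n : ℕ, (φ n '' K) ∩ L = ∅ ∧
            ∃ U : Set ℂ, IsOpen U ∧ K ⊆ U ∧ U ⊆ G ∧ Set.InjOn (φ n) U := by
  intro K hKG hK L hLΩ hL
  obtain ⟨δ, hδ, hδG⟩ := hK.exists_cthickening_subset_open hG hKG
  have hK' : IsCompact (cthickening δ K) := hK.cthickening
  obtain ⟨B, hB⟩ := hL.exists_bound_of_continuousOn (hf.continuousOn.mono hLΩ)
  obtain ⟨R, hR⟩ := hK.isBounded.exists_norm_le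
  set r := δ / 3 with hr
  have hr0 : 0 < r := by positivity
  have hε : 0 < min 1 (r/2) := by positivity
  obtain ⟨n, hn⟩ := hu (fun z => z + ((B + R + 1 : ℝ) : ℂ)) (by fun_prop) _ hδG hK' _ hε
  have hsubK : K ⊆ cthickening δ K := self_subset_cthickening K
  refine ⟨n, ?_, thickening r K, isOpen_thickening, self_subset_thickening hr0 K, ?_, ?_⟩
  · rw [eq_empty_iff_forall_notMem]
    rintro _ ⟨⟨z, hz, rfl⟩, hzL⟩
    have h1 := hn z (hsubK hz)
    have h2 := hB _ hzL
    have h3 := hR z hz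
    have h4 : ‖((B + R + 1 : ℝ) : ℂ)‖ ≤ ‖f (φ n z) - (z + ((B + R + 1 : ℝ) : ℂ))‖ + ‖f (φ n z)‖ + ‖z‖ := by
      have : ((B + R + 1 : ℝ) : ℂ) = -(f (φ n z) - (z + ((B + R + 1 : ℝ) : ℂ))) + f (φ n z) - z := by ring
      calc _ = ‖-(f (φ n z) - (z + ((B + R + 1 : ℝ) : ℂ))) + f (φ n z) - z‖ := by rw [← this]
        _ ≤ _ := by
          refine (norm_sub_le _ _).trans ?_
          gcongr
          refine (norm_add_le _ _).trans ?_
          rw [norm_neg]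
    have h5 : B + R + 1 ≤ ‖((B + R + 1 : ℝ) : ℂ)‖ := by
      rw [Complex.norm_real]; exact Real.le_norm_self _
    have := min_le_left 1 (r/2)
    linarith
  · exact (thickening_subset_cthickening_of_le (by linarith) K).trans hδG
  · have hball : ∀ x ∈ thickening r K, ball x (2*r) ⊆ cthickening δ K := by
      intro x hx w hw
      rw [mem_thickening_iff] at hx
      obtain ⟨k, hk, hxk⟩ := hx
      apply thickening_subset_cthickening
      rw [mem_thickening_iff]
      refine ⟨k, hk, ?_⟩
      rw [mem_ball] at hw
      linarith [dist_triangle w x k]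
    intro x hx y hy hxy
    by_contra hne
    set h : ℂ → ℂ := fun z => f (φ n z) - (z + ((B + R + 1 : ℝ) : ℂ)) with hh
    have hhd : DifferentiableOn ℂ h G := by
      refine DifferentiableOn.sub (hf.comp (hφd n) (hφm n)) (by fun_prop)
    have hpos : 0 < ‖y - x‖ := norm_pos_iff.2 (sub_ne_zero.2 (Ne.symm hne))
    have heq : ‖h y - h x‖ = ‖y - x‖ := by
      rw [← norm_neg (y - x)]; congr 1; simp only [hh, hxy]; ring
    have hm := min_le_right 1 (r/2)
    by_cases hd : ‖y - x‖ < r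
    · have := lip_of_bounded (z := x) hr0 (hhd.mono ((hball x hx).trans hδG))
        (fun w hw => (hn w (hball x hx hw)).le) x (mem_ball_self hr0) y
        (by rwa [mem_ball, dist_eq_norm])
      rw [heq] at this
      have h2 : min 1 (r/2) / r ≤ 1/2 := by rw [div_le_iff₀ hr0]; linarith
      nlinarith
    · have h1 := hn x (hball x hx (mem_ball_self (by positivity)))
      have h2 := hn y (hball y hy (mem_ball_self (by positivity)))
      have : ‖h y - h x‖ ≤ ‖h y‖ + ‖h x‖ := norm_sub_le _ _
      rw [heq] at this
      have h1' : ‖h x‖ < min 1 (r/2) := h1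
      have h2' : ‖h y‖ < min 1 (r/2) := h2
      linarith


theorem riemann_sum_approx {X : Set ℂ} (hX : IsCompact X) (F : ℝ → ℂ → ℂ)
    (hF : ContinuousOn (fun p : ℝ × ℂ => F p.1 p.2) (Icc 0 1 ×ˢ X)) {ε : ℝ} (hε : 0 < ε) :
    ∃ N₀ : ℕ, ∀ N : ℕ, N₀ ≤ N → ∀ x ∈ X,
      ‖(∫ t in (0:ℝ)..1, F t x) - ∑ k ∈ Finset.range N, (1 / (N:ℂ)) * F ((k:ℝ)/N) x‖ ≤ ε := by
  have huc := (isCompact_Icc.prod hX).uniformContinuousOn_of_continuous hF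
  rw [Metric.uniformContinuousOn_iff] at huc
  obtain ⟨δ, hδ, h⟩ := huc ε hε
  obtain ⟨N₀, hN₀⟩ := exists_nat_gt (1/δ)
  refine ⟨N₀, fun N hN x hx => ?_⟩
  have hNpos : (0:ℝ) < N := by
    have : (0:ℝ) < N₀ := lt_trans (by positivity) hN₀
    exact this.trans_le (by exact_mod_cast hN)
  have hNδ : 1 / (N:ℝ) < δ := by
    rw [div_lt_iff₀ hNpos]
    rw [div_lt_iff₀ hδ] at hN₀
    have : (N₀:ℝ) ≤ N := by exact_mod_cast hN
    nlinarith
  have hcont : ContinuousOn (fun t => F t x) (Icc 0 1) := by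
    have : ContinuousOn (fun t : ℝ => (t, x)) (Icc 0 1) := by fun_prop
    exact hF.comp this (fun t ht => ⟨ht, hx⟩)
  have hIcc : ∀ k ∈ Finset.range N, uIcc ((k:ℝ)/N) ((k+1:ℕ)/N) ⊆ Icc (0:ℝ) 1 := by
    intro k hk
    rw [Finset.mem_range] at hk
    have h1 : ((k+1:ℕ):ℝ) ≤ N := by exact_mod_cast hk
    rw [uIcc_of_le (by push_cast; gcongr; linarith)]
    apply Icc_subset_Icc
    · positivity
    · rw [div_le_one hNpos]; exact h1
  have hsum : (∫ t in (0:ℝ)..1, F t x) =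
      ∑ k ∈ Finset.range N, ∫ t in ((k:ℝ)/N)..((k+1:ℕ)/N), F t x := by
    have := intervalIntegral.sum_integral_adjacent_intervals (μ := MeasureTheory.volume)
      (f := fun t => F t x) (a := fun k : ℕ => (k:ℝ)/N) (n := N) ?_
    · rw [this]; simp [hNpos.ne']
    · intro k hk
      exact (hcont.mono (hIcc k (Finset.mem_range.2 hk))).intervalIntegrable
  rw [hsum, ← Finset.sum_sub_distrib]
  refine (norm_sum_le _ _).trans ?_
  have : ∀ k ∈ Finset.range N, ‖(∫ t in ((k:ℝ)/N)..((k+1:ℕ)/N), F t x)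
      - 1 / (N:ℂ) * F ((k:ℝ)/N) x‖ ≤ ε * (1/N) := by
    intro k hk
    have hlen : ((k+1:ℕ):ℝ)/N - (k:ℝ)/N = 1/N := by push_cast; ring
    have hc : 1 / (N:ℂ) * F ((k:ℝ)/N) x = ∫ t in ((k:ℝ)/N)..((k+1:ℕ)/N), F ((k:ℝ)/N) x := by
      rw [intervalIntegral.integral_const, hlen]; simp
    have hle : (k:ℝ)/N ≤ ((k+1:ℕ):ℝ)/N := by push_cast; gcongr; linarith
    rw [hc, ← intervalIntegral.integral_sub
      ((hcont.mono (hIcc k hk)).intervalIntegrable) (by simp)]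
    have := intervalIntegral.norm_integral_le_of_norm_le_const (a := (k:ℝ)/N)
      (b := ((k+1:ℕ):ℝ)/N) (C := ε) (f := fun t => F t x - F ((k:ℝ)/N) x) ?_
    · rw [hlen, abs_of_pos (by positivity)] at this
      exact this
    · intro t ht
      rw [uIoc_of_le hle] at ht
      have ht1 : t ∈ Icc (0:ℝ) 1 := hIcc k hk (by rw [uIcc_of_le hle]; exact ⟨ht.1.le, ht.2⟩)
      have ht2 : (k:ℝ)/N ∈ Icc (0:ℝ) 1 := hIcc k hk left_mem_uIcc
      have := h (t, x) ⟨ht1, hx⟩ ((k:ℝ)/N, x) ⟨ht2, hx⟩ (by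
        rw [Prod.dist_eq, dist_self, max_eq_left dist_nonneg, Real.dist_eq,
          abs_of_pos (by linarith [ht.1])]
        linarith [ht.2])
      rw [dist_eq_norm] at this
      exact this.le
  refine (Finset.sum_le_sum this).trans ?_
  rw [Finset.sum_const, Finset.card_range, nsmul_eq_mul]
  apply le_of_eq
  field_simp

theorem param_holo {V : Set ℂ} (hV : IsOpen V) (F : ℝ → ℂ → ℂ)
    (hF : ContinuousOn (fun p : ℝ × ℂ => F p.1 p.2) (Icc 0 1 ×ˢ V))
    (hd : ∀ t ∈ Icc (0:ℝ) 1, DifferentiableOn ℂ (F t) V) :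
    DifferentiableOn ℂ (fun z => ∫ t in (0:ℝ)..1, F t z) V := by
  have : TendstoLocallyUniformlyOn
      (fun (N : ℕ) z => ∑ k ∈ Finset.range N, (1 / (N:ℂ)) * F ((k:ℝ)/N) z)
      (fun z => ∫ t in (0:ℝ)..1, F t z) atTop V := by
    rw [tendstoLocallyUniformlyOn_iff_forall_isCompact hV]
    intro K hKV hK
    rw [Metric.tendstoUniformlyOn_iff]
    intro ε hε
    obtain ⟨N₀, h⟩ := riemann_sum_approx hK F (hF.mono (prod_mono_right hKV)) (half_pos hε)
    filter_upwards [eventually_ge_atTop N₀] with N hN x hx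
    rw [dist_eq_norm]
    linarith [h N hN x hx]
  refine this.differentiableOn (Eventually.of_forall fun N => ?_) hV
  refine DifferentiableOn.fun_sum fun k hk => ?_
  refine DifferentiableOn.const_mul (hd _ ?_) _
  rw [Finset.mem_range] at hk
  have : (k:ℝ) ≤ N := by exact_mod_cast hk.le
  exact ⟨by positivity, div_le_one_of_le₀ this (by positivity)⟩

theorem hurwitz_local {ι : Type*} {l : Filter ι} [NeBot l] {F : ι → ℂ → ℂ} {f : ℂ → ℂ} {a : ℂ}
    {ρ : ℝ} (hρ : 0 < ρ) (hF : ∀ᶠ i in l, DifferentiableOn ℂ (F i) (ball a ρ))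
    (hlim : TendstoLocallyUniformlyOn F f l (ball a ρ))
    (hne : ∀ᶠ i in l, ∀ z ∈ ball a ρ, F i z ≠ 0) (hfa : f a = 0) :
    ∀ᶠ z in nhds a, f z = 0 := by
  have hfd := hlim.differentiableOn hF isOpen_ball
  have han : AnalyticAt ℂ f a := hfd.analyticAt (isOpen_ball.mem_nhds (mem_ball_self hρ))
  rcases han.eventually_eq_zero_or_eventually_ne_zero with h | h
  · exact h
  exfalso
  rw [eventually_nhdsWithin_iff, Metric.eventually_nhds_iff] at h
  obtain ⟨s₀, hs₀, h⟩ := h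
  set s := min s₀ ρ / 2 with hs
  have hmin : 0 < min s₀ ρ := lt_min hs₀ hρ
  have hs0 : 0 < s := by positivity
  have hsρ : s < ρ := by have := min_le_right s₀ ρ; linarith
  have hss : s < s₀ := by have := min_le_left s₀ ρ; linarith
  have hsub : closedBall a s ⊆ ball a ρ := closedBall_subset_ball hsρ
  have hsne : (sphere a s).Nonempty := NormedSpace.sphere_nonempty.2 hs0.le
  obtain ⟨x₀, hx₀, hmn⟩ := (isCompact_sphere a s).exists_isMinOn hsne
    ((hfd.continuousOn.mono (sphere_subset_closedBall.trans hsub)).norm)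
  have hm0 : 0 < ‖f x₀‖ := by
    rw [norm_pos_iff]
    have hd : dist x₀ a = s := hx₀
    refine h (by rw [hd]; exact hss) ?_
    rintro rfl
    rw [dist_self] at hd
    linarith
  set m := ‖f x₀‖ with hm
  have hu := (tendstoLocallyUniformlyOn_iff_forall_isCompact isOpen_ball).1 hlim _ hsub
    (isCompact_closedBall a s)
  rw [Metric.tendstoUniformlyOn_iff] at hu
  obtain ⟨i, hi1, hi2, hi3⟩ := (hF.and (hne.and (hu (m/2) (half_pos hm0)))).exists
  have hb : ‖(F i a)⁻¹‖ ≤ (m/2)⁻¹ := by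
    refine Complex.norm_le_of_forall_mem_frontier_norm_le (f := fun z => (F i z)⁻¹) (U := ball a s)
      isBounded_ball ?_ ?_ (subset_closure (mem_ball_self hs0))
    · apply DifferentiableOn.diffContOnCl
      rw [closure_ball a hs0.ne']
      exact (hi1.mono hsub).inv (fun z hz => hi2 z (hsub hz))
    · intro z hz
      rw [frontier_ball a hs0.ne'] at hz
      have h1 : m ≤ ‖f z‖ := hmn hz
      have h2 := hi3 z (sphere_subset_closedBall hz)
      rw [dist_eq_norm] at h2
      have h3 : ‖f z‖ - ‖F i z‖ ≤ ‖f z - F i z‖ := norm_sub_norm_le _ _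
      rw [norm_inv]
      exact inv_anti₀ (half_pos hm0) (by linarith)
  have h2 := hi3 a (mem_closedBall_self hs0.le)
  rw [hfa, dist_zero_left] at h2
  rw [norm_inv] at hb
  have h3 : 0 < ‖F i a‖ := norm_pos_iff.2 (hi2 a (mem_ball_self hρ))
  have := (inv_le_inv₀ h3 (half_pos hm0)).1 hb
  linarith

theorem deriv_ne_zero_of_injOn' {U : Set ℂ} (hU : IsOpen U) {f : ℂ → ℂ}
    (hf : DifferentiableOn ℂ f U) (hinj : InjOn f U) {z : ℂ} (hz : z ∈ U) : deriv f z ≠ 0 := by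
  intro h0
  obtain ⟨ρ', hρ', hsub'⟩ := Metric.isOpen_iff.1 hU z hz
  set ρ := ρ' / 2 with hρd
  have hρ : 0 < ρ := by positivity
  have hadd : ∀ w ∈ ball z ρ, ∀ h : ℂ, ‖h‖ < ρ → w + h ∈ U := by
    intro w hw h hh
    apply hsub'
    rw [mem_ball, dist_eq_norm] at *
    calc ‖w + h - z‖ = ‖(w - z) + h‖ := by ring_nf
      _ ≤ ‖w - z‖ + ‖h‖ := norm_add_le _ _
      _ < ρ' := by linarith
  have hsub : ball z ρ ⊆ U := (ball_subset_ball (by linarith)).trans hsub'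
  have hsmall : ∀ᶠ h : ℂ in nhdsWithin 0 {0}ᶜ, ‖h‖ < ρ ∧ h ≠ 0 := by
    rw [eventually_nhdsWithin_iff, Metric.eventually_nhds_iff]
    exact ⟨ρ, hρ, fun h hh hne => ⟨by simpa using hh, hne⟩⟩
  have hev := hurwitz_local (l := nhdsWithin (0:ℂ) {0}ᶜ)
    (F := fun h w => (f (w + h) - f w) / h) (f := deriv f) (a := z) hρ ?_ ?_ ?_ h0
  · rw [Metric.eventually_nhds_iff] at hev
    obtain ⟨s, hs, hev⟩ := hev
    set r := min s ρ with hr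
    have hr0 : 0 < r := lt_min hs hρ
    have hx : z + (r/2 : ℝ) ∈ ball z r := by
      rw [mem_ball, dist_eq_norm, add_sub_cancel_left, Complex.norm_real, Real.norm_of_nonneg (by positivity)]
      linarith
    have hbs : ball z r ⊆ U := (ball_subset_ball (min_le_right _ _)).trans hsub
    have := IsOpen.is_const_of_deriv_eq_zero (isOpen_ball (x := z) (ε := r))
      (convex_ball z r).isPreconnected (hf.mono hbs)
      (fun w hw => hev (lt_of_lt_of_le hw (min_le_left _ _))) hx (mem_ball_self hr0)
    have := hinj (hbs hx) hz this
    have h3 : ((r/2:ℝ):ℂ) = 0 := by simpa using this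
    rw [Complex.ofReal_eq_zero] at h3
    linarith
  · filter_upwards [hsmall] with h ⟨hh, hne⟩
    refine DifferentiableOn.div_const (DifferentiableOn.sub ?_ (hf.mono hsub)) _
    exact hf.comp (by fun_prop) (fun w hw => hadd w hw h hh)
  · rw [Metric.tendstoLocallyUniformlyOn_iff]
    intro ε hε x hx
    have hxU := hU.mem_nhds (hsub hx)
    have hs : HasStrictDerivAt f (deriv f x) x := (hf.analyticAt hxU).hasStrictDerivAt
    have hcd : ContinuousAt (deriv f) x := (hf.deriv hU).continuousOn.continuousAt hxU
    rw [hasStrictDerivAt_iff_hasStrictFDerivAt, hasStrictFDerivAt_iff_isLittleO] at hs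
    have h1 := hs.def (c := ε/2) (half_pos hε)
    rw [Metric.eventually_nhds_iff] at h1
    obtain ⟨δ, hδ, h1⟩ := h1
    have h2 := Metric.continuousAt_iff.1 hcd (ε/2) (half_pos hε)
    obtain ⟨δ', hδ', h2⟩ := h2
    refine ⟨ball x (min (δ/2) δ'), mem_nhdsWithin_of_mem_nhds (ball_mem_nhds _ (by positivity)), ?_⟩
    rw [eventually_nhdsWithin_iff, Metric.eventually_nhds_iff]
    refine ⟨δ/2, by positivity, fun h hh hne y hy => ?_⟩
    have hne' : h ≠ 0 := hne
    have hy1 : dist y x < δ/2 := lt_of_lt_of_le hy (min_le_left _ _)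
    have hy2 : dist y x < δ' := lt_of_lt_of_le hy (min_le_right _ _)
    have hh' : ‖h‖ < δ/2 := by simpa using hh
    have h3 := @h1 (y + h, y) (by
      rw [Prod.dist_eq]
      apply max_lt
      · show dist (y+h) x < δ
        rw [dist_eq_norm] at *
        calc ‖y + h - x‖ = ‖(y - x) + h‖ := by ring_nf
          _ ≤ ‖y - x‖ + ‖h‖ := norm_add_le _ _
          _ < δ := by linarith
      · show dist y x < δ
        linarith)
    have h4 := h2 hy2
    simp only [add_sub_cancel_left, smul_eq_mul] at h3
    rw [dist_comm, dist_eq_norm]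
    have hpos : 0 < ‖h‖ := norm_pos_iff.2 hne'
    have h5 : ‖(f (y+h) - f y)/h - deriv f x‖ ≤ ε/2 := by
      have : (f (y+h) - f y)/h - deriv f x = (f (y+h) - f y - h * deriv f x)/h := by
        field_simp
      rw [this, norm_div, div_le_iff₀ hpos]
      exact h3
    rw [dist_comm, dist_eq_norm] at h4
    calc ‖(f (y+h) - f y)/h - deriv f y‖ = ‖((f (y+h) - f y)/h - deriv f x) + (deriv f x - deriv f y)‖ := by ring_nf
      _ ≤ _ := norm_add_le _ _
      _ < ε := by linarith
  · filter_upwards [hsmall] with h ⟨hh, hne⟩ w hw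
    rw [div_ne_zero_iff]
    refine ⟨fun h => ?_, hne⟩
    have := hinj (hadd w hw _ hh) (hsub hw) (sub_eq_zero.1 h)
    simp at this
    exact hne this


noncomputable def segI (b c : ℂ) (f : ℂ → ℂ) : ℂ := ∫ t in (0:ℝ)..1, f (b + t * (c - b)) * (c - b)

def sg (b c : ℂ) : Set ℂ := (fun t : ℝ => b + t * (c - b)) '' Icc 0 1

structure GoodF (T : Set ℂ) (M : (ℂ → ℂ) → ℂ) : Prop where
  cpt : IsCompact T
  add : ∀ f g : ℂ → ℂ, ContinuousOn f T → ContinuousOn g T → M (fun w => f w + g w) = M f + M g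
  smul : ∀ (c : ℂ) (f : ℂ → ℂ), M (fun w => c * f w) = c * M f
  congr : ∀ f g : ℂ → ℂ, EqOn f g T → M f = M g
  bound : ∃ C : ℝ, 0 ≤ C ∧ ∀ (f : ℂ → ℂ) (B : ℝ), (∀ w ∈ T, ‖f w‖ ≤ B) → 0 ≤ B → ‖M f‖ ≤ C * B
  holo : ∀ V : Set ℂ, IsOpen V → ∀ g : ℂ → ℂ → ℂ,
    ContinuousOn (fun p : ℂ × ℂ => g p.1 p.2) (T ×ˢ V) → (∀ w ∈ T, DifferentiableOn ℂ (g w) V) →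
    DifferentiableOn ℂ (fun z => M (fun w => g w z)) V

theorem sg_mem {b c : ℂ} {t : ℝ} (ht : t ∈ Icc (0:ℝ) 1) : b + t * (c - b) ∈ sg b c := ⟨t, ht, rfl⟩

theorem sg_mem' {b c : ℂ} {t : ℝ} (ht : t ∈ uIcc (0:ℝ) 1) : b + t * (c - b) ∈ sg b c := by
  rw [uIcc_of_le zero_le_one] at ht
  exact sg_mem ht

theorem sg_cont (b c : ℂ) {f : ℂ → ℂ} (hf : ContinuousOn f (sg b c)) :
    ContinuousOn (fun t : ℝ => f (b + t * (c - b)) * (c - b)) (uIcc 0 1) := by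
  have h : ContinuousOn (fun t : ℝ => b + (t:ℂ) * (c - b)) (uIcc 0 1) := by fun_prop
  have := hf.comp h (fun t ht => sg_mem' ht)
  exact this.mul continuousOn_const

theorem goodF_seg (b c : ℂ) : GoodF (sg b c) (segI b c) where
  cpt := isCompact_Icc.image (by fun_prop)
  add f g hf hg := by
    unfold segI
    rw [← intervalIntegral.integral_add (sg_cont b c hf).intervalIntegrable
      (sg_cont b c hg).intervalIntegrable]
    congr 1; ext t; ring
  smul k f := by
    unfold segI
    rw [← intervalIntegral.integral_const_mul]
    congr 1; ext t; ring
  congr f g h := by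
    unfold segI
    apply intervalIntegral.integral_congr
    intro t ht
    simp only [h (sg_mem' ht)]
  bound := by
    refine ⟨‖c - b‖, norm_nonneg _, fun f B hB hB0 => ?_⟩
    unfold segI
    have := intervalIntegral.norm_integral_le_of_norm_le_const (a := 0) (b := 1)
      (C := ‖c - b‖ * B) (f := fun t : ℝ => f (b + t * (c - b)) * (c - b)) ?_
    · simpa using this
    · intro t ht
      rw [uIoc_of_le zero_le_one] at ht
      rw [norm_mul, mul_comm]
      gcongr
      exact hB _ (sg_mem ⟨ht.1.le, ht.2⟩)
  holo V hV g hg hd := by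
    unfold segI
    refine param_holo hV (fun t z => g (b + t * (c - b)) z * (c - b)) ?_ ?_
    · have h : ContinuousOn (fun p : ℝ × ℂ => (b + (p.1:ℂ) * (c - b), p.2)) (Icc 0 1 ×ˢ V) := by
        fun_prop
      have := hg.comp h (fun p hp => ⟨sg_mem hp.1, hp.2⟩)
      exact this.mul continuousOn_const
    · intro t ht
      exact (hd _ (sg_mem ht)).mul_const _

theorem goodF_lin {T₁ T₂ : Set ℂ} {M₁ M₂ : (ℂ → ℂ) → ℂ} (h₁ : GoodF T₁ M₁) (h₂ : GoodF T₂ M₂)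
    (k : ℂ) : GoodF (T₁ ∪ T₂) (fun f => M₁ f + k * M₂ f) where
  cpt := h₁.cpt.union h₂.cpt
  add f g hf hg := by
    rw [h₁.add f g (hf.mono subset_union_left) (hg.mono subset_union_left),
      h₂.add f g (hf.mono subset_union_right) (hg.mono subset_union_right)]
    ring
  smul c f := by
    simp only [h₁.smul, h₂.smul]; ring
  congr f g h := by
    rw [h₁.congr f g (h.mono subset_union_left), h₂.congr f g (h.mono subset_union_right)]
  bound := by
    obtain ⟨C₁, hC₁, hb₁⟩ := h₁.bound
    obtain ⟨C₂, hC₂, hb₂⟩ := h₂.bound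
    refine ⟨C₁ + ‖k‖ * C₂, by positivity, fun f B hB hB0 => ?_⟩
    have e₁ := hb₁ f B (fun w hw => hB w (Or.inl hw)) hB0
    have e₂ := hb₂ f B (fun w hw => hB w (Or.inr hw)) hB0
    refine (norm_add_le _ _).trans ?_
    rw [norm_mul]
    have := mul_le_mul_of_nonneg_left e₂ (norm_nonneg k)
    nlinarith
  holo V hV g hg hd := by
    refine (h₁.holo V hV g (hg.mono (prod_mono_left subset_union_left))
      (fun w hw => hd w (Or.inl hw))).add ?_
    exact (h₂.holo V hV g (hg.mono (prod_mono_left subset_union_right))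
      (fun w hw => hd w (Or.inr hw))).const_mul k

theorem goodF_zero (a : ℂ) : GoodF {a} (fun _ => 0) where
  cpt := isCompact_singleton
  add := by simp
  smul := by simp
  congr := by simp
  bound := ⟨0, le_rfl, by simp⟩
  holo V hV g hg hd := differentiableOn_const _

inductive Chain (G : Set ℂ) : ℂ → ℂ → Set ℂ → ((ℂ → ℂ) → ℂ) → Prop
  | nil (a : ℂ) (ha : a ∈ G) : Chain G a a {a} (fun _ => 0)
  | cons {a b : ℂ} {T : Set ℂ} {M : (ℂ → ℂ) → ℂ} (c : ℂ) (h : Chain G a b T M) (hs : sg b c ⊆ G) :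
      Chain G a c (T ∪ sg b c) (fun f => M f + 1 * segI b c f)

theorem Chain.good {G : Set ℂ} {a b : ℂ} {T : Set ℂ} {M : (ℂ → ℂ) → ℂ} (h : Chain G a b T M) :
    GoodF T M := by
  induction h with
  | nil ha => exact goodF_zero a
  | cons c h hs ih => exact goodF_lin ih (goodF_seg _ _) 1

theorem Chain.sub {G : Set ℂ} {a b : ℂ} {T : Set ℂ} {M : (ℂ → ℂ) → ℂ} (h : Chain G a b T M) :
    T ⊆ G := by
  induction h with
  | nil ha => simpa using ha
  | cons c h hs ih => exact union_subset ih hs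

theorem left_mem_sg (b c : ℂ) : b ∈ sg b c := ⟨0, by simp, by simp⟩
theorem right_mem_sg (b c : ℂ) : c ∈ sg b c := ⟨1, by simp, by simp⟩

theorem Chain.mem {G : Set ℂ} {a b : ℂ} {T : Set ℂ} {M : (ℂ → ℂ) → ℂ} (h : Chain G a b T M) :
    a ∈ T ∧ b ∈ T := by
  induction h with
  | nil ha => simp
  | cons c h hs ih => exact ⟨Or.inl ih.1, Or.inr (right_mem_sg _ _)⟩

theorem segI_of_hasDerivAt {b c : ℂ} {f P : ℂ → ℂ} (hf : ContinuousOn f (sg b c))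
    (hP : ∀ w ∈ sg b c, HasDerivAt P (f w) w) : segI b c f = P c - P b := by
  unfold segI
  have := intervalIntegral.integral_eq_sub_of_hasDerivAt (a := 0) (b := 1)
    (f := fun t : ℝ => P (b + t * (c - b))) (f' := fun t : ℝ => f (b + t * (c - b)) * (c - b)) ?_
    (sg_cont b c hf).intervalIntegrable
  · rw [this]; simp
  · intro t ht
    have h1 := hP _ (sg_mem' (b := b) (c := c) ht)
    have h2 : HasDerivAt (fun t : ℝ => b + (t:ℂ) * (c - b)) (c - b) t := by
      have := ((Complex.ofRealCLM.hasDerivAt (x := t)).mul_const (c - b)).const_add b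
      simpa using this
    exact h1.comp t h2

theorem segI_exp {b c z : ℂ} (hz : z ∉ sg b c) :
    Complex.exp (segI b c (fun w => 1 / (w - z))) = (c - z) / (b - z) := by
  have hne : ∀ w ∈ sg b c, w - z ≠ 0 := fun w hw h => hz (by rw [← sub_eq_zero.1 h]; exact hw)
  have hb := hne b (left_mem_sg _ _)
  have hc := hne c (right_mem_sg _ _)
  have hsl : ∀ w ∈ sg b c, (w - z) / (b - z) ∈ Complex.slitPlane := by
    rintro w ⟨t, ht, rfl⟩
    rw [Complex.mem_slitPlane_iff]
    by_contra hcon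
    push Not at hcon
    obtain ⟨h1, h2⟩ := hcon
    set k := (c - b) / (b - z) with hk
    have he : (b + t * (c - b) - z) / (b - z) = 1 + t * k := by rw [hk]; field_simp; ring
    simp only [he] at h1 h2
    simp at h1 h2
    have ht0 : t ≠ 0 := by rintro rfl; norm_num at h1
    have htpos : 0 < t := lt_of_le_of_ne ht.1 (Ne.symm ht0)
    have hkim : k.im = 0 := by
      rcases h2 with h2 | h2
      · exact absurd h2 ht0
      · exact h2
    have hkre : k.re < 0 := by nlinarith
    have hkre' : k.re ≤ -1 := by nlinarith [ht.2]
    -- parameter s = -1/k.re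
    have hs : (-1 / k.re) ∈ Icc (0:ℝ) 1 := by
      constructor
      · exact div_nonneg_of_nonpos (by norm_num) hkre.le
      · rw [div_le_one_of_neg hkre]; exact hkre'
    apply hne _ (sg_mem (b := b) (c := c) hs)
    have hkk : k = (k.re : ℂ) := by
      apply Complex.ext <;> simp [hkim]
    have hcb : c - b = k * (b - z) := by rw [hk]; field_simp
    have hk0 : (k.re : ℂ) ≠ 0 := by exact_mod_cast hkre.ne
    have e1 : ((-1 / k.re : ℝ) : ℂ) * k = -1 := by
      rw [Complex.ofReal_div]
      nth_rewrite 2 [hkk]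
      field_simp
      simp
    rw [hcb, ← mul_assoc, e1]
    ring
  have h := segI_of_hasDerivAt (b := b) (c := c) (f := fun w => 1 / (w - z))
    (P := fun w => Complex.log ((w - z) / (b - z))) ?_ ?_
  · rw [h, div_self hb, Complex.log_one, sub_zero, Complex.exp_log (div_ne_zero hc hb)]
  · exact continuousOn_const.div (by fun_prop) hne
  · intro w hw
    have h1 : HasDerivAt (fun w => (w - z) / (b - z)) (1 / (b - z)) w :=
      ((hasDerivAt_id w).sub_const z).div_const _
    have h2 := h1.clog (hsl w hw)
    convert h2 using 1
    have := hne w hw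
    field_simp

theorem Chain.exp_eq {G : Set ℂ} {a b : ℂ} {T : Set ℂ} {M : (ℂ → ℂ) → ℂ} (h : Chain G a b T M) :
    ∀ z ∉ T, Complex.exp (M (fun w => 1 / (w - z))) = (b - z) / (a - z) := by
  induction h with
  | nil ha =>
    intro z hz
    have : a - z ≠ 0 := fun h => hz (by simp [sub_eq_zero.1 h])
    simp [this]
  | @cons b T M c h' hs ih =>
    intro z hz
    have h1 : z ∉ T := fun h => hz (Or.inl h)
    have h2 : z ∉ sg _ _ := fun h => hz (Or.inr h)
    have h3 := h'.mem.2
    change Complex.exp (M (fun w => 1 / (w - z)) + 1 * segI b c (fun w => 1 / (w - z))) = _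
    rw [one_mul, Complex.exp_add, ih z h1, segI_exp h2]
    have : b - z ≠ 0 := fun h => h1 (by rw [← sub_eq_zero.1 h]; exact h3)
    field_simp


theorem dslope_cont {G : Set ℂ} (hG : IsOpen G) {f : ℂ → ℂ} (hf : DifferentiableOn ℂ f G) :
    ContinuousOn (fun p : ℂ × ℂ => dslope f p.1 p.2) (G ×ˢ G) := by
  rintro ⟨a, b⟩ ⟨ha, hb⟩
  simp only at ha hb
  apply ContinuousAt.continuousWithinAt
  by_cases hab : a = b
  · subst hab
    have haU := hG.mem_nhds ha
    have hs : HasStrictDerivAt f (deriv f a) a := (hf.analyticAt haU).hasStrictDerivAt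
    have hcd : ContinuousAt (deriv f) a := (hf.deriv hG).continuousOn.continuousAt haU
    rw [hasStrictDerivAt_iff_hasStrictFDerivAt, hasStrictFDerivAt_iff_isLittleO] at hs
    rw [Metric.continuousAt_iff]
    intro ε hε
    have h1 := hs.def (c := ε/2) (half_pos hε)
    rw [Metric.eventually_nhds_iff] at h1
    obtain ⟨δ, hδ, h1⟩ := h1
    obtain ⟨δ', hδ', h2⟩ := Metric.continuousAt_iff.1 hcd ε hε
    refine ⟨min δ δ', lt_min hδ hδ', ?_⟩
    rintro ⟨w, z⟩ hp
    simp only [dslope_same]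
    by_cases hwz : w = z
    · subst hwz
      rw [dslope_same]
      apply h2
      rw [Prod.dist_eq] at hp
      exact lt_of_le_of_lt (le_max_left _ _) (hp.trans_le (min_le_right _ _))
    · rw [dslope_of_ne _ (Ne.symm hwz), slope_def_field]
      have h3 := @h1 (z, w) (by
        rw [Prod.dist_eq] at hp ⊢
        rw [max_comm]
        exact hp.trans_le (min_le_left _ _))
      have hne : z - w ≠ 0 := sub_ne_zero.2 (Ne.symm hwz)
      have hpos : 0 < ‖z - w‖ := norm_pos_iff.2 hne
      have h4 : ‖f z - f w - (z - w) * deriv f a‖ ≤ ε/2 * ‖z - w‖ := h3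
      rw [dist_eq_norm]
      have : (f z - f w)/(z - w) - deriv f a = (f z - f w - (z - w) * deriv f a)/(z - w) := by
        field_simp
      rw [this, norm_div, div_lt_iff₀ hpos]
      nlinarith
  · have h1 : ContinuousAt (fun p : ℂ × ℂ => (f p.2 - f p.1) / (p.2 - p.1)) (a, b) := by
      have hfa : ContinuousAt f a := (hf.continuousOn).continuousAt (hG.mem_nhds ha)
      have hfb : ContinuousAt f b := (hf.continuousOn).continuousAt (hG.mem_nhds hb)
      have e1 : ContinuousAt (fun p : ℂ × ℂ => f p.1) (a, b) :=
        ContinuousAt.comp (f := Prod.fst) (g := f) hfa continuousAt_fst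
      have e2 : ContinuousAt (fun p : ℂ × ℂ => f p.2) (a, b) :=
        ContinuousAt.comp (f := Prod.snd) (g := f) hfb continuousAt_snd
      exact (e2.sub e1).div (by fun_prop) (sub_ne_zero.2 (Ne.symm hab))
    refine h1.congr ?_
    have : ∀ᶠ p : ℂ × ℂ in nhds (a, b), p.1 ≠ p.2 := by
      have : IsOpen {p : ℂ × ℂ | p.1 ≠ p.2} := isOpen_ne_fun continuous_fst continuous_snd
      exact this.mem_nhds hab
    filter_upwards [this] with p hp
    rw [dslope_of_ne _ (Ne.symm hp), slope_def_field]

theorem exp_one_small {x : ℂ} (h : Complex.exp x = 1) (hx : ‖x‖ < 1) : x = 0 := by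
  rw [Complex.exp_eq_one_iff] at h
  obtain ⟨n, hn⟩ := h
  by_cases h0 : n = 0
  · simp [hn, h0]
  exfalso
  have h1 : (1:ℝ) ≤ |(n:ℝ)| := by exact_mod_cast Int.one_le_abs h0
  rw [hn] at hx
  simp [abs_of_pos Real.pi_pos] at hx
  nlinarith [Real.pi_gt_three]

theorem dixon {G : Set ℂ} (hG : IsOpen G) (hGne : G.Nonempty) (hsc : HasNoHole G) {T : Set ℂ}
    {M : (ℂ → ℂ) → ℂ} (hM : GoodF T M) (hTG : T ⊆ G)
    (hexp : ∀ z ∉ T, Complex.exp (M (fun w => 1 / (w - z))) = 1) {f : ℂ → ℂ}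
    (hf : DifferentiableOn ℂ f G) : M f = 0 := by
  obtain ⟨C, hC, hbd⟩ := hM.bound
  obtain ⟨R, hR⟩ := hM.cpt.isBounded.exists_norm_le
  have hTo : IsOpen Tᶜ := hM.cpt.isClosed.isOpen_compl
  have hne : ∀ w ∈ T, ∀ z ∈ Tᶜ, w - z ≠ 0 := fun w hw z hz h => hz (by rw [← sub_eq_zero.1 h]; exact hw)
  have hcauchy : ∀ F : ℂ → ℂ, ContinuousOn F T →
      DifferentiableOn ℂ (fun z => M (fun w => F w / (w - z))) Tᶜ := by
    intro F hF
    refine hM.holo Tᶜ hTo (fun w z => F w / (w - z)) ?_ ?_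
    · refine ContinuousOn.div ?_ (by fun_prop) (fun p hp => hne _ hp.1 _ hp.2)
      exact hF.comp continuousOn_fst (fun p hp => hp.1)
    · intro w hw
      refine DifferentiableOn.div (by fun_prop) (by fun_prop) (fun z hz => hne w hw z hz)
  set n : ℂ → ℂ := fun z => M (fun w => 1 / (w - z)) with hn
  have hnc : ContinuousOn n Tᶜ := (hcauchy (fun _ => 1) continuousOn_const).continuousOn
  set V0 : Set ℂ := {z | z ∈ Tᶜ ∧ n z = 0} with hV0
  have hV0' : V0 = Tᶜ ∩ n ⁻¹' (ball 0 1) := by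
    ext z
    constructor
    · rintro ⟨h1, h2⟩
      exact ⟨h1, by simp [h2]⟩
    · rintro ⟨h1, h2⟩
      exact ⟨h1, exp_one_small (hexp z h1) (by simpa using h2)⟩
  have hV0o : IsOpen V0 := by
    rw [hV0']; exact hnc.isOpen_inter_preimage hTo isOpen_ball
  have hV1o : IsOpen (Tᶜ ∩ n ⁻¹' {0}ᶜ) := hnc.isOpen_inter_preimage hTo isOpen_compl_singleton
  -- lower bound far away
  have hfar : ∀ z : ℂ, R < ‖z‖ → z ∈ Tᶜ ∧ ∀ w ∈ T, ‖z‖ - R ≤ ‖w - z‖ := by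
    intro z hz
    refine ⟨fun h => absurd (hR z h) (not_le.2 hz), fun w hw => ?_⟩
    have := norm_sub_norm_le z w
    rw [norm_sub_rev] at this
    linarith [hR w hw]
  have hfar0 : ∀ z : ℂ, R + C + 1 ≤ ‖z‖ → z ∈ V0 := by
    intro z hz
    have hz' : R < ‖z‖ := by linarith
    obtain ⟨h1, h2⟩ := hfar z hz'
    refine ⟨h1, exp_one_small (hexp z h1) ?_⟩
    have := hbd (fun w => 1 / (w - z)) (1 / (C + 1)) (fun w hw => by
      rw [norm_div, norm_one]
      exact one_div_le_one_div_of_le (by linarith) (by linarith [h2 w hw])) (by positivity)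
    refine lt_of_le_of_lt this ?_
    rw [mul_one_div, div_lt_one (by linarith)]
    linarith
  have hGc : Gᶜ ⊆ V0 := by
    intro z hz
    have hunb : ¬ Bornology.IsBounded (connectedComponentIn Gᶜ z) := fun hb =>
      hsc ⟨_, ⟨z, hz, rfl⟩, hb⟩
    have hsubT : connectedComponentIn Gᶜ z ⊆ Tᶜ :=
      (connectedComponentIn_subset _ _).trans (compl_subset_compl.2 hTG)
    have : ∃ y ∈ connectedComponentIn Gᶜ z, R + C + 1 ≤ ‖y‖ := by
      by_contra hcon
      push Not at hcon
      apply hunb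
      rw [isBounded_iff_forall_norm_le]
      exact ⟨R + C + 1, fun y hy => (hcon y hy).le⟩
    obtain ⟨y, hy, hyn⟩ := this
    refine isPreconnected_connectedComponentIn.subset_left_of_subset_union hV0o hV1o ?_ ?_
      ⟨y, hy, hfar0 y hyn⟩ (mem_connectedComponentIn hz)
    · rw [Set.disjoint_left]
      rintro x ⟨_, hx⟩ ⟨_, hx'⟩
      exact hx' hx
    · intro x hx
      by_cases h0 : n x = 0
      · exact Or.inl ⟨hsubT hx, h0⟩
      · exact Or.inr ⟨hsubT hx, h0⟩
  -- key: for all holomorphic F, M (dslope F · z) = 0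
  have key : ∀ F : ℂ → ℂ, DifferentiableOn ℂ F G → ∀ z ∈ G, M (fun w => dslope F w z) = 0 := by
    intro F hF
    classical
    set H1 : ℂ → ℂ := fun z => M (fun w => dslope F w z) with hH1
    set H2 : ℂ → ℂ := fun z => M (fun w => F w / (w - z)) with hH2
    have hFT : ContinuousOn F T := hF.continuousOn.mono hTG
    have hH1d : DifferentiableOn ℂ H1 G := by
      refine hM.holo G hG (fun w z => dslope F w z) ?_ ?_
      · exact (dslope_cont hG hF).mono (prod_mono_left hTG)
      · intro w hw
        exact (Complex.differentiableOn_dslope (hG.mem_nhds (hTG hw))).2 hF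
    have hH2d : DifferentiableOn ℂ H2 Tᶜ := hcauchy F hFT
    have hH12 : ∀ z ∈ V0, z ∈ G → H1 z = H2 z := by
      intro z hz hzG
      have e1 : H1 z = M (fun w => F w / (w - z) + (-F z) * (1 / (w - z))) := by
        refine hM.congr _ _ (fun w hw => ?_)
        have hwz := hne w hw z hz.1
        rw [dslope_of_ne _ (fun h => hwz (by rw [h, sub_self])), slope_def_field]
        have : z - w ≠ 0 := fun h => hwz (by rw [← neg_sub, h, neg_zero])
        field_simp
        ring
      have hc : ContinuousOn (fun w : ℂ => 1 / (w - z)) T :=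
        continuousOn_const.div (by fun_prop) (fun w hw => hne w hw z hz.1)
      rw [e1, hM.add (fun w => F w / (w - z)) (fun w => (-F z) * (1 / (w - z))), hM.smul]
      · have : M (fun w => 1 / (w - z)) = 0 := hz.2
        rw [this]; simp [hH2]
      · exact hFT.div (by fun_prop) (fun w hw => hne w hw z hz.1)
      · exact continuousOn_const.mul hc
    set H : ℂ → ℂ := fun z => if z ∈ G then H1 z else H2 z with hH
    have hHV : ∀ z ∈ V0, H z = H2 z := by
      intro z hz
      by_cases hzG : z ∈ G
      · simp only [hH, hzG, if_true]; exact hH12 z hz hzG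
      · simp only [hH, hzG, if_false]
    have hHd : Differentiable ℂ H := by
      intro z
      by_cases hzG : z ∈ G
      · refine (hH1d.differentiableAt (hG.mem_nhds hzG)).congr_of_eventuallyEq ?_
        filter_upwards [hG.mem_nhds hzG] with y hy
        simp only [hH, hy, if_true]
      · have hz0 : z ∈ V0 := hGc hzG
        refine (hH2d.differentiableAt (hTo.mem_nhds hz0.1)).congr_of_eventuallyEq ?_
        filter_upwards [hV0o.mem_nhds hz0] with y hy
        exact hHV y hy
    obtain ⟨B, hB⟩ := hM.cpt.exists_bound_of_continuousOn hFT
    have hlim : Tendsto H (cocompact ℂ) (nhds 0) := by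
      have hnorm : Tendsto (fun z : ℂ => ‖z‖) (cocompact ℂ) atTop := tendsto_norm_cocompact_atTop
      have ht : Tendsto (fun z : ℂ => C * (|B| / (‖z‖ - R))) (cocompact ℂ) (nhds 0) := by
        have h1 : Tendsto (fun z : ℂ => ‖z‖ - R) (cocompact ℂ) atTop :=
          tendsto_atTop_add_const_right _ (-R) hnorm
        have h2 := (tendsto_const_nhds (x := |B|)).div_atTop h1
        simpa using h2.const_mul C
      refine squeeze_zero_norm' ?_ ht
      filter_upwards [hnorm.eventually_ge_atTop (R + C + 1)] with z hz
      rw [hHV z (hfar0 z hz)]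
      have hz' : R < ‖z‖ := by linarith
      obtain ⟨h1, h2⟩ := hfar z hz'
      have hp : 0 < ‖z‖ - R := by linarith
      refine hbd _ _ (fun w hw => ?_) (by positivity)
      rw [norm_div]
      exact div_le_div₀ (abs_nonneg _) ((hB w hw).trans (le_abs_self _)) hp (h2 w hw)
    intro z hz
    have h0 := hHd.apply_eq_of_tendsto_cocompact z hlim
    simpa only [hH, hz, if_true] using h0
  -- find a point in G \ T
  have hex : ∃ z₀ ∈ G, z₀ ∉ T := by
    by_contra hcon
    push Not at hcon
    have hTe : T = G := Subset.antisymm hTG hcon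
    have hcl : IsClopen G := ⟨hTe ▸ hM.cpt.isClosed, hG⟩
    rcases isClopen_iff.1 hcl with h | h
    · exact hGne.ne_empty h
    · rw [h] at hTe
      exact noncompact_univ ℂ (hTe ▸ hM.cpt)
  obtain ⟨z₀, hz₀, hz₀T⟩ := hex
  have := key (fun w => f w * (w - z₀)) (hf.mul (by fun_prop)) z₀ hz₀
  rw [← this]
  refine hM.congr _ _ (fun w hw => ?_)
  have hwz := hne w hw z₀ hz₀T
  rw [dslope_of_ne _ (fun h => hwz (by rw [h, sub_self])), slope_def_field]
  have : z₀ - w ≠ 0 := fun h => hwz (by rw [← neg_sub, h, neg_zero])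
  field_simp
  ring

theorem exists_chain {G : Set ℂ} (hG : IsOpen G) (hGc : IsPreconnected G) {a : ℂ} (ha : a ∈ G) :
    ∀ b ∈ G, ∃ T M, Chain G a b T M := by
  have hball : ∀ b r, ball b r ⊆ G → ∀ c ∈ ball b r, sg b c ⊆ G ∧ sg c b ⊆ G := by
    intro b r hb c hc
    have hr : 0 < r := lt_of_le_of_lt dist_nonneg hc
    have hbb := mem_ball_self (x := b) hr
    have : ∀ x ∈ ball b r, ∀ y ∈ ball b r, sg x y ⊆ G := by
      rintro x hx y hy _ ⟨t, ht, rfl⟩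
      apply hb
      have := (convex_ball b r).add_smul_sub_mem hx hy ht
      simpa using this
    exact ⟨this b hbb c hc, this c hc b hbb⟩
  set U : Set ℂ := {b | b ∈ G ∧ ∃ T M, Chain G a b T M} with hU
  set V : Set ℂ := {b | b ∈ G ∧ ¬ ∃ T M, Chain G a b T M} with hV
  have hUo : IsOpen U := by
    rw [Metric.isOpen_iff]
    rintro b ⟨hb, T, M, hch⟩
    obtain ⟨r, hr, hsub⟩ := Metric.isOpen_iff.1 hG b hb
    exact ⟨r, hr, fun c hc => ⟨hsub hc, _, _, Chain.cons c hch (hball b r hsub c hc).1⟩⟩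
  have hVo : IsOpen V := by
    rw [Metric.isOpen_iff]
    rintro b ⟨hb, hno⟩
    obtain ⟨r, hr, hsub⟩ := Metric.isOpen_iff.1 hG b hb
    refine ⟨r, hr, fun c hc => ⟨hsub hc, ?_⟩⟩
    rintro ⟨T, M, hch⟩
    exact hno ⟨_, _, Chain.cons b hch (hball b r hsub c hc).2⟩
  have := hGc.subset_left_of_subset_union hUo hVo (by
      rw [Set.disjoint_left]; rintro x ⟨_, hx⟩ ⟨_, hx'⟩; exact hx' hx)
    (fun x hx => by
      by_cases h : ∃ T M, Chain G a x T M
      · exact Or.inl ⟨hx, h⟩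
      · exact Or.inr ⟨hx, h⟩) ⟨a, ha, ha, _, _, Chain.nil a ha⟩
  exact fun b hb => (this hb).2

theorem exists_primitive {G : Set ℂ} (hG : IsOpen G) (hGc : IsConnected G) (hsc : HasNoHole G)
    {f : ℂ → ℂ} (hf : DifferentiableOn ℂ f G) : ∃ F : ℂ → ℂ, ∀ z ∈ G, HasDerivAt F (f z) z := by
  obtain ⟨a, ha⟩ := hGc.nonempty
  have hch := exists_chain hG hGc.isPreconnected ha
  choose! T M hTM using hch
  have hclosed : ∀ b T₁ M₁ T₂ M₂, Chain G a b T₁ M₁ → Chain G a b T₂ M₂ → M₁ f = M₂ f := by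
    intro b T₁ M₁ T₂ M₂ h₁ h₂
    have := dixon hG hGc.nonempty hsc (goodF_lin h₁.good h₂.good (-1)) (union_subset h₁.sub h₂.sub)
      (fun z hz => by
        have e1 : z ∉ T₁ := fun h => hz (Or.inl h)
        have e2 : z ∉ T₂ := fun h => hz (Or.inr h)
        have n1 : a - z ≠ 0 := fun h => e1 (by rw [← sub_eq_zero.1 h]; exact h₁.mem.1)
        have n2 : b - z ≠ 0 := fun h => e1 (by rw [← sub_eq_zero.1 h]; exact h₁.mem.2)
        rw [neg_one_mul, Complex.exp_add, Complex.exp_neg, h₁.exp_eq z e1, h₂.exp_eq z e2]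
        field_simp) hf
    linear_combination this
  refine ⟨fun z => M z f, fun z hz => ?_⟩
  obtain ⟨r, hr, hsub⟩ := Metric.isOpen_iff.1 hG z hz
  obtain ⟨P, hP⟩ := (convex_ball z r).exists_forall_hasDerivWithinAt (hf.mono hsub)
  have hP' : ∀ w ∈ ball z r, HasDerivAt P (f w) w := fun w hw =>
    (hP w hw).hasDerivAt (isOpen_ball.mem_nhds hw)
  have hz' := mem_ball_self (x := z) hr
  have heq : ∀ w ∈ ball z r, M w f = P w + (M z f - P z) := by
    intro w hw
    have hsg : sg z w ⊆ ball z r := by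
      rintro _ ⟨t, ht, rfl⟩
      have := (convex_ball z r).add_smul_sub_mem hz' hw ht
      simpa using this
    have h1 := hclosed w _ _ _ _ (hTM w (hsub hw)) (Chain.cons w (hTM z hz) (hsg.trans hsub))
    rw [h1, segI_of_hasDerivAt (P := P) (hf.continuousOn.mono (hsg.trans hsub))
      (fun x hx => hP' x (hsg hx))]
    ring
  refine ((hP' z hz').add_const (M z f - P z)).congr_of_eventuallyEq ?_
  filter_upwards [isOpen_ball.mem_nhds hz'] with w hw
  exact heq w hw

theorem exists_sqrt {G : Set ℂ} (hG : IsOpen G) (hGc : IsConnected G) (hsc : HasNoHole G)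
    {f : ℂ → ℂ} (hf : DifferentiableOn ℂ f G) (hne : ∀ z ∈ G, f z ≠ 0) :
    ∃ s : ℂ → ℂ, DifferentiableOn ℂ s G ∧ ∀ z ∈ G, s z ^ 2 = f z := by
  obtain ⟨F, hF⟩ := exists_primitive hG hGc hsc ((hf.deriv hG).div hf hne)
  obtain ⟨a, ha⟩ := hGc.nonempty
  have hFd : DifferentiableOn ℂ F G := fun z hz => (hF z hz).differentiableAt.differentiableWithinAt
  have hconst : ∀ z ∈ G, f z * Complex.exp (-F z) = f a * Complex.exp (-F a) := by
    intro z hz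
    refine hG.is_const_of_deriv_eq_zero hGc.isPreconnected
      (f := fun z => f z * Complex.exp (-F z)) ?_ ?_ hz ha
    · exact hf.mul hFd.neg.cexp
    · intro w hw
      have h1 : HasDerivAt f (deriv f w) w := (hf.differentiableAt (hG.mem_nhds hw)).hasDerivAt
      have h2 := h1.mul (hF w hw).neg.cexp
      have h3 := h2.deriv
      have h4 := hne w hw
      change deriv (f * fun x => Complex.exp ((-F) x)) w = 0
      rw [h3]
      simp only [Pi.div_apply, Pi.zero_apply, Pi.neg_apply]
      field_simp
      ring
  obtain ⟨k, hk⟩ := IsAlgClosed.exists_pow_nat_eq (f a * Complex.exp (-F a)) (n := 2) (by norm_num)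
  refine ⟨fun z => k * Complex.exp (F z / 2), (hFd.div_const 2).cexp.const_mul k, fun z hz => ?_⟩
  rw [mul_pow, hk, ← hconst z hz, ← Complex.exp_nat_mul, mul_assoc, ← Complex.exp_add]
  simp [mul_div_cancel₀]


noncomputable def mob (b w : ℂ) : ℂ := (w - b) / (1 - (starRingEnd ℂ) b * w)

theorem mob_sq_ident (b w : ℂ) : ‖1 - (starRingEnd ℂ) b * w‖ ^ 2 - ‖w - b‖ ^ 2
    = (1 - ‖b‖ ^ 2) * (1 - ‖w‖ ^ 2) := by
  simp only [Complex.sq_norm, Complex.normSq_apply, Complex.sub_re, Complex.sub_im,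
    Complex.mul_re, Complex.mul_im, Complex.conj_re, Complex.conj_im, Complex.one_re,
    Complex.one_im]
  ring

theorem mob_lt {b w : ℂ} (hb : ‖b‖ < 1) (hw : ‖w‖ < 1) :
    ‖w - b‖ < ‖1 - (starRingEnd ℂ) b * w‖ := by
  have h := mob_sq_ident b w
  have h1 : 0 < 1 - ‖b‖ ^ 2 := by nlinarith [norm_nonneg b]
  have h2 : 0 < 1 - ‖w‖ ^ 2 := by nlinarith [norm_nonneg w]
  have h3 := mul_pos h1 h2
  exact lt_of_pow_lt_pow_left₀ 2 (norm_nonneg _) (by linarith)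

theorem mob_den_ne {b w : ℂ} (hb : ‖b‖ < 1) (hw : ‖w‖ < 1) :
    1 - (starRingEnd ℂ) b * w ≠ 0 := by
  intro h
  have := mob_lt hb hw
  rw [h, norm_zero] at this
  exact absurd this (not_lt.2 (norm_nonneg _))

theorem mob_norm {b w : ℂ} (hb : ‖b‖ < 1) (hw : ‖w‖ < 1) : ‖mob b w‖ < 1 := by
  rw [mob, norm_div, div_lt_one (norm_pos_iff.2 (mob_den_ne hb hw))]
  exact mob_lt hb hw

theorem mob_inj {b w v : ℂ} (hb : ‖b‖ < 1) (hw : ‖w‖ < 1) (hv : ‖v‖ < 1)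
    (h : mob b w = mob b v) : w = v := by
  have h1 := mob_den_ne hb hw
  have h2 := mob_den_ne hb hv
  rw [mob, mob, div_eq_div_iff h1 h2] at h
  have hbb : (1 - (starRingEnd ℂ) b * b) ≠ 0 := mob_den_ne hb hb
  have : (w - v) * (1 - (starRingEnd ℂ) b * b) = 0 := by linear_combination h
  rcases mul_eq_zero.1 this with h | h
  · exact sub_eq_zero.1 h
  · exact absurd h hbb

theorem mob_hasDerivAt {b w : ℂ} (hb : ‖b‖ < 1) (hw : ‖w‖ < 1) :
    HasDerivAt (mob b) ((1 - (starRingEnd ℂ) b * b) / (1 - (starRingEnd ℂ) b * w) ^ 2) w := by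
  have h1 := mob_den_ne hb hw
  have hn : HasDerivAt (fun w : ℂ => w - b) 1 w := (hasDerivAt_id w).sub_const b
  have hd : HasDerivAt (fun w : ℂ => 1 - (starRingEnd ℂ) b * w) (-((starRingEnd ℂ) b * 1)) w :=
    ((hasDerivAt_id w).const_mul _).const_sub 1
  have := hn.div hd h1
  refine this.congr_deriv ?_
  congr 1
  ring

def RFam (G : Set ℂ) (z₀ : ℂ) (f : ℂ → ℂ) : Prop :=
  DifferentiableOn ℂ f G ∧ InjOn f G ∧ MapsTo f G (ball 0 1) ∧ f z₀ = 0

theorem rfam_nonempty {G : Set ℂ} (hG : IsOpen G) (hGc : IsConnected G) (hsc : HasNoHole G)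
    (hne : G ≠ univ) {z₀ : ℂ} (hz₀ : z₀ ∈ G) : ∃ f, RFam G z₀ f := by
  obtain ⟨a, ha⟩ := (ne_univ_iff_exists_notMem G).1 hne
  obtain ⟨s, hs, hsq⟩ := exists_sqrt hG hGc hsc (f := fun z => z - a) (by fun_prop)
    (fun z hz h => ha (by rwa [sub_eq_zero.1 h] at hz))
  have hinj : InjOn s G := fun x hx y hy h => by
    have h1 := hsq x hx
    have h2 := hsq y hy
    rw [h, h2] at h1
    simpa using h1.symm
  have hsz : s z₀ ≠ 0 := fun h => by
    have := hsq z₀ hz₀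
    rw [h] at this
    apply ha
    have : z₀ = a := by
      have : z₀ - a = 0 := by rw [← this]; ring
      exact sub_eq_zero.1 this
    rwa [← this]
  have hd := deriv_ne_zero_of_injOn' hG hs hinj hz₀
  have hsd : HasStrictDerivAt s (deriv s z₀) z₀ :=
    (hs.analyticAt (hG.mem_nhds hz₀)).hasStrictDerivAt
  have himg : s '' G ∈ nhds (s z₀) := by
    rw [← hsd.map_nhds_eq hd]
    exact image_mem_map (hG.mem_nhds hz₀)
  obtain ⟨ρ, hρ, hρs⟩ := Metric.mem_nhds_iff.1 himg
  have hfar : ∀ z ∈ G, ρ ≤ ‖s z + s z₀‖ := by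
    intro z hz
    by_contra hlt
    have : - s z ∈ ball (s z₀) ρ := by
      rw [mem_ball, dist_eq_norm, ← norm_neg]
      have : -(-s z - s z₀) = s z + s z₀ := by ring
      rw [this]; exact not_le.1 hlt
    obtain ⟨w, hw, hww⟩ := hρs this
    have h1 := hsq w hw
    have h2 := hsq z hz
    have : z = w := by
      have : z - a = w - a := by rw [← h1, ← h2, hww]; ring
      simpa using this
    subst this
    have h0 : s z = 0 := by linear_combination hww / 2
    rw [h0] at h2
    apply ha
    have : z = a := sub_eq_zero.1 (by rw [← h2]; ring)
    rwa [← this]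
  have hnz : ∀ z ∈ G, s z + s z₀ ≠ 0 := fun z hz h => by
    have := hfar z hz
    rw [h, norm_zero] at this
    linarith
  have hub : ∀ z ∈ G, ‖(ρ : ℂ) / (s z + s z₀)‖ ≤ 1 := fun z hz => by
    rw [norm_div, Complex.norm_real, Real.norm_of_nonneg hρ.le,
      div_le_one (norm_pos_iff.2 (hnz z hz))]
    exact hfar z hz
  refine ⟨fun z => ((ρ : ℂ) / (s z + s z₀) - (ρ : ℂ) / (s z₀ + s z₀)) / 4, ?_, ?_, ?_, ?_⟩
  · refine DifferentiableOn.div_const (DifferentiableOn.sub_const (DifferentiableOn.div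
      (differentiableOn_const _) (hs.add_const _) hnz) _) _
  · intro x hx y hy h
    simp only at h
    have h1 : (ρ : ℂ) / (s x + s z₀) = (ρ : ℂ) / (s y + s z₀) := by
      linear_combination 4 * h
    have hρ' : (ρ : ℂ) ≠ 0 := by exact_mod_cast hρ.ne'
    rw [div_eq_div_iff (hnz x hx) (hnz y hy)] at h1
    have := mul_left_cancel₀ hρ' h1
    exact hinj hx hy (by linear_combination -this)
  · intro z hz
    rw [mem_ball_zero_iff, norm_div]
    have h1 := hub z hz
    have h2 := hub z₀ hz₀
    have h3 := norm_sub_le ((ρ : ℂ) / (s z + s z₀)) ((ρ : ℂ) / (s z₀ + s z₀))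
    have h4 : ‖(4 : ℂ)‖ = 4 := by norm_num
    rw [h4]
    linarith
  · simp

theorem rfam_deriv_bound {G : Set ℂ} (hG : IsOpen G) {z₀ : ℂ} (hz₀ : z₀ ∈ G) :
    ∃ B, ∀ f, RFam G z₀ f → ‖deriv f z₀‖ ≤ B := by
  obtain ⟨r, hr, hrG⟩ := Metric.isOpen_iff.1 hG z₀ hz₀
  refine ⟨1 / r, fun f hf => ?_⟩
  refine Complex.norm_deriv_le_div_of_mapsTo_ball (hf.1.mono hrG) ?_ hr
  intro z hz
  rw [hf.2.2.2]
  exact ball_subset_closedBall (hf.2.2.1 (hrG hz))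

theorem ultra_limit {G : Set ℂ} (hG : IsOpen G) (F : ℕ → ℂ → ℂ)
    (hF : ∀ n, DifferentiableOn ℂ (F n) G) (hb : ∀ n, MapsTo (F n) G (ball 0 1))
    (𝒰 : Ultrafilter ℕ) : ∃ f : ℂ → ℂ, TendstoLocallyUniformlyOn F f 𝒰 G := by
  have hlim : ∀ z, ∃ w, z ∈ G → Tendsto (fun n => F n z) 𝒰 (nhds w) := by
    intro z
    by_cases hz : z ∈ G
    · have hc : IsCompact (closedBall (0 : ℂ) 1) := isCompact_closedBall _ _
      obtain ⟨w, -, hw⟩ := hc.ultrafilter_le_nhds (𝒰.map (fun n => F n z)) (by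
        rw [Filter.le_principal_iff]
        exact Filter.mem_map.2 (Filter.univ_mem' (fun n => ball_subset_closedBall (hb n hz))))
      exact ⟨w, fun _ => hw⟩
    · exact ⟨0, fun h => absurd h hz⟩
  choose f hf using hlim
  refine ⟨f, ?_⟩
  rw [Metric.tendstoLocallyUniformlyOn_iff]
  intro ε hε x hx
  obtain ⟨r, hr, hrG⟩ := Metric.isOpen_iff.1 hG x hx
  have hr2 : 0 < r / 2 := by positivity
  have hlip : ∀ n, ∀ y ∈ ball x (r / 2), ‖F n y - F n x‖ ≤ 1 / (r / 2) * ‖y - x‖ := by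
    intro n y hy
    refine lip_of_bounded hr2 ((hF n).mono ?_) (fun w hw => ?_) x (mem_ball_self hr2) y hy
    · rwa [mul_div_cancel₀ _ (two_ne_zero)]
    · rw [mul_div_cancel₀ _ (two_ne_zero)] at hw
      exact (mem_ball_zero_iff.1 (hb n (hrG hw))).le
  set δ := min (r / 2) (r / 2 * (ε / 4)) with hδ
  have hδ0 : 0 < δ := by positivity
  have hδle : ∀ n, ∀ y ∈ ball x δ, ‖F n y - F n x‖ ≤ ε / 4 := by
    intro n y hy
    have hy1 : y ∈ ball x (r / 2) := ball_subset_ball (min_le_left _ _) hy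
    have hy2 : ‖y - x‖ < r / 2 * (ε / 4) := by
      rw [← dist_eq_norm]; exact lt_of_lt_of_le hy (min_le_right _ _)
    refine (hlip n y hy1).trans ?_
    rw [one_div, inv_mul_le_iff₀ hr2]
    exact hy2.le
  refine ⟨ball x δ, mem_nhdsWithin_of_mem_nhds (ball_mem_nhds _ hδ0), ?_⟩
  have hev := (Metric.tendsto_nhds.1 (hf x hx)) (ε / 4) (by positivity)
  filter_upwards [hev] with n hn y hy
  have hyG : y ∈ G := hrG (ball_subset_ball ((min_le_left _ _).trans (by linarith)) hy)
  have h1 : ‖f y - f x‖ ≤ ε / 4 :=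
    le_of_tendsto ((hf y hyG).sub (hf x hx)).norm (Eventually.of_forall (fun n => hδle n y hy))
  have h2 := hδle n y hy
  rw [dist_eq_norm] at hn ⊢
  have : f y - F n y = (f y - f x) - (F n y - F n x) - (F n x - f x) := by ring
  rw [this]
  refine (norm_sub_le _ _).trans_lt ?_
  have := norm_sub_le (f y - f x) (F n y - F n x)
  linarith

theorem injOn_limit {G : Set ℂ} (hG : IsOpen G) (hGc : IsConnected G) (F : ℕ → ℂ → ℂ)
    (f : ℂ → ℂ) (hF : ∀ n, DifferentiableOn ℂ (F n) G) (hinj : ∀ n, InjOn (F n) G)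
    (𝒰 : Ultrafilter ℕ) (hlim : TendstoLocallyUniformlyOn F f 𝒰 G)
    {z₀ : ℂ} (hz₀ : z₀ ∈ G) (hd : deriv f z₀ ≠ 0) : InjOn f G := by
  have hfd : DifferentiableOn ℂ f G := hlim.differentiableOn (Eventually.of_forall hF) hG
  intro a ha b hb hab
  by_contra hne
  obtain ⟨r, hr, hrG⟩ := Metric.isOpen_iff.1 hG a ha
  set ρ := min r (dist b a) with hρ
  have hρ0 : 0 < ρ := lt_min hr (dist_pos.2 (Ne.symm hne))
  have hsub : ball a ρ ⊆ G := (ball_subset_ball (min_le_left _ _)).trans hrG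
  have hbn : b ∉ ball a ρ := fun h => absurd (mem_ball.1 h) (not_lt.2 (min_le_right _ _))
  have hbt := hlim.tendsto_at hb
  have hl2 : TendstoLocallyUniformlyOn (fun n z => F n z - F n b) (fun z => f z - f b) 𝒰
      (ball a ρ) := by
    have hl1 := hlim.mono hsub
    rw [Metric.tendstoLocallyUniformlyOn_iff] at hl1 ⊢
    intro ε hε x hx
    obtain ⟨t, ht, hev⟩ := hl1 (ε / 2) (by positivity) x hx
    refine ⟨t, ht, ?_⟩
    filter_upwards [hev, Metric.tendsto_nhds.1 hbt (ε / 2) (by positivity)] with n h1 h2 y hy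
    have := h1 y hy
    rw [dist_eq_norm] at *
    have e : f y - f b - (F n y - F n b) = (f y - F n y) + (F n b - f b) := by ring
    rw [e]
    refine (norm_add_le _ _).trans_lt (by linarith)
  have hloc := hurwitz_local hρ0 (F := fun n z => F n z - F n b) (f := fun z => f z - f b)
    (Eventually.of_forall (fun n => ((hF n).mono hsub).sub_const _)) hl2
    (Eventually.of_forall (fun n z hz h => hbn (by
      have := hinj n (hsub hz) hb (sub_eq_zero.1 h)
      rwa [← this]))) (by rw [hab, sub_self])
  have hev : f =ᶠ[nhds a] fun _ => f b := hloc.mono (fun z hz => sub_eq_zero.1 hz)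
  have heq : EqOn f (fun _ => f b) G :=
    (hfd.analyticOnNhd hG).eqOn_of_preconnected_of_eventuallyEq
      (analyticOnNhd_const) hGc.isPreconnected ha hev
  apply hd
  have : f =ᶠ[nhds z₀] fun _ => f b := heq.eventuallyEq_of_mem (hG.mem_nhds hz₀)
  rw [this.deriv_eq]
  simp

theorem rfam_extremal {G : Set ℂ} (hG : IsOpen G) (hGc : IsConnected G) (hsc : HasNoHole G)
    (hne : G ≠ univ) {z₀ : ℂ} (hz₀ : z₀ ∈ G) :
    ∃ f, RFam G z₀ f ∧ ∀ g, RFam G z₀ g → ‖deriv g z₀‖ ≤ ‖deriv f z₀‖ := by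
  obtain ⟨f₀, hf₀⟩ := rfam_nonempty hG hGc hsc hne hz₀
  obtain ⟨B, hB⟩ := rfam_deriv_bound hG hz₀
  set S : Set ℝ := (fun f => ‖deriv f z₀‖) '' {f | RFam G z₀ f} with hS
  have hSne : S.Nonempty := ⟨_, f₀, hf₀, rfl⟩
  have hSb : BddAbove S := ⟨B, by rintro _ ⟨f, hf, rfl⟩; exact hB f hf⟩
  obtain ⟨u, -, hut, huS⟩ := exists_seq_tendsto_sSup hSne hSb
  choose F hF hFu using huS
  set 𝒰 : Ultrafilter ℕ := Filter.hyperfilter ℕ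
  have h𝒰 : (𝒰 : Filter ℕ) ≤ atTop := Nat.hyperfilter_le_atTop
  obtain ⟨f, hlim⟩ := ultra_limit hG F (fun n => (hF n).1) (fun n => (hF n).2.2.1) 𝒰
  have hfd : DifferentiableOn ℂ f G :=
    hlim.differentiableOn (Eventually.of_forall (fun n => (hF n).1)) hG
  have hder : Tendsto (fun n => deriv (F n) z₀) 𝒰 (nhds (deriv f z₀)) :=
    (hlim.deriv (Eventually.of_forall (fun n => (hF n).1)) hG).tendsto_at hz₀
  have hM : ‖deriv f z₀‖ = sSup S := by
    refine tendsto_nhds_unique hder.norm ?_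
    have : (fun n => ‖deriv (F n) z₀‖) = u := funext hFu
    rw [this]
    exact hut.mono_left h𝒰
  have hle : ∀ g, RFam G z₀ g → ‖deriv g z₀‖ ≤ ‖deriv f z₀‖ := fun g hg => by
    rw [hM]; exact le_csSup hSb ⟨g, hg, rfl⟩
  have hpos : deriv f z₀ ≠ 0 := by
    have h1 := deriv_ne_zero_of_injOn' hG hf₀.1 hf₀.2.1 hz₀
    have := hle f₀ hf₀
    intro h
    rw [h, norm_zero] at this
    exact h1 (norm_le_zero_iff.1 this)
  have hinj := injOn_limit hG hGc F f (fun n => (hF n).1) (fun n => (hF n).2.1) 𝒰 hlim hz₀ hpos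
  refine ⟨f, ⟨hfd, hinj, ?_, ?_⟩, hle⟩
  · have hcl : ∀ z ∈ G, ‖f z‖ ≤ 1 := fun z hz =>
      le_of_tendsto (hlim.tendsto_at hz).norm (Eventually.of_forall (fun n =>
        (mem_ball_zero_iff.1 ((hF n).2.2.1 hz)).le))
    intro z hz
    have hsd : HasStrictDerivAt f (deriv f z) z :=
      (hfd.analyticAt (hG.mem_nhds hz)).hasStrictDerivAt
    have himg : f '' G ∈ nhds (f z) := by
      rw [← hsd.map_nhds_eq (deriv_ne_zero_of_injOn' hG hfd hinj hz)]
      exact image_mem_map (hG.mem_nhds hz)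
    have : closedBall (0 : ℂ) 1 ∈ nhds (f z) := by
      filter_upwards [himg]
      rintro _ ⟨w, hw, rfl⟩
      exact mem_closedBall_zero_iff.2 (hcl w hw)
    have h2 := mem_interior_iff_mem_nhds.2 this
    rwa [interior_closedBall _ one_ne_zero] at h2
  · refine tendsto_nhds_unique (hlim.tendsto_at hz₀) ?_
    have : (fun n => F n z₀) = fun _ => 0 := funext (fun n => (hF n).2.2.2)
    rw [this]
    exact tendsto_const_nhds

theorem koebe_step {G : Set ℂ} (hG : IsOpen G) (hGc : IsConnected G) (hsc : HasNoHole G)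
    {z₀ : ℂ} (hz₀ : z₀ ∈ G) {f : ℂ → ℂ} (hf : RFam G z₀ f) {b : ℂ} (hb : ‖b‖ < 1)
    (hbf : ∀ z ∈ G, f z ≠ b) : ∃ g, RFam G z₀ g ∧ ‖deriv f z₀‖ < ‖deriv g z₀‖ := by
  obtain ⟨hfd, hfi, hfm, hf0⟩ := hf
  have hfn : ∀ z ∈ G, ‖f z‖ < 1 := fun z hz => mem_ball_zero_iff.1 (hfm hz)
  have hTd : DifferentiableOn ℂ (fun z => mob b (f z)) G := fun z hz =>
    ((mob_hasDerivAt hb (hfn z hz)).differentiableAt.comp_differentiableWithinAt z (hfd z hz))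
  obtain ⟨s, hs, hsq⟩ := exists_sqrt hG hGc hsc hTd (fun z hz h => by
    rw [mob, div_eq_zero_iff] at h
    rcases h with h | h
    · exact hbf z hz (sub_eq_zero.1 h)
    · exact mob_den_ne hb (hfn z hz) h)
  have hsn : ∀ z ∈ G, ‖s z‖ < 1 := fun z hz => by
    have h1 := mob_norm hb (hfn z hz)
    rw [← hsq z hz, norm_pow] at h1
    nlinarith [norm_nonneg (s z)]
  set c := s z₀ with hc
  have hcn : ‖c‖ < 1 := hsn z₀ hz₀
  have hc2 : c ^ 2 = - b := by
    rw [hc, hsq z₀ hz₀, hf0, mob]; simp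
  have hb0 : b ≠ 0 := fun h => hbf z₀ hz₀ (by rw [hf0, h])
  have hc0 : c ≠ 0 := fun h => hb0 (by rw [h] at hc2; simpa using hc2.symm)
  have hfdz : HasDerivAt f (deriv f z₀) z₀ :=
    (hfd.differentiableAt (hG.mem_nhds hz₀)).hasDerivAt
  have hsdz : HasDerivAt s (deriv s z₀) z₀ :=
    (hs.differentiableAt (hG.mem_nhds hz₀)).hasDerivAt
  have hder1 : HasDerivAt (fun z => mob b (f z)) ((1 - (starRingEnd ℂ) b * b) * deriv f z₀) z₀ := by
    have h := (mob_hasDerivAt hb (hfn z₀ hz₀)).comp z₀ hfdz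
    rw [hf0] at h
    simpa [Function.comp_def] using h
  have hder2 : HasDerivAt (fun z => mob b (f z)) (2 * c * deriv s z₀) z₀ := by
    have h : HasDerivAt (fun z => s z ^ 2) (2 * c * deriv s z₀) z₀ := by
      have h0 := hsdz.fun_pow 2
      refine h0.congr_deriv ?_
      simp [hc]
    refine h.congr_of_eventuallyEq ?_
    filter_upwards [hG.mem_nhds hz₀] with z hz
    exact (hsq z hz).symm
  have heq := hder1.unique hder2
  have hder3 : HasDerivAt (fun z => mob c (s z))
      ((1 - (starRingEnd ℂ) c * c) / (1 - (starRingEnd ℂ) c * c) ^ 2 * deriv s z₀) z₀ :=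
    (mob_hasDerivAt hcn hcn).comp z₀ hsdz
  refine ⟨fun z => mob c (s z), ⟨?_, ?_, ?_, ?_⟩, ?_⟩
  · exact fun z hz =>
    ((mob_hasDerivAt hcn (hsn z hz)).differentiableAt.comp_differentiableWithinAt z (hs z hz))
  · intro x hx y hy h
    have h1 := mob_inj hcn (hsn x hx) (hsn y hy) h
    refine hfi hx hy (mob_inj hb (hfn x hx) (hfn y hy) ?_)
    rw [← hsq x hx, ← hsq y hy, h1]
  · exact fun z hz => mem_ball_zero_iff.2 (mob_norm hcn (hsn z hz))
  · simp [mob, hc]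
  · have hpos : deriv f z₀ ≠ 0 := deriv_ne_zero_of_injOn' hG hfd hfi hz₀
    rw [hder3.deriv]
    have hcc : (starRingEnd ℂ) c * c = ((‖c‖ ^ 2 : ℝ) : ℂ) := by
      rw [mul_comm, Complex.mul_conj, Complex.normSq_eq_norm_sq]
    have hbb : (starRingEnd ℂ) b * b = (((‖c‖ ^ 2) ^ 2 : ℝ) : ℂ) := by
      rw [mul_comm, Complex.mul_conj, Complex.normSq_eq_norm_sq]
      have : ‖b‖ = ‖c‖ ^ 2 := by rw [← norm_neg b, ← hc2, norm_pow]
      rw [this]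
    set t : ℝ := ‖c‖ with ht
    have ht0 : 0 < t := norm_pos_iff.2 hc0
    rw [hbb] at heq
    have hn1 := congrArg norm heq
    have e1 : (1 : ℂ) - (((t ^ 2) ^ 2 : ℝ) : ℂ) = ((1 - (t ^ 2) ^ 2 : ℝ) : ℂ) := by push_cast; ring
    have e2 : (1 : ℂ) - ((t ^ 2 : ℝ) : ℂ) = ((1 - t ^ 2 : ℝ) : ℂ) := by push_cast; ring
    have p2 : 0 < 1 - t ^ 2 := by nlinarith
    have p1 : 0 < 1 - (t ^ 2) ^ 2 := by nlinarith [sq_nonneg t]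
    rw [e1, norm_mul, norm_mul, norm_mul, Complex.norm_real, Real.norm_of_nonneg p1.le,
      ← ht] at hn1
    rw [hcc, e2, norm_mul, norm_div, norm_pow, Complex.norm_real, Real.norm_of_nonneg p2.le]
    have h2 : ‖(2 : ℂ)‖ = 2 := by norm_num
    rw [h2] at hn1
    set A := ‖deriv f z₀‖
    set D := ‖deriv s z₀‖
    have hA : 0 < A := norm_pos_iff.2 hpos
    have : (1 - t ^ 2) / (1 - t ^ 2) ^ 2 * D = D / (1 - t ^ 2) := by
      field_simp
    rw [this, lt_div_iff₀ p2]
    have hk : A * (1 + t ^ 2) * (1 - t ^ 2) = 2 * t * D := by rw [← hn1]; ring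
    have hk2 : 2 * t * (A * (1 - t ^ 2)) < 2 * t * D := by
      rw [← hk]
      have : 0 < A * (1 - t ^ 2) * (1 - t) ^ 2 := by
        have : 0 < 1 - t := by linarith
        positivity
      nlinarith
    exact lt_of_mul_lt_mul_left hk2 (by positivity)

theorem inverse_holo {G : Set ℂ} (hG : IsOpen G) {f : ℂ → ℂ} (hf : DifferentiableOn ℂ f G)
    (hinj : InjOn f G) : ∃ ψ : ℂ → ℂ, (∀ z ∈ G, ψ (f z) = z) ∧ DifferentiableOn ℂ ψ (f '' G) := by
  refine ⟨Function.invFunOn f G, ?_, ?_⟩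
  · intro z hz
    exact hinj.leftInvOn_invFunOn hz
  · rintro _ ⟨z, hz, rfl⟩
    have hsd : HasStrictDerivAt f (deriv f z) z :=
      (hf.analyticAt (hG.mem_nhds hz)).hasStrictDerivAt
    have hd := deriv_ne_zero_of_injOn' hG hf hinj hz
    have h := hsd.to_local_left_inverse hd (g := Function.invFunOn f G) (by
      filter_upwards [hG.mem_nhds hz] with w hw
      exact hinj.leftInvOn_invFunOn hw)
    exact h.hasDerivAt.differentiableAt.differentiableWithinAt

theorem riemann_mapping {G : Set ℂ} (hG : IsOpen G) (hGc : IsConnected G) (hsc : HasNoHole G)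
    (hne : G ≠ univ) : ∃ f ψ : ℂ → ℂ, DifferentiableOn ℂ f G ∧ MapsTo f G (ball 0 1) ∧
      DifferentiableOn ℂ ψ (ball 0 1) ∧ MapsTo ψ (ball 0 1) G ∧ (∀ z ∈ G, ψ (f z) = z) ∧
      (∀ w ∈ ball (0 : ℂ) 1, f (ψ w) = w) := by
  obtain ⟨z₀, hz₀⟩ := hGc.nonempty
  obtain ⟨f, hf, hmax⟩ := rfam_extremal hG hGc hsc hne hz₀
  have hsurj : ∀ b ∈ ball (0 : ℂ) 1, ∃ z ∈ G, f z = b := by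
    intro b hb
    by_contra hcon
    push Not at hcon
    obtain ⟨g, hg, hlt⟩ := koebe_step hG hGc hsc hz₀ hf (mem_ball_zero_iff.1 hb) hcon
    exact absurd (hmax g hg) (not_le.2 hlt)
  obtain ⟨ψ, h1, h2⟩ := inverse_holo hG hf.1 hf.2.1
  refine ⟨f, ψ, hf.1, hf.2.2.1, h2.mono (fun b hb => hsurj b hb), ?_, h1, ?_⟩
  · intro b hb
    obtain ⟨z, hz, rfl⟩ := hsurj b hb
    rw [h1 z hz]; exact hz
  · intro b hb
    obtain ⟨z, hz, rfl⟩ := hsurj b hb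
    rw [h1 z hz]


def Appr (Ω X : Set ℂ) (u : ℂ → ℂ) : Prop :=
  ∀ ε : ℝ, 0 < ε → ∃ f : ℂ → ℂ, DifferentiableOn ℂ f Ω ∧ ∀ x ∈ X, ‖f x - u x‖ ≤ ε

theorem Appr.congr {Ω X : Set ℂ} {u v : ℂ → ℂ} (h : Appr Ω X u) (huv : ∀ x ∈ X, u x = v x) :
    Appr Ω X v := by
  intro ε hε
  obtain ⟨f, hf, hx⟩ := h ε hε
  exact ⟨f, hf, fun x hxX => by rw [← huv x hxX]; exact hx x hxX⟩

theorem Appr.of_holo {Ω X : Set ℂ} {u : ℂ → ℂ} (h : DifferentiableOn ℂ u Ω) : Appr Ω X u :=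
  fun ε hε => ⟨u, h, fun x _ => by simp [hε.le]⟩

theorem Appr.add {Ω X : Set ℂ} {u v : ℂ → ℂ} (hu : Appr Ω X u) (hv : Appr Ω X v) :
    Appr Ω X (fun x => u x + v x) := by
  intro ε hε
  obtain ⟨f, hf, hfx⟩ := hu (ε / 2) (by positivity)
  obtain ⟨g, hg, hgx⟩ := hv (ε / 2) (by positivity)
  refine ⟨fun x => f x + g x, hf.add hg, fun x hx => ?_⟩
  have e : f x + g x - (u x + v x) = (f x - u x) + (g x - v x) := by ring
  rw [e]
  have := norm_add_le (f x - u x) (g x - v x)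
  linarith [hfx x hx, hgx x hx]

theorem Appr.bdd {Ω X : Set ℂ} (hX : IsCompact X) (hXΩ : X ⊆ Ω) {u : ℂ → ℂ} (hu : Appr Ω X u) :
    ∃ B : ℝ, 0 < B ∧ ∀ x ∈ X, ‖u x‖ ≤ B := by
  obtain ⟨f, hf, hfx⟩ := hu 1 one_pos
  obtain ⟨C, hC⟩ := hX.exists_bound_of_continuousOn (hf.continuousOn.mono hXΩ)
  refine ⟨max C 0 + 1, by positivity, fun x hx => ?_⟩
  have e : u x = f x - (f x - u x) := by ring
  rw [e]
  have := norm_sub_le (f x) (f x - u x)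
  linarith [hC x hx, hfx x hx, le_max_left C 0]

theorem Appr.mul {Ω X : Set ℂ} (hX : IsCompact X) (hXΩ : X ⊆ Ω) {u v : ℂ → ℂ}
    (hu : Appr Ω X u) (hv : Appr Ω X v) : Appr Ω X (fun x => u x * v x) := by
  intro ε hε
  obtain ⟨B, hB0, hB⟩ := hv.bdd hX hXΩ
  obtain ⟨f, hf, hfx⟩ := hu (ε / (2 * B)) (by positivity)
  obtain ⟨C, hC⟩ := hX.exists_bound_of_continuousOn (hf.continuousOn.mono hXΩ)
  have hC1 : 0 < max C 0 + 1 := by positivity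
  obtain ⟨g, hg, hgx⟩ := hv (ε / (2 * (max C 0 + 1))) (by positivity)
  refine ⟨fun x => f x * g x, hf.mul hg, fun x hx => ?_⟩
  have e : f x * g x - u x * v x = f x * (g x - v x) + (f x - u x) * v x := by ring
  rw [e]
  refine (norm_add_le _ _).trans ?_
  rw [norm_mul, norm_mul]
  have h1 : ‖f x‖ * ‖g x - v x‖ ≤ (max C 0 + 1) * (ε / (2 * (max C 0 + 1))) :=
    mul_le_mul (by linarith [hC x hx, le_max_left C 0]) (hgx x hx) (norm_nonneg _) hC1.le
  have h2 : ‖f x - u x‖ * ‖v x‖ ≤ ε / (2 * B) * B :=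
    mul_le_mul (hfx x hx) (hB x hx) (norm_nonneg _) (by positivity)
  have e1 : (max C 0 + 1) * (ε / (2 * (max C 0 + 1))) = ε / 2 := by field_simp
  have e2 : ε / (2 * B) * B = ε / 2 := by field_simp
  linarith

theorem Appr.const {Ω X : Set ℂ} (c : ℂ) : Appr Ω X (fun _ => c) :=
  Appr.of_holo (differentiableOn_const c)

theorem Appr.sum {Ω X : Set ℂ} (F : ℕ → ℂ → ℂ) (N : ℕ) (hF : ∀ k, Appr Ω X (F k)) :
    Appr Ω X (fun x => ∑ k ∈ Finset.range N, F k x) := by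
  induction N with
  | zero => simpa using Appr.const (Ω := Ω) (X := X) 0
  | succ n ih =>
    simp only [Finset.sum_range_succ]
    exact ih.add (hF n)

theorem Appr.pow {Ω X : Set ℂ} (hX : IsCompact X) (hXΩ : X ⊆ Ω) {u : ℂ → ℂ}
    (hu : Appr Ω X u) (n : ℕ) : Appr Ω X (fun x => u x ^ n) := by
  induction n with
  | zero => simpa using Appr.const (Ω := Ω) (X := X) 1
  | succ n ih =>
    simp only [pow_succ]
    exact ih.mul hX hXΩ hu

theorem Appr.limit {Ω X : Set ℂ} {u : ℂ → ℂ}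
    (h : ∀ ε : ℝ, 0 < ε → ∃ v, Appr Ω X v ∧ ∀ x ∈ X, ‖v x - u x‖ ≤ ε) : Appr Ω X u := by
  intro ε hε
  obtain ⟨v, hv, hvx⟩ := h (ε / 2) (by positivity)
  obtain ⟨f, hf, hfx⟩ := hv (ε / 2) (by positivity)
  refine ⟨f, hf, fun x hx => ?_⟩
  have e : f x - u x = (f x - v x) + (v x - u x) := by ring
  rw [e]
  have := norm_add_le (f x - v x) (v x - u x)
  linarith [hfx x hx, hvx x hx]

theorem Appr.geom {Ω X : Set ℂ} (hX : IsCompact X) (hXΩ : X ⊆ Ω) {v : ℂ → ℂ}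
    (hv : Appr Ω X v) (hb : ∀ x ∈ X, ‖v x‖ ≤ 1 / 2) : Appr Ω X (fun x => 1 / (1 - v x)) := by
  refine Appr.limit (fun ε hε => ?_)
  obtain ⟨n, hn⟩ := exists_pow_lt_of_lt_one (show (0 : ℝ) < ε / 2 by positivity)
    (show (1 / 2 : ℝ) < 1 by norm_num)
  refine ⟨_, Appr.sum (fun k x => v x ^ k) n (fun k => hv.pow hX hXΩ k), fun x hx => ?_⟩
  have hvx := hb x hx
  have h12 : 1 / 2 ≤ ‖1 - v x‖ := by
    have := norm_sub_norm_le (1 : ℂ) (v x)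
    rw [norm_one] at this
    linarith
  have hne : 1 - v x ≠ 0 := fun h => by rw [h, norm_zero] at h12; linarith
  have hne' : v x - 1 ≠ 0 := fun h => hne (by rw [← neg_sub, h, neg_zero])
  have hne1 : v x ≠ 1 := fun h => hne (by rw [h, sub_self])
  rw [geom_sum_eq hne1]
  have e : (v x ^ n - 1) / (v x - 1) - 1 / (1 - v x) = - (v x ^ n / (1 - v x)) := by
    field_simp
    ring
  rw [e, norm_neg, norm_div, norm_pow, div_le_iff₀ (by linarith)]
  have h3 : ‖v x‖ ^ n ≤ (1 / 2) ^ n := pow_le_pow_left₀ (norm_nonneg _) hvx n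
  nlinarith

theorem move_pole {Ω X : Set ℂ} (hX : IsCompact X) (hXΩ : X ⊆ Ω) {a b : ℂ} (ha : a ∉ X)
    (h : ∀ w ∈ X, 2 * ‖b - a‖ ≤ ‖w - a‖) (hR : Appr Ω X (fun w => 1 / (w - a))) :
    Appr Ω X (fun w => 1 / (w - b)) := by
  have hne : ∀ w ∈ X, w - a ≠ 0 := fun w hw h => ha (by rwa [sub_eq_zero.1 h] at hw)
  have hv : Appr Ω X (fun w => (b - a) * (1 / (w - a))) := (Appr.const (b - a)).mul hX hXΩ hR
  have hg := hv.geom hX hXΩ (fun w hw => by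
    rw [norm_mul, norm_div, norm_one, mul_one_div,
      div_le_iff₀ (norm_pos_iff.2 (hne w hw))]
    linarith [h w hw])
  refine (hR.mul hX hXΩ hg).congr (fun w hw => ?_)
  have h1 := hne w hw
  have e : 1 - (b - a) * (1 / (w - a)) = (w - b) / (w - a) := by
    field_simp
    ring
  rw [e, one_div_div, one_div_mul_eq_div, div_div, mul_comm, div_mul_eq_div_div, div_self h1]

theorem pole_local {Ω X : Set ℂ} (hX : IsCompact X) (hXΩ : X ⊆ Ω) {p : ℂ} (hp : p ∉ X) :
    ∃ d : ℝ, 0 < d ∧ ball p d ⊆ Xᶜ ∧ ∀ a ∈ ball p d, ∀ b ∈ ball p d,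
      Appr Ω X (fun w => 1 / (w - a)) → Appr Ω X (fun w => 1 / (w - b)) := by
  obtain ⟨D, hD, hDX⟩ := Metric.isOpen_iff.1 hX.isClosed.isOpen_compl p hp
  refine ⟨D / 5, by positivity, (ball_subset_ball (by linarith)).trans hDX, ?_⟩
  intro a ha b hb hR
  refine move_pole hX hXΩ (fun h => hDX (ball_subset_ball (by linarith) ha) h) ?_ hR
  intro w hw
  have h1 : D ≤ dist w p := by
    by_contra hlt
    exact hDX (mem_ball.2 (not_le.1 hlt)) hw
  rw [← dist_eq_norm, ← dist_eq_norm]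
  have h2 := dist_triangle w a p
  have h3 := dist_triangle_right b a p
  have h4 := mem_ball.1 ha
  have h5 := mem_ball.1 hb
  linarith

def PS (Ω X : Set ℂ) : Set ℂ := {a | a ∉ X ∧ Appr Ω X (fun w => 1 / (w - a))}

theorem PS_open {Ω X : Set ℂ} (hX : IsCompact X) (hXΩ : X ⊆ Ω) : IsOpen (PS Ω X) := by
  rw [Metric.isOpen_iff]
  rintro p ⟨hp, hR⟩
  obtain ⟨d, hd, hdX, h⟩ := pole_local hX hXΩ hp
  exact ⟨d, hd, fun b hb => ⟨hdX hb, h p (mem_ball_self hd) b hb hR⟩⟩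

theorem PS_diff_open {Ω X : Set ℂ} (hX : IsCompact X) (hXΩ : X ⊆ Ω) : IsOpen (Xᶜ \ PS Ω X) := by
  rw [Metric.isOpen_iff]
  rintro p ⟨hp, hR⟩
  obtain ⟨d, hd, hdX, h⟩ := pole_local hX hXΩ hp
  exact ⟨d, hd, fun b hb => ⟨hdX hb, fun hbS => hR ⟨hp, h b hb p (mem_ball_self hd) hbS.2⟩⟩⟩

theorem PS_compl {Ω X : Set ℂ} (hXΩ : X ⊆ Ω) {p : ℂ} (hp : p ∉ Ω) : p ∈ PS Ω X := by
  refine ⟨fun h => hp (hXΩ h), Appr.of_holo ?_⟩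
  refine DifferentiableOn.div (differentiableOn_const _) (by fun_prop) ?_
  exact fun w hw h => hp (by rwa [sub_eq_zero.1 h] at hw)

theorem PS_large {Ω X : Set ℂ} (hX : IsCompact X) (hXΩ : X ⊆ Ω) :
    ∃ M : ℝ, ∀ p : ℂ, M ≤ ‖p‖ → p ∈ PS Ω X := by
  obtain ⟨C, hC⟩ := hX.exists_bound_of_continuousOn (continuousOn_id)
  simp only [id] at hC
  refine ⟨2 * (max C 0 + 1), fun p hp => ?_⟩
  have hm0 := le_max_right C 0
  have hmC := le_max_left C 0
  have hp0 : 0 < ‖p‖ := by linarith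
  have hpne : p ≠ 0 := norm_pos_iff.1 hp0
  refine ⟨fun h => by linarith [hC p h], ?_⟩
  have hv : Appr Ω X (fun w => w / p) := Appr.of_holo (by fun_prop)
  have hg := hv.geom hX hXΩ (fun w hw => by
    rw [norm_div, div_le_iff₀ hp0]
    linarith [hC w hw])
  refine ((Appr.const (-1 / p)).mul hX hXΩ hg).congr (fun w hw => ?_)
  have hwp : w - p ≠ 0 := fun h => by
    rw [sub_eq_zero.1 h] at hw; linarith [hC p hw]
  have e : 1 - w / p = (p - w) / p := by field_simp
  rw [e, one_div_div]
  have hpw : p - w ≠ 0 := fun h => hwp (by rw [← neg_sub, h, neg_zero])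
  field_simp
  ring

def Lset (Ω : Set ℂ) (m : ℕ) : Set ℂ := {z | ‖z‖ ≤ m ∧ ∀ p, p ∉ Ω → 1 / ((m : ℝ) + 1) ≤ dist z p}

theorem Lset_sub (Ω : Set ℂ) (m : ℕ) : Lset Ω m ⊆ Ω := by
  rintro z ⟨_, hz⟩
  by_contra h
  have := hz z h
  rw [dist_self] at this
  have h2 : 0 < 1 / ((m : ℝ) + 1) := by positivity
  linarith

theorem Lset_compact (Ω : Set ℂ) (m : ℕ) : IsCompact (Lset Ω m) := by
  have hcl : IsClosed (Lset Ω m) := by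
    have : Lset Ω m = {z : ℂ | ‖z‖ ≤ m} ∩ ⋂ (p : ℂ) (_ : p ∉ Ω), {z | 1 / ((m : ℝ) + 1) ≤ dist z p} := by
      ext z; simp [Lset]
    rw [this]
    refine (isClosed_le continuous_norm continuous_const).inter ?_
    refine isClosed_iInter (fun p => isClosed_iInter (fun _ => ?_))
    exact isClosed_le continuous_const (continuous_id.dist continuous_const)
  refine (isCompact_closedBall (0 : ℂ) m).of_isClosed_subset hcl ?_
  rintro z ⟨hz, _⟩
  exact mem_closedBall_zero_iff.2 hz

theorem Lset_mono (Ω : Set ℂ) {m n : ℕ} (h : m ≤ n) : Lset Ω m ⊆ Lset Ω n := by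
  have hc : (m : ℝ) ≤ n := by exact_mod_cast h
  rintro z ⟨h1, h2⟩
  refine ⟨h1.trans hc, fun p hp => le_trans ?_ (h2 p hp)⟩
  gcongr

theorem Lset_exhaust {Ω K : Set ℂ} (hΩ : IsOpen Ω) (hK : IsCompact K) (hKΩ : K ⊆ Ω) :
    ∃ m, K ⊆ Lset Ω m := by
  obtain ⟨δ, hδ, hsub⟩ := hK.exists_thickening_subset_open hΩ hKΩ
  obtain ⟨C, hC⟩ := hK.exists_bound_of_continuousOn (continuousOn_id)
  simp only [id] at hC
  obtain ⟨m1, hm1⟩ := exists_nat_ge C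
  obtain ⟨m2, hm2⟩ := exists_nat_one_div_lt hδ
  refine ⟨max m1 m2, fun z hz => ⟨?_, fun p hp => ?_⟩⟩
  · refine (hC z hz).trans (hm1.trans ?_)
    exact_mod_cast le_max_left _ _
  · have h1 : δ ≤ dist z p := by
      by_contra hlt
      exact hp (hsub (Metric.mem_thickening_iff.2 ⟨z, hz, by rw [dist_comm]; exact not_le.1 hlt⟩))
    refine le_trans ?_ (hm2.le.trans h1)
    have : (m2 : ℝ) ≤ ((max m1 m2 : ℕ) : ℝ) := by exact_mod_cast le_max_right _ _
    gcongr

theorem Lset_escape {Ω : Set ℂ} {m : ℕ} {z : ℂ} (hz : z ∉ Lset Ω m) :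
    ∃ T : Set ℂ, IsPreconnected T ∧ z ∈ T ∧ T ⊆ (Lset Ω m)ᶜ ∧
      ((∃ p ∈ T, p ∉ Ω) ∨ ∀ M : ℝ, ∃ p ∈ T, M ≤ ‖p‖) := by
  by_cases h : ‖z‖ ≤ m
  · have : ∃ p, p ∉ Ω ∧ dist z p < 1 / ((m : ℝ) + 1) := by
      by_contra hcon
      push Not at hcon
      exact hz ⟨h, hcon⟩
    obtain ⟨p, hp, hd⟩ := this
    refine ⟨ball p (1 / ((m : ℝ) + 1)), (convex_ball _ _).isPreconnected, hd, ?_,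
      Or.inl ⟨p, mem_ball_self (by positivity), hp⟩⟩
    intro x hx hxL
    exact absurd (mem_ball.1 hx) (not_lt.2 (hxL.2 p hp))
  · push Not at h
    have hz0 : 0 < ‖z‖ := lt_of_le_of_lt (Nat.cast_nonneg m) h
    refine ⟨(fun t : ℝ => (t : ℂ) * z) '' Ici 1, isPreconnected_Ici.image _ (by fun_prop),
      ⟨1, by simp, by simp⟩, ?_, Or.inr ?_⟩
    · rintro _ ⟨t, ht, rfl⟩ ⟨hL, _⟩
      have ht' : (1 : ℝ) ≤ t := ht
      rw [norm_mul, Complex.norm_real, Real.norm_of_nonneg (by linarith)] at hL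
      nlinarith
    · intro M
      refine ⟨_, ⟨max 1 (M / ‖z‖), mem_Ici.2 (le_max_left _ _), rfl⟩, ?_⟩
      have h1 := le_max_left 1 (M / ‖z‖)
      have h2 := le_max_right 1 (M / ‖z‖)
      simp only
      rw [norm_mul, Complex.norm_real, Real.norm_of_nonneg (by linarith)]
      rwa [div_le_iff₀ hz0] at h2

theorem annulus_preconnected {r R : ℝ} (hr : 0 ≤ r) :
    IsPreconnected {z : ℂ | r < ‖z‖ ∧ ‖z‖ < R} := by
  have : {z : ℂ | r < ‖z‖ ∧ ‖z‖ < R} =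
      (fun q : ℝ × ℝ => (q.1 : ℂ) * Complex.exp (q.2 * Complex.I)) '' (Ioo r R ×ˢ univ) := by
    ext z
    constructor
    · rintro ⟨h1, h2⟩
      exact ⟨(‖z‖, Complex.arg z), ⟨⟨h1, h2⟩, mem_univ _⟩, Complex.norm_mul_exp_arg_mul_I z⟩
    · rintro ⟨⟨s, t⟩, ⟨⟨h1, h2⟩, _⟩, rfl⟩
      simp only at h1 h2
      simp only [mem_ofPred_eq, norm_mul, Complex.norm_exp_ofReal_mul_I, mul_one, Complex.norm_real]
      rw [Real.norm_of_nonneg (by linarith)]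
      exact ⟨h1, h2⟩
  rw [this]
  exact (isPreconnected_Ioo.prod isPreconnected_univ).image _ (by fun_prop)

theorem image_ball_open {V : Set ℂ} (hV : IsOpen V) {φ : ℂ → ℂ} (hφ : DifferentiableOn ℂ φ V)
    (hinj : InjOn φ V) : IsOpen (φ '' V) := by
  rw [isOpen_iff_mem_nhds]
  rintro _ ⟨z, hz, rfl⟩
  have hsd : HasStrictDerivAt φ (deriv φ z) z :=
    (hφ.analyticAt (hV.mem_nhds hz)).hasStrictDerivAt
  rw [← hsd.map_nhds_eq (deriv_ne_zero_of_injOn' hV hφ hinj hz)]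
  exact image_mem_map (hV.mem_nhds hz)

theorem poles_ok {Ω : Set ℂ} {m : ℕ} {φ : ℂ → ℂ} {r R : ℝ} (hr : 0 < r) (hrR : r < R)
    (hφ : DifferentiableOn ℂ φ (ball 0 R)) (hinj : InjOn φ (ball 0 R))
    (hmaps : MapsTo φ (ball 0 R) Ω) (hdisj : ∀ z ∈ ball (0 : ℂ) R, φ z ∉ Lset Ω m) :
    ∀ ζ : ℂ, r < ‖ζ‖ → ‖ζ‖ < R → φ ζ ∈ PS Ω (Lset Ω m ∪ φ '' closedBall 0 r) := by
  set X := Lset Ω m ∪ φ '' closedBall 0 r with hXdef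
  have hcb : closedBall (0 : ℂ) r ⊆ ball 0 R := closedBall_subset_ball hrR
  have hX : IsCompact X := (Lset_compact Ω m).union
    ((isCompact_closedBall _ _).image_of_continuousOn (hφ.continuousOn.mono hcb))
  have hXΩ : X ⊆ Ω := by
    refine union_subset (Lset_sub Ω m) ?_
    rintro _ ⟨z, hz, rfl⟩
    exact hmaps (hcb hz)
  set A := {z : ℂ | r < ‖z‖ ∧ ‖z‖ < R} with hA
  have hAR : A ⊆ ball 0 R := fun z hz => mem_ball_zero_iff.2 hz.2
  have hAX : φ '' A ⊆ Xᶜ := by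
    rintro _ ⟨z, hz, rfl⟩ (h | ⟨w, hw, hwz⟩)
    · exact hdisj z (hAR hz) h
    · have := hinj (hcb hw) (hAR hz) hwz
      rw [this] at hw
      exact absurd (mem_closedBall_zero_iff.1 hw) (not_le.2 hz.1)
  have hApre : IsPreconnected (φ '' A) :=
    (annulus_preconnected hr.le).image _ (hφ.continuousOn.mono hAR)
  have hmeet : (φ '' A ∩ PS Ω X).Nonempty := by
    by_contra hemp
    rw [not_nonempty_iff_eq_empty] at hemp
    have h0R : (0 : ℂ) ∈ ball 0 R := mem_ball_self (hr.trans hrR)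
    obtain ⟨T, hT, h0T, hTL, hTp⟩ := Lset_escape (hdisj 0 h0R)
    have hp : (T ∩ PS Ω X).Nonempty := by
      rcases hTp with ⟨p, hpT, hpΩ⟩ | hM
      · exact ⟨p, hpT, PS_compl hXΩ hpΩ⟩
      · obtain ⟨M, hM'⟩ := PS_large hX hXΩ
        obtain ⟨p, hpT, hpM⟩ := hM M
        exact ⟨p, hpT, hM' p hpM⟩
    have hVo : IsOpen ((Xᶜ \ PS Ω X) ∪ φ '' ball 0 R) :=
      (PS_diff_open hX hXΩ).union (image_ball_open isOpen_ball hφ hinj)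
    have hdis : Disjoint (PS Ω X) ((Xᶜ \ PS Ω X) ∪ φ '' ball 0 R) := by
      rw [Set.disjoint_left]
      rintro x hxS (hx | ⟨z, hz, rfl⟩)
      · exact hx.2 hxS
      · have hzA : z ∈ A := by
          refine ⟨?_, mem_ball_zero_iff.1 hz⟩
          by_contra hle
          exact hxS.1 (Or.inr ⟨z, mem_closedBall_zero_iff.2 (not_lt.1 hle), rfl⟩)
        have : φ z ∈ φ '' A ∩ PS Ω X := ⟨⟨z, hzA, rfl⟩, hxS⟩
        rw [hemp] at this
        exact this
    have hsub := hT.subset_left_of_subset_union (PS_open hX hXΩ) hVo hdis (fun x hx => by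
      by_cases hxX : x ∈ X
      · rcases hxX with h | ⟨z, hz, rfl⟩
        · exact absurd h (hTL hx)
        · exact Or.inr (Or.inr ⟨z, hcb hz, rfl⟩)
      · by_cases hxS : x ∈ PS Ω X
        · exact Or.inl hxS
        · exact Or.inr (Or.inl ⟨hxX, hxS⟩)) hp
    exact (hsub h0T).1 (Or.inr ⟨0, mem_closedBall_self hr.le, rfl⟩)
  have hsub := hApre.subset_left_of_subset_union (PS_open hX hXΩ) (PS_diff_open hX hXΩ)
    (by rw [Set.disjoint_left]; exact fun x h1 h2 => h2.2 h1) (fun x hx => by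
      by_cases hxS : x ∈ PS Ω X
      · exact Or.inl hxS
      · exact Or.inr ⟨hAX hx, hxS⟩) hmeet
  exact fun ζ h1 h2 => hsub ⟨ζ, ⟨h1, h2⟩, rfl⟩


noncomputable def cz (ρ t : ℝ) : ℂ := circleMap 0 ρ (2 * Real.pi * t)

theorem cz_norm {ρ : ℝ} (hρ : 0 < ρ) (t : ℝ) : ‖cz ρ t‖ = ρ := by
  rw [cz, norm_circleMap_zero, abs_of_pos hρ]

theorem cz_cont (ρ : ℝ) : Continuous (cz ρ) :=
  (continuous_circleMap 0 ρ).comp (by fun_prop)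

theorem circle_as_unit (ρ : ℝ) (H : ℂ → ℂ) :
    (∮ ζ in C(0, ρ), H ζ) = ∫ t in (0:ℝ)..1, (2 * Real.pi * Complex.I) * (cz ρ t * H (cz ρ t)) := by
  rw [circleIntegral]
  have h := intervalIntegral.integral_comp_mul_left (a := 0) (b := 1)
    (fun θ : ℝ => deriv (circleMap 0 ρ) θ • H (circleMap 0 ρ θ)) (c := 2 * Real.pi)
    (by positivity)
  rw [mul_zero, mul_one] at h
  have h2 : (∫ θ in (0:ℝ)..2 * Real.pi, deriv (circleMap 0 ρ) θ • H (circleMap 0 ρ θ))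
      = (2 * Real.pi) • ∫ t in (0:ℝ)..1, deriv (circleMap 0 ρ) (2 * Real.pi * t) •
        H (circleMap 0 ρ (2 * Real.pi * t)) := by
    rw [h, smul_smul, mul_inv_cancel₀ (by positivity), one_smul]
  rw [h2, ← intervalIntegral.integral_smul]
  congr 1
  ext t
  rw [deriv_circleMap, cz, smul_eq_mul, Complex.real_smul]
  push_cast
  ring

theorem cauchy_in {φ g : ℂ → ℂ} {r ρ R : ℝ} (hr : 0 < r) (hrρ : r < ρ) (hρR : ρ < R)
    (hφ : DifferentiableOn ℂ φ (ball 0 R)) (hinj : InjOn φ (ball 0 R))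
    (hg : DifferentiableOn ℂ g (ball 0 R)) {z : ℂ} (hz : ‖z‖ ≤ r) :
    (∮ ζ in C(0, ρ), g ζ * deriv φ ζ / (φ ζ - φ z)) = 2 * Real.pi * Complex.I * g z := by
  have hρ : 0 < ρ := hr.trans hrρ
  have hzR : z ∈ ball (0 : ℂ) R := mem_ball_zero_iff.2 (by linarith)
  have hDd : DifferentiableOn ℂ (dslope φ z) (ball 0 R) :=
    (Complex.differentiableOn_dslope (isOpen_ball.mem_nhds hzR)).2 hφ
  have hDne : ∀ ζ ∈ ball (0 : ℂ) R, dslope φ z ζ ≠ 0 := by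
    intro ζ hζ
    by_cases h : ζ = z
    · rw [h, dslope_same]
      exact deriv_ne_zero_of_injOn' isOpen_ball hφ hinj hzR
    · rw [dslope_of_ne _ h, slope_def_field]
      exact div_ne_zero (fun h1 => h (hinj hζ hzR (sub_eq_zero.1 h1))) (sub_ne_zero.2 h)
  have hφ' : DifferentiableOn ℂ (deriv φ) (ball 0 R) := hφ.deriv isOpen_ball
  have hh : DifferentiableOn ℂ (fun ζ => g ζ * deriv φ ζ / dslope φ z ζ) (ball 0 R) :=
    (hg.mul hφ').div hDd hDne
  have hc := (hh.mono (closedBall_subset_ball hρR)).diffContOnCl_ball (c := 0) (R := ρ) subset_rfl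
  have hmain := hc.circleIntegral_sub_inv_smul (w := z) (mem_ball_zero_iff.2 (by linarith))
  have e : (∮ ζ in C(0, ρ), g ζ * deriv φ ζ / (φ ζ - φ z)) =
      ∮ ζ in C(0, ρ), (ζ - z)⁻¹ • (g ζ * deriv φ ζ / dslope φ z ζ) := by
    refine circleIntegral.integral_congr hρ.le (fun ζ hζ => ?_)
    have hn : ‖ζ‖ = ρ := mem_sphere_zero_iff_norm.1 hζ
    have hne : ζ ≠ z := fun h => by rw [h] at hn; linarith
    have h1 : ζ - z ≠ 0 := sub_ne_zero.2 hne
    have h2 : φ ζ - φ z ≠ 0 := fun h => hne (hinj (mem_ball_zero_iff.2 (by linarith)) hzR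
      (sub_eq_zero.1 h))
    rw [dslope_of_ne _ hne, slope_def_field, smul_eq_mul]
    field_simp
  rw [e, hmain]
  have : dslope φ z z = deriv φ z := dslope_same _ _
  rw [this, smul_eq_mul, mul_div_cancel_right₀]
  exact deriv_ne_zero_of_injOn' isOpen_ball hφ hinj hzR

theorem cauchy_out {φ g : ℂ → ℂ} {ρ R : ℝ} (hρ : 0 < ρ) (hρR : ρ < R)
    (hφ : DifferentiableOn ℂ φ (ball 0 R))
    (hg : DifferentiableOn ℂ g (ball 0 R)) {w : ℂ} (hw : ∀ z ∈ ball (0 : ℂ) R, φ z ≠ w) :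
    (∮ ζ in C(0, ρ), g ζ * deriv φ ζ / (φ ζ - w)) = 0 := by
  have hφ' : DifferentiableOn ℂ (deriv φ) (ball 0 R) := hφ.deriv isOpen_ball
  have hh : DifferentiableOn ℂ (fun ζ => g ζ * deriv φ ζ / (φ ζ - w)) (ball 0 R) :=
    (hg.mul hφ').div (hφ.sub_const _) (fun z hz => sub_ne_zero.2 (hw z hz))
  refine Complex.circleIntegral_eq_zero_of_differentiable_on_off_countable hρ.le countable_empty
    (hh.continuousOn.mono (closedBall_subset_ball hρR)) (fun z hz => ?_)
  exact hh.differentiableAt (isOpen_ball.mem_nhds (ball_subset_ball hρR.le hz.1))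

theorem key_approx {Ω : Set ℂ} {m : ℕ} {φ g : ℂ → ℂ} {r R : ℝ} (hr : 0 < r) (hrR : r < R)
    (hφ : DifferentiableOn ℂ φ (ball 0 R)) (hinj : InjOn φ (ball 0 R))
    (hmaps : MapsTo φ (ball 0 R) Ω) (hdisj : ∀ z ∈ ball (0 : ℂ) R, φ z ∉ Lset Ω m)
    (hg : DifferentiableOn ℂ g (ball 0 R)) {ε : ℝ} (hε : 0 < ε) :
    ∃ f : ℂ → ℂ, DifferentiableOn ℂ f Ω ∧ (∀ w ∈ Lset Ω m, ‖f w‖ ≤ ε) ∧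
      ∀ z ∈ closedBall (0 : ℂ) r, ‖f (φ z) - g z‖ ≤ ε := by
  have hpoles := poles_ok hr hrR hφ hinj hmaps hdisj
  set X := Lset Ω m ∪ φ '' closedBall 0 r with hXdef
  have hcb : closedBall (0 : ℂ) r ⊆ ball 0 R := closedBall_subset_ball hrR
  have hX : IsCompact X := (Lset_compact Ω m).union
    ((isCompact_closedBall _ _).image_of_continuousOn (hφ.continuousOn.mono hcb))
  have hXΩ : X ⊆ Ω := by
    refine union_subset (Lset_sub Ω m) ?_
    rintro _ ⟨z, hz, rfl⟩
    exact hmaps (hcb hz)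
  set ρ := (r + R) / 2 with hρdef
  have hrρ : r < ρ := by rw [hρdef]; linarith
  have hρR : ρ < R := by rw [hρdef]; linarith
  have hρ : 0 < ρ := hr.trans hrρ
  have hczR : ∀ t, cz ρ t ∈ ball (0 : ℂ) R := fun t => by
    rw [mem_ball_zero_iff, cz_norm hρ]; exact hρR
  have hczS : ∀ t, φ (cz ρ t) ∈ PS Ω X := fun t =>
    hpoles _ (by rw [cz_norm hρ]; exact hrρ) (by rw [cz_norm hρ]; exact hρR)
  have hφ' : DifferentiableOn ℂ (deriv φ) (ball 0 R) := hφ.deriv isOpen_ball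
  set F : ℝ → ℂ → ℂ := fun t w => cz ρ t * (g (cz ρ t) * deriv φ (cz ρ t) / (φ (cz ρ t) - w)) with hF
  have hFc : ContinuousOn (fun p : ℝ × ℂ => F p.1 p.2) (Icc 0 1 ×ˢ X) := by
    have hcz1 : Continuous (fun p : ℝ × ℂ => cz ρ p.1) := (cz_cont ρ).comp continuous_fst
    have hcomp : ∀ u : ℂ → ℂ, DifferentiableOn ℂ u (ball 0 R) →
        Continuous (fun p : ℝ × ℂ => u (cz ρ p.1)) := fun u hu =>
      hu.continuousOn.comp_continuous hcz1 (fun p => hczR p.1)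
    refine hcz1.continuousOn.mul (ContinuousOn.div ((hcomp g hg).mul (hcomp _ hφ')).continuousOn
      ((hcomp φ hφ).sub continuous_snd).continuousOn ?_)
    rintro ⟨t, w⟩ ⟨_, hw⟩ h
    have h0 := sub_eq_zero.1 h
    apply (hczS t).1
    simp only at h0
    rw [h0]
    exact hw
  have hint : ∀ w, (∫ t in (0:ℝ)..1, F t w) =
      (2 * Real.pi * Complex.I)⁻¹ * ∮ ζ in C(0, ρ), g ζ * deriv φ ζ / (φ ζ - w) := by
    intro w
    rw [circle_as_unit, intervalIntegral.integral_const_mul, ← mul_assoc,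
      inv_mul_cancel₀ Complex.two_pi_I_ne_zero, one_mul]
  have happ : Appr Ω X (fun w => ∫ t in (0:ℝ)..1, F t w) := by
    refine Appr.limit (fun η hη => ?_)
    obtain ⟨N, hN⟩ := riemann_sum_approx hX F hFc hη
    refine ⟨_, Appr.sum (fun k w => (1 / (N:ℂ)) * F ((k:ℝ)/N) w) N (fun k => ?_), fun x hx => ?_⟩
    · refine ((Appr.const (-(1 / (N:ℂ)) * (cz ρ ((k:ℝ)/N) * (g (cz ρ ((k:ℝ)/N)) *
        deriv φ (cz ρ ((k:ℝ)/N)))))).mul hX hXΩ (hczS ((k:ℝ)/N)).2).congr (fun w hw => ?_)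
      simp only [hF]
      have h1 : φ (cz ρ ((k:ℝ)/N)) - w = -(w - φ (cz ρ ((k:ℝ)/N))) := by ring
      rw [h1, div_neg]
      ring
    · rw [norm_sub_rev]
      exact hN N le_rfl x hx
  obtain ⟨f, hf, hfx⟩ := happ ε hε
  refine ⟨f, hf, fun w hw => ?_, fun z hz => ?_⟩
  · have h1 := hfx w (Or.inl hw)
    beta_reduce at h1
    rw [hint, cauchy_out hρ hρR hφ hg (fun z hz h => hdisj z hz (by rw [h]; exact hw)),
      mul_zero, sub_zero] at h1
    exact h1
  · have h1 := hfx (φ z) (Or.inr ⟨z, hz, rfl⟩)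
    beta_reduce at h1
    rw [hint, cauchy_in hr hrρ hρR hφ hinj hg (mem_closedBall_zero_iff.1 hz), ← mul_assoc,
      inv_mul_cancel₀ Complex.two_pi_I_ne_zero, one_mul] at h1
    exact h1


def DiscLike (G : Set ℂ) : Prop :=
  ∀ K : Set ℂ, K ⊆ G → IsCompact K → ∃ r : ℝ, 0 < r ∧ K ⊆ ball 0 r ∧ closedBall 0 r ⊆ G

def EscapeCond (G Ω : Set ℂ) (φ : ℕ → ℂ → ℂ) : Prop :=
  ∀ K : Set ℂ, K ⊆ G → IsCompact K →
        ∀ L : Set ℂ, L ⊆ Ω → IsCompact L →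
          ∃ n : ℕ, (φ n '' K) ∩ L = ∅ ∧
            ∃ U : Set ℂ, IsOpen U ∧ K ⊆ U ∧ U ⊆ G ∧ Set.InjOn (φ n) U

theorem DiscLike.larger {G : Set ℂ} (hD : DiscLike G) {r : ℝ} (hr : 0 < r)
    (hrG : closedBall 0 r ⊆ G) : ∃ R, r < R ∧ closedBall 0 R ⊆ G := by
  obtain ⟨R, hR, h1, h2⟩ := hD _ hrG (isCompact_closedBall _ _)
  refine ⟨R, ?_, h2⟩
  have : (r : ℂ) ∈ closedBall (0 : ℂ) r := by
    rw [mem_closedBall_zero_iff, Complex.norm_real, Real.norm_of_nonneg hr.le]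
  have h3 := mem_ball_zero_iff.1 (h1 this)
  rwa [Complex.norm_real, Real.norm_of_nonneg hr.le] at h3

theorem univ_step {G Ω : Set ℂ} (hD : DiscLike G)
    (φ : ℕ → ℂ → ℂ) (hφd : ∀ n, DifferentiableOn ℂ (φ n) G)
    (hφm : ∀ n, Set.MapsTo (φ n) G Ω) (hE : EscapeCond G Ω φ)
    {h g : ℂ → ℂ} (hh : DifferentiableOn ℂ h Ω) (m : ℕ) (hg : DifferentiableOn ℂ g G)
    {r : ℝ} (hr : 0 < r) (hrG : closedBall 0 r ⊆ G) {ε : ℝ} (hε : 0 < ε) :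
    ∃ (n : ℕ) (h' : ℂ → ℂ), DifferentiableOn ℂ h' Ω ∧ (∀ w ∈ Lset Ω m, ‖h' w - h w‖ ≤ ε) ∧
      ∀ z ∈ closedBall (0 : ℂ) r, ‖h' (φ n z) - g z‖ ≤ ε := by
  obtain ⟨R, hrR, hRG⟩ := hD.larger hr hrG
  obtain ⟨n, hdis, U, -, hKU, -, hinj⟩ := hE _ hRG (isCompact_closedBall _ _) _ (Lset_sub Ω m)
    (Lset_compact Ω m)
  have hbG : ball (0 : ℂ) R ⊆ G := ball_subset_closedBall.trans hRG
  obtain ⟨f, hf, h1, h2⟩ := key_approx (Ω := Ω) (m := m) (φ := φ n) (g := fun z => g z - h (φ n z))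
    hr hrR ((hφd n).mono hbG) (hinj.mono (ball_subset_closedBall.trans hKU))
    ((hφm n).mono_left hbG) (fun z hz hL => by
      have : φ n z ∈ (φ n '' closedBall 0 R) ∩ Lset Ω m :=
        ⟨⟨z, ball_subset_closedBall hz, rfl⟩, hL⟩
      rw [hdis] at this
      exact this)
    ((hg.mono hbG).sub (hh.comp ((hφd n).mono hbG) ((hφm n).mono_left hbG))) hε
  refine ⟨n, fun w => h w + f w, hh.add hf, fun w hw => ?_, fun z hz => ?_⟩
  · simpa using h1 w hw
  · have := h2 z hz
    have e : h (φ n z) + f (φ n z) - g z = f (φ n z) - (g z - h (φ n z)) := by ring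
    rw [e]
    exact this

theorem dense_seq {G K : Set ℂ} (hK : IsCompact K) (hKG : K ⊆ G) :
    ∃ d : ℕ → ℂ → ℂ, (∀ i, DifferentiableOn ℂ (d i) G) ∧
      ∀ h, DifferentiableOn ℂ h G → ∀ ε : ℝ, 0 < ε → ∃ i, ∀ z ∈ K, ‖d i z - h z‖ ≤ ε := by
  haveI : CompactSpace K := isCompact_iff_compactSpace.1 hK
  let P : C(K, ℂ) → Prop := fun F => ∃ g : ℂ → ℂ, DifferentiableOn ℂ g G ∧ ∀ z : K, F z = g z
  let Y := {F : C(K, ℂ) // P F}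
  let mk : ∀ g : ℂ → ℂ, DifferentiableOn ℂ g G → Y := fun g hg =>
    ⟨⟨K.restrict g, (hg.continuousOn.mono hKG).restrict⟩, g, hg, fun z => rfl⟩
  haveI : Nonempty Y := ⟨mk (fun _ => 0) (differentiableOn_const _)⟩
  have hch : ∀ i : ℕ, P (TopologicalSpace.denseSeq Y i).1 := fun i =>
    (TopologicalSpace.denseSeq Y i).2
  choose d hd hdx using hch
  refine ⟨d, hd, fun h hh ε hε => ?_⟩
  obtain ⟨i, hi⟩ := (TopologicalSpace.denseRange_denseSeq Y).exists_dist_lt (mk h hh) hε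
  refine ⟨i, fun z hz => ?_⟩
  have h1 := ContinuousMap.dist_apply_le_dist (f := (mk h hh).1)
    (g := (TopologicalSpace.denseSeq Y i).1) ⟨z, hz⟩
  rw [hdx i ⟨z, hz⟩, dist_comm, dist_eq_norm] at h1
  exact h1.trans hi.le

theorem exists_tasks {G : Set ℂ} (hD : DiscLike G) :
    ∃ (g : ℕ → ℂ → ℂ) (r : ℕ → ℝ), (∀ j, DifferentiableOn ℂ (g j) G ∧ 0 < r j ∧
      closedBall 0 (r j) ⊆ G) ∧ ∀ h, DifferentiableOn ℂ h G → ∀ K : Set ℂ, K ⊆ G → IsCompact K →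
        ∀ ε : ℝ, 0 < ε → ∀ N : ℕ, ∃ j, N ≤ j ∧ K ⊆ closedBall 0 (r j) ∧
          ∀ z ∈ closedBall (0 : ℂ) (r j), ‖g j z - h z‖ ≤ ε := by
  let Q := {q : ℚ // 0 < (q : ℝ) ∧ closedBall (0 : ℂ) (q : ℝ) ⊆ G}
  have hQ : ∀ K : Set ℂ, K ⊆ G → IsCompact K → ∃ q : Q, K ⊆ closedBall 0 (q.1 : ℝ) := by
    intro K hKG hK
    obtain ⟨r, hr, hKr, hrG⟩ := hD K hKG hK
    obtain ⟨R, hrR, hRG⟩ := hD.larger hr hrG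
    obtain ⟨q, hq1, hq2⟩ := exists_rat_btwn hrR
    exact ⟨⟨q, hr.trans hq1, (closedBall_subset_closedBall hq2.le).trans hRG⟩,
      hKr.trans ((ball_subset_ball hq1.le).trans ball_subset_closedBall)⟩
  have hd : ∀ q : Q, _ := fun q => dense_seq (G := G) (isCompact_closedBall (0 : ℂ) (q.1 : ℝ)) q.2.2
  choose d hd1 hd2 using hd
  obtain ⟨q0, -⟩ := hQ ∅ (empty_subset _) isCompact_empty
  haveI : Nonempty (Q × ℕ) := ⟨(q0, 0)⟩
  obtain ⟨e, he⟩ := exists_surjective_nat (Q × ℕ)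
  refine ⟨fun j => d (e j.unpair.1).1 (e j.unpair.1).2, fun j => ((e j.unpair.1).1.1 : ℝ),
    fun j => ⟨hd1 _ _, (e j.unpair.1).1.2.1, (e j.unpair.1).1.2.2⟩, ?_⟩
  intro h hh K hKG hK ε hε N
  obtain ⟨q, hq⟩ := hQ K hKG hK
  obtain ⟨i, hi⟩ := hd2 q h hh ε hε
  obtain ⟨k, hk⟩ := he (q, i)
  refine ⟨Nat.pair k N, Nat.right_le_pair _ _, ?_⟩
  simp only [Nat.unpair_pair, hk]
  exact ⟨hq, hi⟩

theorem disc_universal {G Ω : Set ℂ} (hΩ : IsOpen Ω) (hD : DiscLike G)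
    (φ : ℕ → ℂ → ℂ) (hφd : ∀ n, DifferentiableOn ℂ (φ n) G)
    (hφm : ∀ n, Set.MapsTo (φ n) G Ω) (hE : EscapeCond G Ω φ) :
    ∃ f : ℂ → ℂ, DifferentiableOn ℂ f Ω ∧ UniversalFor G φ f := by
  obtain ⟨g, r, hgr, htask⟩ := exists_tasks hD
  let St := {h : ℂ → ℂ // DifferentiableOn ℂ h Ω} × ℕ
  have hstep : ∀ (k : ℕ) (s : St), ∃ (s' : St) (n : ℕ),
      (∀ w ∈ Lset Ω s.2, ‖s'.1.1 w - s.1.1 w‖ ≤ (1 / 2 : ℝ) ^ k) ∧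
      (∀ z ∈ closedBall (0 : ℂ) (r k), ‖s'.1.1 (φ n z) - g k z‖ ≤ (1 / 2 : ℝ) ^ k) ∧
      s.2 + 1 ≤ s'.2 ∧ ∀ z ∈ closedBall (0 : ℂ) (r k), φ n z ∈ Lset Ω s'.2 := by
    intro k s
    obtain ⟨n, h', hh', h1, h2⟩ := univ_step hD φ hφd hφm hE s.1.2 s.2 (hgr k).1 (hgr k).2.1
      (hgr k).2.2 (show (0 : ℝ) < (1 / 2) ^ k by positivity)
    have hc : IsCompact (φ n '' closedBall 0 (r k)) :=
      (isCompact_closedBall _ _).image_of_continuousOn ((hφd n).continuousOn.mono (hgr k).2.2)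
    obtain ⟨m', hm'⟩ := Lset_exhaust hΩ hc (by
      rintro _ ⟨z, hz, rfl⟩
      exact hφm n ((hgr k).2.2 hz))
    refine ⟨(⟨h', hh'⟩, max m' (s.2 + 1)), n, h1, h2, le_max_right _ _, fun z hz => ?_⟩
    exact Lset_mono Ω (le_max_left _ _) (hm' ⟨z, hz, rfl⟩)
  choose S ν hS1 hS2 hS3 hS4 using hstep
  let s : ℕ → St := fun k => Nat.rec (⟨fun _ => 0, differentiableOn_const _⟩, 0)
    (fun k s => S k s) k
  have hs : ∀ k, s (k + 1) = S k (s k) := fun k => rfl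
  set h : ℕ → ℂ → ℂ := fun k => (s k).1.1 with hh
  set m : ℕ → ℕ := fun k => (s k).2 with hm
  have hhd : ∀ k, DifferentiableOn ℂ (h k) Ω := fun k => (s k).1.2
  have hmono : ∀ k, m k + 1 ≤ m (k + 1) := fun k => hS3 k (s k)
  have hmmono : Monotone m := monotone_nat_of_le_succ (fun k => by have := hmono k; omega)
  have hmk : ∀ k, k ≤ m k := by
    intro k
    induction k with
    | zero => exact Nat.zero_le _
    | succ k ih => have := hmono k; omega
  have hdist : ∀ k, ∀ w ∈ Lset Ω (m k), ∀ j,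
      dist (h (k + j) w) (h (k + (j + 1)) w) ≤ (1 / 2 : ℝ) ^ k * (1 / 2) ^ j := by
    intro k w hw j
    rw [← pow_add, dist_comm, dist_eq_norm]
    exact hS1 (k + j) (s (k + j)) w (Lset_mono Ω (hmmono (Nat.le_add_right k j)) hw)
  have hlimex : ∀ w, ∃ y, w ∈ Ω → Tendsto (fun k => h k w) atTop (nhds y) := by
    intro w
    by_cases hw : w ∈ Ω
    · obtain ⟨k, hk⟩ := Lset_exhaust hΩ (isCompact_singleton (x := w)) (singleton_subset_iff.2 hw)
      have hwk : w ∈ Lset Ω (m k) := Lset_mono Ω (hmk k) (hk rfl)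
      have hc : CauchySeq (fun j => h (k + j) w) :=
        cauchySeq_of_le_geometric (1 / 2 : ℝ) ((1 / 2 : ℝ) ^ k) (by norm_num) (hdist k w hwk)
      obtain ⟨y, hy⟩ := cauchySeq_tendsto_of_complete hc
      refine ⟨y, fun _ => ?_⟩
      have : (fun j => h (k + j) w) = fun j => (fun i => h i w) (j + k) := by
        funext j; rw [add_comm]
      rw [this] at hy
      exact (tendsto_add_atTop_iff_nat k).1 hy
    · exact ⟨0, fun h => absurd h hw⟩
  choose f hf using hlimex
  have hclose : ∀ k, ∀ w ∈ Lset Ω (m k), dist (h k w) (f w) ≤ 2 * (1 / 2 : ℝ) ^ k := by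
    intro k w hw
    have ht : Tendsto (fun j => h (k + j) w) atTop (nhds (f w)) := by
      have := (tendsto_add_atTop_iff_nat k).2 (hf w (Lset_sub Ω _ hw))
      refine this.congr (fun j => ?_)
      rw [add_comm]
    have := dist_le_of_le_geometric_of_tendsto₀ (1 / 2 : ℝ) ((1 / 2 : ℝ) ^ k) (by norm_num)
      (hdist k w hw) ht
    have e : (1 / 2 : ℝ) ^ k / (1 - 1 / 2) = 2 * (1 / 2 : ℝ) ^ k := by ring
    rw [e] at this
    simpa using this
  have hsmall : ∀ ε : ℝ, 0 < ε → ∃ N : ℕ, ∀ k, N ≤ k → (1 / 2 : ℝ) ^ k < ε := by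
    intro ε hε
    obtain ⟨N, hN⟩ := exists_pow_lt_of_lt_one hε (show (1 / 2 : ℝ) < 1 by norm_num)
    exact ⟨N, fun k hk => lt_of_le_of_lt
      (pow_le_pow_of_le_one (by norm_num) (by norm_num) hk) hN⟩
  have hunif : TendstoLocallyUniformlyOn h f atTop Ω := by
    rw [tendstoLocallyUniformlyOn_iff_forall_isCompact hΩ]
    intro K hKΩ hK
    obtain ⟨k0, hk0⟩ := Lset_exhaust hΩ hK hKΩ
    rw [Metric.tendstoUniformlyOn_iff]
    intro ε hε
    obtain ⟨N, hN⟩ := hsmall (ε / 2) (by positivity)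
    filter_upwards [eventually_ge_atTop N, eventually_ge_atTop k0] with k hk1 hk2 w hw
    have h1 := hclose k w (Lset_mono Ω (hk2.trans (hmk k)) (hk0 hw))
    have h2 := hN k hk1
    rw [dist_comm]
    linarith
  refine ⟨f, hunif.differentiableOn (Eventually.of_forall hhd) hΩ, ?_⟩
  intro g' hg' K hKG hK ε hε
  obtain ⟨N, hN⟩ := hsmall (ε / 4) (by positivity)
  obtain ⟨j, hj, hKj, hgj⟩ := htask g' hg' K hKG hK (ε / 4) (by positivity) N
  refine ⟨ν j (s j), fun z hz => ?_⟩
  have h1 := hgj z (hKj hz)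
  have h2 := hS2 j (s j) z (hKj hz)
  have h3 := hclose (j + 1) _ (hS4 j (s j) z (hKj hz))
  have h4 := hN j hj
  rw [dist_comm, dist_eq_norm, pow_succ] at h3
  set n := ν j (s j)
  have h2' : ‖h (j + 1) (φ n z) - g j z‖ ≤ (1 / 2 : ℝ) ^ j := h2
  have e : f (φ n z) - g' z = (f (φ n z) - h (j + 1) (φ n z)) + (h (j + 1) (φ n z) - g j z)
      + (g j z - g' z) := by ring
  rw [e]
  refine (norm_add_le _ _).trans_lt ?_
  have := norm_add_le (f (φ n z) - h (j + 1) (φ n z)) (h (j + 1) (φ n z) - g j z)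
  linarith

theorem discLike_univ : DiscLike univ := by
  intro K _ hK
  obtain ⟨C, hC⟩ := hK.exists_bound_of_continuousOn (continuousOn_id)
  refine ⟨max C 0 + 1, by positivity, fun z hz => ?_, subset_univ _⟩
  rw [mem_ball_zero_iff]
  have := hC z hz
  simp only [id] at this
  linarith [le_max_left C 0]

theorem discLike_ball : DiscLike (ball 0 1) := by
  intro K hKs hK
  by_cases hne : K.Nonempty
  · obtain ⟨x, hx, hmax⟩ := hK.exists_isMaxOn hne continuous_norm.continuousOn
    have hx1 := mem_ball_zero_iff.1 (hKs hx)
    refine ⟨(‖x‖ + 1) / 2, by positivity, fun z hz => ?_, closedBall_subset_ball (by linarith)⟩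
    have h2 : ‖z‖ ≤ ‖x‖ := hmax hz
    rw [mem_ball_zero_iff]
    linarith
  · rw [not_nonempty_iff_eq_empty] at hne
    exact ⟨1 / 2, by norm_num, by rw [hne]; exact empty_subset _,
      closedBall_subset_ball (by norm_num)⟩

theorem backward_dir {G Ω : Set ℂ} (hG : IsOpen G) (hGconn : IsConnected G) (hGsc : HasNoHole G)
    (hΩ : IsOpen Ω) (φ : ℕ → ℂ → ℂ) (hφd : ∀ n, DifferentiableOn ℂ (φ n) G)
    (hφm : ∀ n, Set.MapsTo (φ n) G Ω) (hE : EscapeCond G Ω φ) :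
    ∃ f : ℂ → ℂ, DifferentiableOn ℂ f Ω ∧ UniversalFor G φ f := by
  by_cases hne : G = univ
  · subst hne
    exact disc_universal hΩ discLike_univ φ hφd hφm hE
  · obtain ⟨F, ψ, hF, hFm, hψ, hψm, h1, h2⟩ := riemann_mapping hG hGconn hGsc hne
    have hψinj : InjOn ψ (ball 0 1) := fun x hx y hy h => by
      rw [← h2 x hx, ← h2 y hy, h]
    obtain ⟨f, hf, hu⟩ := disc_universal hΩ discLike_ball (fun n z => φ n (ψ z))
      (fun n => (hφd n).comp hψ hψm) (fun n => (hφm n).comp hψm) (by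
        intro K hKs hK L hL hLc
        obtain ⟨n, hdis, U, hU, hKU, hUG, hinj⟩ := hE (ψ '' K)
          (by rintro _ ⟨z, hz, rfl⟩; exact hψm (hKs hz))
          (hK.image_of_continuousOn (hψ.continuousOn.mono hKs)) L hL hLc
        refine ⟨n, ?_, ball 0 1 ∩ ψ ⁻¹' U, hψ.continuousOn.isOpen_inter_preimage isOpen_ball hU,
          fun z hz => ⟨hKs hz, hKU ⟨z, hz, rfl⟩⟩, inter_subset_left, ?_⟩
        · rw [← hdis, image_image]
        · intro x hx y hy h
          exact hψinj hx.1 hy.1 (hinj hx.2 hy.2 h))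
    refine ⟨f, hf, ?_⟩
    intro g hg K hKG hK ε hε
    obtain ⟨n, hn⟩ := hu (fun z => g (ψ z)) (hg.comp hψ hψm) (F '' K)
      (by rintro _ ⟨z, hz, rfl⟩; exact hFm (hKG hz))
      (hK.image_of_continuousOn (hF.continuousOn.mono hKG)) ε hε
    refine ⟨n, fun z hz => ?_⟩
    have := hn (F z) ⟨z, hz, rfl⟩
    simp only [h1 z (hKG hz)] at this
    exact this

/-- Theorem `thm-simply-connected-gl-GM`: characterisation when `G` is
simply connected, for arbitrary (not necessarily eventually injective) sequences. -/
theorem universal_iff_of_simplyConnected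
    (G Ω : Set ℂ) (hG : IsOpen G) (hGconn : IsConnected G) (hGsc : HasNoHole G)
    (hΩ : IsOpen Ω) (hΩconn : IsConnected Ω)
    (φ : ℕ → ℂ → ℂ) (hφd : ∀ n, DifferentiableOn ℂ (φ n) G)
    (hφm : ∀ n, Set.MapsTo (φ n) G Ω) :
    (∃ f : ℂ → ℂ, DifferentiableOn ℂ f Ω ∧ UniversalFor G φ f) ↔
      ∀ K : Set ℂ, K ⊆ G → IsCompact K →
        ∀ L : Set ℂ, L ⊆ Ω → IsCompact L →
          ∃ n : ℕ, (φ n '' K) ∩ L = ∅ ∧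
            ∃ U : Set ℂ, IsOpen U ∧ K ⊆ U ∧ U ⊆ G ∧ Set.InjOn (φ n) U := by
  exact ⟨fun ⟨f, hf, hu⟩ => forward_dir G Ω hG φ hφd hφm f hf hu,
    fun hE => backward_dir hG hGconn hGsc hΩ φ hφd hφm hE⟩
end
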